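/- arXiv:1603.06712 — 3 statements merged into one kernel-verified Lean document; each statement's English description precedes it below -/
import Mathlib

section
/- There exists a connected transient graph G of bounded degree such that for every r ∈ ℕ, every transient subgraph of G has a K^r minor (K^r being the complete graph on r vertices). In particular, G has no transient subgraph that embeds in any surface of finite genus. -/
/-!
The graph is a binary tree in which each edge of level `k` is replaced by a copy of a finite
two-terminal gadget `Q k`, and in which each edge of a gadget is subdivided.

A gadget has `n + 1` hubs on each of two sides. A hub is a path through `D + 1` ports, the ports `0`
of each side are joined by a path to the terminal of that side, and long legs join the port `i` of
the hub `y` on one side to the port `i` of the hub `σ i y` on the other, where the `σ i` are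
involutions of the hubs. The involutions are chosen so that the bipartite graph of hubs and legs has
large girth: reduced words in the `σ i` of bounded length act without coincidences
(`exists_involutions`). With `N = (n + 1) (D + 1)` legs of length `q`, the flow through all legs has
energy about `q / N`, up to a constant independent of `q` (`gadget_hasFlow`).

Let `F` be a set of edges of the gadget. Around the port `0` of each hub, take the cell of all
vertices that can be reached in `F` through at most `t` legs and are closest to that port, ties being
broken by an order of the hubs. By the girth condition at most one leg of `F` joins two given cells.
If the graph of cells has many edges, it has a `K^r` minor by Mader's theorem that a large average
degree forces such a minor (`mader`), and the minor lifts to `F`. Otherwise at most about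
`2 ^ r (n + 1)` legs join different cells. A potential that falls from `1` to `0` in steps of `1 / t`
along the legs inside the cells of the entrance side, and vanishes elsewhere, shows that `F` has
conductance `O((2 ^ r (n + 1) + N / t ^ 2) / q)` between the terminals (`minor_or_potential`,
`gadget_sep`). For `D + 1 = 16 ^ j` and `t = 4 ^ j` this is smaller than the conductance of the
whole gadget by a factor `16 ^ j`, up to a constant depending on `r`.

Better and better gadgets are placed at a sparse sequence of levels `k j`, with resistance
`2 ^ (k j - j)` (`exists_gadget_sequence`). The uniform flow down the tree then has energy
`∑ 2 ^ (-j) < ∞`, so the graph is transient (`treeNet_transient`). If a subgraph has no `K^r` minor,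
no gadget in it has one, so the potentials above cut the `2 ^ (k j + 1)` gadgets of level `k j` at
total energy `O(2 ^ j / 16 ^ j) → 0`. By the Cauchy-Schwarz inequality no unit flow to infinity in
the subgraph has finite energy (`treeNet_minor`). Subdivision makes the graph
simple, and its degrees are bounded because the edges at a vertex are told apart by their
orientation and one of finitely many tags.
-/

/-!
STATEMENT 3: There exists a connected transient graph G of bounded degree such
that for every r ∈ ℕ, every transient subgraph of G has a K^r minor.
-/

namespace Paper

variable {V : Type*}

/-- A flow on a graph: antisymmetric and supported on edges. -/
def IsFlow (G : SimpleGraph V) (θ : V → V → ℝ) : Prop :=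
  (∀ u v, θ u v = -θ v u) ∧ ∀ u v, θ u v ≠ 0 → G.Adj u v

/-- The net outflow (divergence) of `θ` at a vertex. -/
noncomputable def divg (θ : V → V → ℝ) (v : V) : ℝ := ∑' w, θ v w

/-- Transience via Lyons' criterion: there is a unit flow from some vertex to
infinity of finite energy. -/
def Transient (G : SimpleGraph V) : Prop :=
  ∃ (o : V) (θ : V → V → ℝ), IsFlow G θ ∧ divg θ o = 1 ∧
    (∀ v, v ≠ o → divg θ v = 0) ∧
    Summable (fun p : V × V => θ p.1 p.2 ^ 2)

/-- All vertex degrees are bounded by some fixed `D`. -/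
def BoundedDegree (G : SimpleGraph V) : Prop :=
  ∃ D : ℕ, ∀ v, (G.neighborSet v).Finite ∧ (G.neighborSet v).ncard ≤ D

/-- `H` has a `K^r` minor: there are `r` pairwise disjoint nonempty connected
branch sets, any two of which are joined by an edge of `H`. -/
def HasCompleteMinor (H : SimpleGraph V) (r : ℕ) : Prop :=
  ∃ B : Fin r → Set V,
    (∀ i, (B i).Nonempty) ∧
    (∀ i j, i ≠ j → Disjoint (B i) (B j)) ∧
    (∀ i, (H.induce (B i)).Connected) ∧
    (∀ i j, i ≠ j → ∃ u ∈ B i, ∃ v ∈ B j, H.Adj u v)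

variable {V : Type*}

/-! ### Complete minors -/

/-- Replacing the vertices of `N` by disjoint connected sets `C x` of `H`, with an edge of `H` between
`C x` and `C y` whenever `x` and `y` are adjacent, turns a complete minor of `N` into one of `H`.
Since every vertex of a branch set has a neighbour once there are two branch sets, nothing is
asked of `C x` when `x` is isolated. -/
theorem HasCompleteMinor.lift {X Y : Type*} {N : SimpleGraph X} {H : SimpleGraph Y} (C : X → Set Y)
    (hconn : ∀ x, (∃ y, N.Adj x y) → (H.induce (C x)).Connected)
    (hdisj : ∀ x y, x ≠ y → Disjoint (C x) (C y))
    (hadj : ∀ x y, N.Adj x y → ∃ u ∈ C x, ∃ v ∈ C y, H.Adj u v)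
    {r : ℕ} (hr : 2 ≤ r) (h : HasCompleteMinor N r) : HasCompleteMinor H r := by
  obtain ⟨B, hne, hB, hBc, hBa⟩ := h
  have hnb : ∀ i, ∀ x ∈ B i, ∃ y, N.Adj x y := by
    intro i x hx
    obtain ⟨j, hj⟩ : ∃ j : Fin r, i ≠ j := by
      have : Nontrivial (Fin r) := Fin.nontrivial_iff_two_le.2 hr
      obtain ⟨j, hj⟩ := exists_ne i
      exact ⟨j, hj.symm⟩
    obtain ⟨u, hu, v, hv, huv⟩ := hBa i j hj
    by_cases hxu : x = u
    · exact ⟨v, hxu ▸ huv⟩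
    · have hr := (hBc i).preconnected ⟨x, hx⟩ ⟨u, hu⟩
      obtain ⟨p⟩ := hr
      cases p with
      | nil => exact absurd rfl hxu
      | cons h' _ => exact ⟨_, h'⟩
  refine ⟨fun i => ⋃ x ∈ B i, C x, ?_, ?_, ?_, ?_⟩
  · intro i
    obtain ⟨x, hx⟩ := hne i
    obtain ⟨⟨y, hy⟩⟩ := (hconn x (hnb i x hx)).nonempty
    exact ⟨y, Set.mem_biUnion hx hy⟩
  · intro i j hij
    simp only [Set.disjoint_iUnion_left, Set.disjoint_iUnion_right]
    intro x hx y hy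
    refine hdisj _ _ ?_
    rintro rfl
    exact Set.disjoint_left.1 (hB i j hij) hy hx
  · intro i
    have key : ∀ x (hx : x ∈ B i) y (hy : y ∈ B i) (a : Y) (ha : a ∈ C x) (b : Y) (hb : b ∈ C y),
        (H.induce (⋃ x ∈ B i, C x)).Reachable ⟨a, Set.mem_biUnion hx ha⟩
          ⟨b, Set.mem_biUnion hy hb⟩ := by
      have same : ∀ x (hx : x ∈ B i) (a : Y) (ha : a ∈ C x) (b : Y) (hb : b ∈ C x),
          (H.induce (⋃ x ∈ B i, C x)).Reachable ⟨a, Set.mem_biUnion hx ha⟩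
          ⟨b, Set.mem_biUnion hx hb⟩ := by
        intro x hx a ha b hb
        have h1 := (hconn x (hnb i x hx)).preconnected ⟨a, ha⟩ ⟨b, hb⟩
        exact h1.map (SimpleGraph.induceHomOfLE H (Set.subset_biUnion_of_mem hx)).toHom
      intro x hx y hy a ha b hb
      obtain ⟨p⟩ := (hBc i).preconnected ⟨x, hx⟩ ⟨y, hy⟩
      suffices ∀ (x' y' : B i) (p : (N.induce (B i)).Walk x' y') (a : Y) (ha : a ∈ C x') (b : Y)
          (hb : b ∈ C y'), (H.induce (⋃ x ∈ B i, C x)).Reachable ⟨a, Set.mem_biUnion x'.2 ha⟩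
          ⟨b, Set.mem_biUnion y'.2 hb⟩ from this ⟨x, hx⟩ ⟨y, hy⟩ p a ha b hb
      intro x' y' p
      induction p with
      | nil => intro a ha b hb; exact same _ (Subtype.property _) a ha b hb
      | @cons x' z y' h q ih =>
        intro a ha b hb
        obtain ⟨u, hu, v, hv, huv⟩ := hadj _ _ h
        refine (same _ x'.2 a ha u hu).trans (SimpleGraph.Reachable.trans ?_ (ih v hv b hb))
        exact SimpleGraph.Adj.reachable huv
    obtain ⟨x, hx⟩ := hne i
    obtain ⟨⟨y, hy⟩⟩ := (hconn x (hnb i x hx)).nonempty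
    have : Nonempty ↑(⋃ x ∈ B i, C x) := ⟨⟨y, Set.mem_biUnion hx hy⟩⟩
    refine ⟨?_⟩
    rintro ⟨a, ha⟩ ⟨b, hb⟩
    obtain ⟨x, hx, ha'⟩ := Set.mem_iUnion₂.1 ha
    obtain ⟨y, hy, hb'⟩ := Set.mem_iUnion₂.1 hb
    exact key x hx y hy a ha' b hb'
  · intro i j hij
    obtain ⟨x, hx, y, hy, hxy⟩ := hBa i j hij
    obtain ⟨u, hu, v, hv, huv⟩ := hadj x y hxy
    exact ⟨u, Set.mem_biUnion hx hu, v, Set.mem_biUnion hy hv, huv⟩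

theorem HasCompleteMinor.mono {H : SimpleGraph V} {r s : ℕ} (hrs : r ≤ s)
    (h : HasCompleteMinor H s) : HasCompleteMinor H r := by
  obtain ⟨B, h1, h2, h3, h4⟩ := h
  have hinj : ∀ i j : Fin r, i ≠ j → Fin.castLE hrs i ≠ Fin.castLE hrs j := fun i j hij h =>
    hij (Fin.castLE_injective hrs h)
  exact ⟨fun i => B (Fin.castLE hrs i), fun i => h1 _, fun i j hij => h2 _ _ (hinj i j hij),
    fun i => h3 _, fun i j hij => h4 _ _ (hinj i j hij)⟩

theorem connected_induce_singleton (H : SimpleGraph V) (x : V) :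
    (H.induce ({x} : Set V)).Connected := by
  have : Nonempty ({x} : Set V) := ⟨⟨x, rfl⟩⟩
  refine ⟨?_⟩
  rintro ⟨a, rfl⟩ ⟨b, hb⟩
  obtain rfl : b = a := hb
  exact SimpleGraph.Reachable.refl _

theorem hasCompleteMinor_zero (H : SimpleGraph V) : HasCompleteMinor H 0 :=
  ⟨fun _ => ∅, fun i => i.elim0, fun i => i.elim0, fun i => i.elim0, fun i => i.elim0⟩

theorem hasCompleteMinor_one (H : SimpleGraph V) (x : V) : HasCompleteMinor H 1 :=
  ⟨fun _ => {x}, fun _ => ⟨x, rfl⟩, fun i j h => absurd (Subsingleton.elim i j) h,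
    fun _ => connected_induce_singleton H x, fun i j h => absurd (Subsingleton.elim i j) h⟩

/-- A complete minor inside the neighbourhood of `x`, together with `x` itself. -/
theorem HasCompleteMinor.cone {N : SimpleGraph V} (x : V) {r : ℕ}
    (h : HasCompleteMinor (N.induce (N.neighborSet x)) r) : HasCompleteMinor N (r + 1) := by
  obtain ⟨B, h1, h2, h3, h4⟩ := h
  have hx : ∀ i, x ∉ (Subtype.val '' B i : Set V) := by
    rintro i ⟨y, -, hy⟩
    have := y.2
    rw [hy] at this
    exact N.irrefl this
  refine ⟨Fin.cons {x} (fun i => Subtype.val '' B i), ?_, ?_, ?_, ?_⟩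
  · intro i
    refine Fin.cases ⟨x, rfl⟩ (fun i => ?_) i
    simpa using h1 i
  · intro i j
    refine Fin.cases (Fin.cases (fun h => absurd rfl h) (fun j _ => ?_) j)
      (fun i => Fin.cases (fun _ => ?_) (fun j hij => ?_) j) i
    · simp
    · simp
    · rw [Fin.cons_succ, Fin.cons_succ]
      refine Set.disjoint_image_of_injective Subtype.val_injective (h2 i j ?_)
      rintro rfl
      exact hij rfl
  · intro i
    refine Fin.cases (connected_induce_singleton N x) (fun i => ?_) i
    change (N.induce (Subtype.val '' B i : Set V)).Connected
    have := (h3 i).nonempty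
    have : Nonempty ↑(Subtype.val '' B i : Set V) :=
      this.elim fun y => ⟨⟨y.1.1, ⟨y.1, y.2, rfl⟩⟩⟩
    refine ⟨?_⟩
    rintro ⟨_, a, ha, rfl⟩ ⟨_, b, hb, rfl⟩
    have := (h3 i).preconnected ⟨a, ha⟩ ⟨b, hb⟩
    exact this.map (⟨fun y => ⟨y.1.1, ⟨y.1, y.2, rfl⟩⟩, fun h => h⟩ :
      (((N.induce (N.neighborSet x)).induce (B i)) →g (N.induce (Subtype.val '' B i : Set V))))
  · intro i j
    refine Fin.cases (Fin.cases (fun h => absurd rfl h) (fun j _ => ?_) j)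
      (fun i => Fin.cases (fun _ => ?_) (fun j hij => ?_) j) i
    · obtain ⟨y, hy⟩ := h1 j
      exact ⟨x, rfl, y.1, ⟨y, hy, rfl⟩, y.2⟩
    · obtain ⟨y, hy⟩ := h1 i
      exact ⟨y.1, ⟨y, hy, rfl⟩, x, rfl, SimpleGraph.Adj.symm y.2⟩
    · obtain ⟨u, hu, v, hv, huv⟩ := h4 i j (by rintro rfl; exact hij rfl)
      exact ⟨u.1, ⟨u, hu, rfl⟩, v.1, ⟨v, hv, rfl⟩, huv⟩

/-- The graph obtained from `N` by contracting `y` into `x`. -/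
def contract (N : SimpleGraph V) (x y : V) : SimpleGraph {v : V // v ≠ y} where
  Adj u v := u ≠ v ∧ (N.Adj u v ∨ (u.1 = x ∧ N.Adj y v) ∨ (v.1 = x ∧ N.Adj y u))
  symm := ⟨by
    rintro u v ⟨h, h'⟩
    refine ⟨h.symm, ?_⟩
    rcases h' with h' | h' | h'
    · exact Or.inl h'.symm
    · exact Or.inr (Or.inr h')
    · exact Or.inr (Or.inl h')⟩
  loopless := ⟨fun u h => h.1 rfl⟩

theorem HasCompleteMinor.of_contract {N : SimpleGraph V} {x y : V} (hxy : N.Adj x y) {r : ℕ}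
    (hr : 2 ≤ r) (h : HasCompleteMinor (contract N x y) r) : HasCompleteMinor N r := by
  classical
  refine h.lift (fun v => if v.1 = x then {x, y} else {v.1}) ?_ ?_ ?_ hr
  · intro v _
    by_cases hv : v.1 = x
    · rw [if_pos hv]; exact SimpleGraph.induce_pair_connected_of_adj hxy
    · rw [if_neg hv]; exact connected_induce_singleton N _
  · rintro ⟨u, hu⟩ ⟨v, hv⟩ huv
    have huv' : u ≠ v := fun h => huv (Subtype.ext h)
    dsimp only
    rw [Set.disjoint_left]
    split_ifs with h1 h2 <;> intro a ha hb <;> simp at ha hb <;> grind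
  · rintro ⟨u, hu⟩ ⟨v, hv⟩ ⟨-, h | ⟨h1, h2⟩ | ⟨h1, h2⟩⟩
    · refine ⟨u, ?_, v, ?_, h⟩ <;> dsimp only <;> split_ifs with h1 <;> simp [h1]
    · refine ⟨y, ?_, v, ?_, h2⟩ <;> dsimp only at * <;> split_ifs <;> simp_all
    · refine ⟨u, ?_, y, ?_, h2.symm⟩ <;> dsimp only at * <;> split_ifs <;> simp_all

open Classical in
/-- Twice the number of edges: the number of ordered pairs of adjacent vertices. -/
noncomputable def dartCount [Fintype V] (N : SimpleGraph V) : ℕ :=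
  (Finset.univ.filter fun p : V × V => N.Adj p.1 p.2).card

open Classical in
/-- Contracting an edge `xy` loses the edge itself and one edge for every common neighbour. -/
theorem dartCount_contract [Fintype V] (N : SimpleGraph V) {x y : V} (hxy : N.Adj x y) :
    dartCount N ≤ dartCount (contract N x y) + 2 +
      2 * (Finset.univ.filter fun z => N.Adj x z ∧ N.Adj y z).card := by
  have hne : x ≠ y := hxy.ne
  set S := Finset.univ.filter fun p : V × V => N.Adj p.1 p.2 with hS
  set Cm := Finset.univ.filter fun z => N.Adj x z ∧ N.Adj y z with hC
  -- The darts that are lost: both directions of `xy`, and those joining `y` to a common neighbour.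
  set L : Finset (V × V) := {(x, y), (y, x)} ∪ (Cm.image fun z => (y, z)) ∪
    (Cm.image fun z => (z, y)) with hL
  have hLc : L.card ≤ 2 + 2 * Cm.card := by
    have h1 := Finset.card_union_le ({(x, y), (y, x)} ∪ (Cm.image fun z => (y, z)))
      (Cm.image fun z => (z, y))
    have h2 := Finset.card_union_le ({(x, y), (y, x)} : Finset (V × V)) (Cm.image fun z => (y, z))
    have h3 : ({(x, y), (y, x)} : Finset (V × V)).card ≤ 2 := Finset.card_le_two
    have h4 : (Cm.image fun z => (y, z)).card ≤ Cm.card := Finset.card_image_le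
    have h5 : (Cm.image fun z => (z, y)).card ≤ Cm.card := Finset.card_image_le
    rw [hL]
    omega
  have hmain : (S \ L).card ≤ dartCount (contract N x y) := by
    refine Finset.card_le_card_of_injOn
      (fun p => (⟨if p.1 = y then x else p.1, by split_ifs <;> assumption⟩,
        ⟨if p.2 = y then x else p.2, by split_ifs <;> assumption⟩)) ?_ ?_
    · rintro ⟨u, v⟩ h
      simp [hS, hL, hC, contract] at h ⊢
      by_cases hu : u = y
      · subst hu; grind [SimpleGraph.adj_comm, SimpleGraph.irrefl]
      · by_cases hv : v = y
        · subst hv; grind [SimpleGraph.adj_comm, SimpleGraph.irrefl]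
        · grind [SimpleGraph.adj_comm, SimpleGraph.irrefl]
    · rintro ⟨u, v⟩ h ⟨u', v'⟩ h' heq
      simp [hS, hL, hC] at h h' heq ⊢
      grind [SimpleGraph.adj_comm, SimpleGraph.irrefl]
  have h := Finset.le_card_sdiff L S
  have hSc : dartCount N = S.card := rfl
  omega

/-- Mader's theorem: large average degree forces a complete minor. If some edge has few common
neighbours, contract it; otherwise every neighbourhood is dense, and contains a smaller complete
minor. -/
theorem mader (r : ℕ) : ∀ {V : Type} [Fintype V] [Nonempty V] (N : SimpleGraph V),
    2 ^ r * Fintype.card V ≤ dartCount N → HasCompleteMinor N r := by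
  classical
  induction r with
  | zero => intro V _ _ N _; exact hasCompleteMinor_zero N
  | succ r ihr =>
    suffices ∀ (m : ℕ) {V : Type} [Fintype V] [Nonempty V] (N : SimpleGraph V),
        Fintype.card V = m → 2 ^ (r + 1) * Fintype.card V ≤ dartCount N →
        HasCompleteMinor N (r + 1) from fun {_} _ _ N h => this _ N rfl h
    intro m
    induction m using Nat.strong_induction_on with
    | _ m ih =>
    intro V _ hV N hm hN
    by_cases hr0 : r = 0
    · subst hr0; exact hasCompleteMinor_one N hV.some
    by_cases hedge : ∃ x y, N.Adj x y ∧
        (Finset.univ.filter fun z => N.Adj x z ∧ N.Adj y z).card < 2 ^ r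
    · obtain ⟨x, y, hxy, hlt⟩ := hedge
      have h1 := dartCount_contract N hxy
      have : Nonempty {v : V // v ≠ y} := ⟨⟨x, hxy.ne⟩⟩
      have hcard : Fintype.card {v : V // v ≠ y} = Fintype.card V - 1 := by
        rw [Fintype.card_subtype_compl, Fintype.card_subtype_eq]
      have hpos : 0 < Fintype.card V := Fintype.card_pos
      refine HasCompleteMinor.of_contract hxy (by omega)
        (ih (m - 1) (by omega) (contract N x y) (by omega) ?_)
      rw [hcard]
      obtain ⟨c, hc⟩ : ∃ c, Fintype.card V = c + 1 := ⟨_, (Nat.succ_pred_eq_of_pos hpos).symm⟩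
      rw [hc] at hN ⊢
      rw [Nat.add_sub_cancel]
      rw [pow_succ] at hN ⊢
      nlinarith
    · push Not at hedge
      have hpos : 0 < dartCount N := lt_of_lt_of_le (by positivity) hN
      obtain ⟨⟨x, y⟩, hp⟩ := Finset.card_pos.1 hpos
      have hxy : N.Adj x y := by simpa using hp
      have : Nonempty (N.neighborSet x) := ⟨⟨y, hxy⟩⟩
      refine HasCompleteMinor.cone x (ihr _ ?_)
      unfold dartCount
      rw [Finset.card_filter, ← Finset.univ_product_univ, Finset.sum_product]
      calc 2 ^ r * Fintype.card (N.neighborSet x) = ∑ _z : N.neighborSet x, 2 ^ r := by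
            simp [mul_comm]
        _ ≤ _ := by
          refine Finset.sum_le_sum fun z _ => ?_
          refine le_trans ?_ (Finset.card_filter
            (fun w => (N.induce (N.neighborSet x)).Adj z w) Finset.univ).le
          refine (hedge x z z.2).trans ?_
          refine Finset.card_le_card_of_surjOn (fun w : N.neighborSet x => w.1) ?_
          intro w hw
          simp at hw
          exact ⟨⟨w, hw.1⟩, by simpa using hw.2, rfl⟩

/-! ### Subdivided multigraphs -/

/-- A directed multigraph with vertex set `V` and edge set `E`, in which the edge `e` stands for a
path with `len e` interior vertices. At least two interior vertices are required, so that the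
subdivision `Net.graph` is simple, with no condition on loops or parallel edges. -/
structure Net (V E : Type) where
  src : E → V
  tgt : E → V
  len : E → ℕ
  two_le : ∀ e, 2 ≤ len e

namespace Net
variable {V E : Type} (W : Net V E)

/-- The vertices of the subdivision: original vertices, and interior vertices of edges. -/
abbrev SV := V ⊕ (Σ e : E, Fin (W.len e))

/-- The `i`-th vertex along the edge `e`, for `0 ≤ i ≤ len e + 1`. -/
def pos (e : E) (i : ℕ) : W.SV :=
  if i = 0 then .inl (W.src e) else
    if h : i - 1 < W.len e then .inr ⟨e, ⟨i - 1, h⟩⟩ else .inl (W.tgt e)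

@[simp] theorem pos_zero (e : E) : W.pos e 0 = .inl (W.src e) := rfl

@[simp] theorem pos_last (e : E) : W.pos e (W.len e + 1) = .inl (W.tgt e) := by simp [pos]

@[simp] theorem pos_mid (e : E) (k : Fin (W.len e)) : W.pos e (k + 1) = .inr ⟨e, k⟩ := by
  simp [pos]

theorem pos_eq {e e' : E} {i i' : ℕ} (h1 : 1 ≤ i) (h2 : i ≤ W.len e)
    (h : W.pos e i = W.pos e' i') : e = e' ∧ i = i' := by
  obtain ⟨k, rfl⟩ : ∃ k, i = k + 1 := ⟨i - 1, by omega⟩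
  have h3 := W.pos_mid e ⟨k, h2⟩
  simp only at h3
  rw [h3] at h
  unfold pos at h
  split_ifs at h with h4 h5
  simp only [Sum.inr.injEq] at h
  have h6 : e = e' := congrArg Sigma.fst h
  subst h6
  have h7 := eq_of_heq (Sigma.mk.inj h).2
  have h8 := congrArg Fin.val h7
  simp only at h8
  exact ⟨rfl, by omega⟩

/-- Oriented segments of the subdivision. -/
abbrev Seg := (Σ e : E, Fin (W.len e + 1)) × Bool

/-- The two ends of an oriented segment. -/
def ends (a : W.Seg) : W.SV × W.SV :=
  if a.2 then (W.pos a.1.1 a.1.2, W.pos a.1.1 (a.1.2 + 1))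
  else (W.pos a.1.1 (a.1.2 + 1), W.pos a.1.1 a.1.2)

theorem ends_injective : Function.Injective W.ends := by
  rintro ⟨⟨e, i, hi⟩, s⟩ ⟨⟨e', i', hi'⟩, s'⟩ h
  have hl := W.two_le e
  have key : e = e' ∧ i = i' ∧ s = s' := by
    cases s <;> cases s' <;> simp only [ends, Prod.mk.injEq, if_true, Bool.false_eq_true,
      if_false, Bool.true_eq_false] at h ⊢ <;> obtain ⟨ha, hb⟩ := h <;>
      rcases Nat.eq_zero_or_pos i with h0 | h0
    · obtain ⟨rfl, h1⟩ := W.pos_eq (by omega) (by omega) ha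
      exact ⟨rfl, by omega, trivial⟩
    · obtain ⟨rfl, h1⟩ := W.pos_eq (by omega) (by omega) hb
      exact ⟨rfl, by omega, trivial⟩
    · obtain ⟨rfl, h1⟩ := W.pos_eq (by omega) (by omega) ha
      have := W.pos_eq (by omega) (by omega) hb.symm
      omega
    · obtain ⟨rfl, h1⟩ := W.pos_eq (by omega) (by omega) hb
      rcases Nat.lt_or_ge i (W.len e) with h2 | h2
      · have := W.pos_eq (by omega) (by omega) ha
        omega
      · have := W.pos_eq (by omega) (by omega) ha.symm
        omega
    · obtain ⟨rfl, h1⟩ := W.pos_eq (by omega) (by omega) hb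
      have := W.pos_eq (by omega) (by omega) ha.symm
      omega
    · obtain ⟨rfl, h1⟩ := W.pos_eq (by omega) (by omega) ha
      rcases Nat.lt_or_ge i (W.len e) with h2 | h2
      · have := W.pos_eq (by omega) (by omega) hb
        omega
      · have := W.pos_eq (by omega) (by omega) hb.symm
        omega
    · obtain ⟨rfl, h1⟩ := W.pos_eq (by omega) (by omega) hb
      exact ⟨rfl, by omega, trivial⟩
    · obtain ⟨rfl, h1⟩ := W.pos_eq (by omega) (by omega) ha
      exact ⟨rfl, by omega, trivial⟩
  obtain ⟨rfl, rfl, rfl⟩ := key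
  rfl

theorem ends_not (a : W.Seg) : W.ends (a.1, !a.2) = (W.ends a).swap := by
  rcases a with ⟨a, _ | _⟩ <;> simp [ends]

/-- The subdivision of `W`: every edge `e` becomes a path with `len e` interior vertices. -/
def graph : SimpleGraph W.SV where
  Adj u v := ∃ a, W.ends a = (u, v)
  symm := ⟨by
    rintro u v ⟨a, ha⟩
    exact ⟨(a.1, !a.2), by rw [ends_not, ha]; rfl⟩⟩
  loopless := ⟨by
    rintro u ⟨a, ha⟩
    have h1 : W.ends (a.1, !a.2) = W.ends a := by rw [ends_not, ha]; rfl
    have h2 := congrArg Prod.snd (W.ends_injective h1)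
    simp at h2⟩

theorem adj_pos (e : E) {i : ℕ} (hi : i ≤ W.len e) :
    W.graph.Adj (W.pos e i) (W.pos e (i + 1)) :=
  ⟨(⟨e, ⟨i, by omega⟩⟩, true), rfl⟩

theorem graph_connected (o : V)
    (hconn : ∀ P : V → Prop, P o → (∀ e, P (W.src e) ↔ P (W.tgt e)) → ∀ x, P x) :
    W.graph.Connected := by
  have h1 : ∀ e i, i ≤ W.len e + 1 → W.graph.Reachable (.inl (W.src e)) (W.pos e i) := by
    intro e i
    induction i with
    | zero => intro _; exact SimpleGraph.Reachable.refl _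
    | succ i ih =>
      intro hi
      exact (ih (by omega)).trans (W.adj_pos e (by omega)).reachable
  have h2 : ∀ x : V, W.graph.Reachable (.inl o) (.inl x) := by
    refine hconn _ (SimpleGraph.Reachable.refl _) fun e => ?_
    have h3 := h1 e (W.len e + 1) le_rfl
    rw [pos_last] at h3
    exact ⟨fun h => h.trans h3, fun h => h.trans h3.symm⟩
  have h4 : ∀ u, W.graph.Reachable (.inl o) u := by
    rintro (x | ⟨e, k⟩)
    · exact h2 x
    · have := h1 e (k + 1) (by omega)
      rw [pos_mid] at this
      exact (h2 _).trans this
  have : Nonempty W.SV := ⟨.inl o⟩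
  exact ⟨fun u v => (h4 u).symm.trans (h4 v)⟩

/-- At each vertex, the outgoing edges and the incoming edges are told apart by a label in `T`. -/
structure Labelled {T : Type} (tag : E → T) : Prop where
  src_inj : ∀ e e', W.src e = W.src e' → tag e = tag e' → e = e'
  tgt_inj : ∀ e e', W.tgt e = W.tgt e' → tag e = tag e' → e = e'

/-- The segments starting at a given vertex are told apart by finitely many labels. -/
theorem exists_seg_label {T : Type} {tag : E → T} (hW : W.Labelled tag) (u : W.SV) :
    Set.InjOn (fun a : W.Seg => (tag a.1.1, decide ((a.1.2 : ℕ) = 0), a.2))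
      {a | (W.ends a).1 = u} := by
  rintro ⟨⟨e, i, hi⟩, s⟩ ha ⟨⟨e', i', hi'⟩, s'⟩ ha' h
  simp only [Prod.mk.injEq, decide_eq_decide, Set.mem_ofPred_eq] at h ha ha'
  obtain ⟨h1, h2, rfl⟩ := h
  have hee : W.pos e (if s then i else i + 1) = W.pos e' (if s then i' else i' + 1) := by
    cases s <;> simpa [ends] using ha.trans ha'.symm
  have hl := W.two_le e
  have hl' := W.two_le e'
  have key : e = e' ∧ i = i' := by
    cases s <;> simp only [if_true, Bool.false_eq_true, if_false] at hee
    · by_cases h3 : i = W.len e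
      · by_cases h4 : i' = W.len e'
        · subst h3; subst h4
          simp only [pos_last, Sum.inl.injEq] at hee
          obtain rfl := hW.tgt_inj _ _ hee h1
          exact ⟨rfl, rfl⟩
        · have := W.pos_eq (by omega) (by omega) hee.symm
          grind
      · have := W.pos_eq (by omega) (by omega) hee
        grind
    · by_cases h3 : i = 0
      · have h4 := h2.1 h3
        subst h3; subst h4
        simp only [pos_zero, Sum.inl.injEq] at hee
        exact ⟨hW.src_inj _ _ hee h1, rfl⟩
      · exact W.pos_eq (by omega) (by omega) hee
  obtain ⟨rfl, rfl⟩ := key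
  rfl

theorem finite_segs {T : Type} [Finite T] {tag : E → T} (hW : W.Labelled tag) (u : W.SV) :
    {a | (W.ends a).1 = u}.Finite :=
  Set.Finite.of_finite_image (Set.toFinite _) (W.exists_seg_label hW u)

theorem graph_boundedDegree {T : Type} [Finite T] {tag : E → T} (hW : W.Labelled tag) :
    BoundedDegree W.graph := by
  have hsub : ∀ u, W.graph.neighborSet u ⊆ (fun a => (W.ends a).2) '' {a | (W.ends a).1 = u} := by
    rintro u v ⟨a, ha⟩
    exact ⟨a, by simp [ha], by simp [ha]⟩
  refine ⟨Nat.card (T × Bool × Bool), fun u => ⟨?_, ?_⟩⟩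
  · exact ((W.finite_segs hW u).image _).subset (hsub u)
  · refine (Set.ncard_le_ncard (hsub u) ((W.finite_segs hW u).image _)).trans ?_
    refine (Set.ncard_image_le (W.finite_segs hW u)).trans ?_
    rw [← Set.ncard_univ]
    exact Set.ncard_le_ncard_of_injOn _ (fun _ _ => Set.mem_univ _) (W.exists_seg_label hW u)

/-! ### Flows on a subdivision -/

open Classical in
/-- A finite-energy flow on the edges of `W`, where `e` counts as a resistor of resistance
`len e + 1`, runs along the subdivision. -/
theorem graph_transient {T : Type} [Finite T] {tag : E → T} (hW : W.Labelled tag) (o : V)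
    (θ : E → ℝ)
    (hdiv : ∀ v, ∑' e, θ e * ((if W.src e = v then 1 else 0) - if W.tgt e = v then 1 else 0) =
      if v = o then 1 else 0)
    (hen : Summable fun e => (W.len e + 1 : ℝ) * θ e ^ 2) : Transient W.graph := by
  let val : W.Seg → ℝ := fun a => if a.2 then θ a.1.1 else - θ a.1.1
  let Θ : W.SV × W.SV → ℝ := Function.extend W.ends val 0
  have hΘ : ∀ a, Θ (W.ends a) = val a := fun a => W.ends_injective.extend_apply _ _ a
  have hΘ0 : ∀ p, (¬ ∃ a, W.ends a = p) → Θ p = 0 := fun p hp =>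
    Function.extend_apply' _ _ p hp
  have hdivg : ∀ u, divg (fun u v => Θ (u, v)) u =
      ∑' e, θ e * ((if u = .inl (W.src e) then 1 else 0) - if u = .inl (W.tgt e) then 1 else 0) := by
    intro u
    let A : Set W.Seg := {a | (W.ends a).1 = u}
    have hA : A.Finite := W.finite_segs hW u
    have hinj : Function.Injective (fun a : A => (W.ends a.1).2) := by
      rintro ⟨a, ha⟩ ⟨b, hb⟩ hab
      refine Subtype.ext (W.ends_injective (Prod.ext ?_ hab))
      exact (show (W.ends a).1 = u from ha).trans (show (W.ends b).1 = u from hb).symm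
    have h1 : divg (fun u v => Θ (u, v)) u = ∑' a : A, val a.1 := by
      unfold divg
      rw [← hinj.tsum_eq]
      · refine tsum_congr fun a => ?_
        rw [← hΘ a.1]
        have ha : (W.ends a.1).1 = u := a.2
        have hp : (u, (W.ends a.1).2) = W.ends a.1 := Prod.ext ha.symm rfl
        exact congrArg Θ hp
      · intro v hv
        by_contra hcon
        refine hv (hΘ0 _ ?_)
        rintro ⟨a, ha⟩
        exact hcon ⟨⟨a, show (W.ends a).1 = u by rw [ha]⟩, by simp [ha]⟩
    rw [h1, tsum_subtype A val]
    have hsum : Summable (A.indicator val) :=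
      summable_of_hasFiniteSupport (hA.subset Set.support_indicator_subset)
    let eqv : (Σ e : E, Fin (W.len e + 1) × Bool) ≃ W.Seg :=
      { toFun := fun x => (⟨x.1, x.2.1⟩, x.2.2)
        invFun := fun a => ⟨a.1.1, (a.1.2, a.2)⟩
        left_inv := fun _ => rfl
        right_inv := fun _ => rfl }
    have hsum' : Summable (fun c => A.indicator val (eqv c)) := eqv.summable_iff.2 hsum
    rw [← eqv.tsum_eq, Summable.tsum_sigma' (fun e => (hasSum_fintype _).summable) hsum']
    refine tsum_congr fun e => ?_
    rw [tsum_fintype, Fintype.sum_prod_type]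
    have h2 : ∀ i : Fin (W.len e + 1), ∑ s : Bool, A.indicator val (eqv ⟨e, (i, s)⟩) =
        θ e * ((if u = W.pos e i then 1 else 0) - if u = W.pos e (i + 1) then 1 else 0) := by
      intro i
      have e1 : ∀ s, ((eqv ⟨e, (i, s)⟩ ∈ A) ↔ u = if s then W.pos e i else W.pos e (i + 1)) := by
        intro s
        cases s <;> exact eq_comm
      simp only [Fintype.sum_bool, Set.indicator_apply, e1]
      simp only [if_true, Bool.false_eq_true, if_false, val, eqv, Equiv.coe_fn_mk]
      split_ifs <;> ring
    simp only [h2]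
    rw [← Finset.mul_sum]
    congr 1
    rw [Finset.sum_range (fun i => ((if u = W.pos e i then (1 : ℝ) else 0) -
      if u = W.pos e (i + 1) then 1 else 0)) |>.symm, Finset.sum_range_sub', pos_zero, pos_last]
  refine ⟨.inl o, fun u v => Θ (u, v), ⟨?_, ?_⟩, ?_, ?_, ?_⟩
  · intro u v
    change Θ (u, v) = -Θ (v, u)
    by_cases h : ∃ a, W.ends a = (u, v)
    · obtain ⟨a, ha⟩ := h
      have h1 := hΘ (a.1, !a.2)
      rw [ends_not, ha] at h1
      have h2 := hΘ a
      rw [ha] at h2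
      simp only [Prod.swap_prod_mk] at h1
      rw [h1, h2]
      rcases a with ⟨a, _ | _⟩ <;> simp [val]
    · rw [hΘ0 _ h, hΘ0, neg_zero]
      rintro ⟨a, ha⟩
      exact h ⟨(a.1, !a.2), by rw [ends_not, ha]; rfl⟩
  · intro u v h
    by_contra hcon
    exact h (hΘ0 _ hcon)
  · rw [hdivg]
    have := hdiv o
    rw [if_pos rfl] at this
    refine Eq.trans (tsum_congr fun e => ?_) this
    simp only [Sum.inl.injEq, @eq_comm _ o]
  · rintro (v | m) hv
    · rw [hdivg]
      have := hdiv v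
      rw [if_neg (fun h => hv (by rw [h]))] at this
      refine Eq.trans (tsum_congr fun e => ?_) this
      simp only [Sum.inl.injEq, @eq_comm _ v]
    · rw [hdivg]
      simp
  · change Summable (fun p => Θ p ^ 2)
    rw [← W.ends_injective.summable_iff]
    · let eqv : (Σ e : E, Fin (W.len e + 1) × Bool) ≃ W.Seg :=
        { toFun := fun x => (⟨x.1, x.2.1⟩, x.2.2)
          invFun := fun a => ⟨a.1.1, (a.1.2, a.2)⟩
          left_inv := fun _ => rfl
          right_inv := fun _ => rfl }
      rw [← eqv.summable_iff]
      have h1 : ∀ x, (((fun p => Θ p ^ 2) ∘ W.ends) ∘ eqv) x = θ x.1 ^ 2 := by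
        rintro ⟨e, i, s⟩
        simp only [Function.comp, hΘ]
        cases s <;> simp [val, eqv]
      rw [summable_congr h1, summable_sigma_of_nonneg (fun _ => sq_nonneg _)]
      refine ⟨fun e => (hasSum_fintype _).summable, ?_⟩
      refine (hen.mul_left 2).congr fun e => ?_
      simp [tsum_fintype]
      ring
    · intro p hp
      change Θ p ^ 2 = 0
      rw [hΘ0 p (fun ⟨a, ha⟩ => hp ⟨a, ha⟩)]
      simp

end Net

/-! ### Transient subgraphs of a subdivision -/

/-- Thomson's principle in dual form: a transient graph does not admit finitely supported
functions equal to `1` at the source with arbitrarily small Dirichlet energy. -/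
theorem Transient.energy_bound {U : Type} {H : SimpleGraph U}
    (hfin : ∀ u, (H.neighborSet u).Finite) (hH : Transient H) :
    ∃ (C : ℝ) (o : U), 0 ≤ C ∧ ∀ ψ : U → ℝ, (Function.support ψ).Finite → ψ o = 1 →
      ∀ P : Finset (U × U), (∀ u v, H.Adj u v → ψ u ≠ ψ v → (u, v) ∈ P) →
        1 ≤ C * ∑ p ∈ P, (ψ p.1 - ψ p.2) ^ 2 := by
  classical
  obtain ⟨o, θ, ⟨hanti, hsupp⟩, ho, hdiv, hen⟩ := hH
  refine ⟨∑' p : U × U, θ p.1 p.2 ^ 2, o, tsum_nonneg fun _ => sq_nonneg _, ?_⟩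
  intro ψ hψ hψo P hP
  let S : Finset U := hψ.toFinset
  let S' : Finset U := S ∪ S.biUnion fun u => (hfin u).toFinset
  have hS : ∀ u, ψ u ≠ 0 → u ∈ S := fun u hu => by simpa [S] using hu
  have hSS' : S ⊆ S' := Finset.subset_union_left
  have hd : ∀ u ∈ S, divg θ u = ∑ v ∈ S', θ u v := by
    intro u hu
    refine tsum_eq_sum fun v hv => ?_
    by_contra hne
    refine hv (Finset.mem_union_right _ (Finset.mem_biUnion.2 ⟨u, hu, ?_⟩))
    simpa using hsupp u v hne
  have h1 : ∑ u ∈ S', ∑ v ∈ S', ψ u * θ u v = 1 := by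
    have : ∀ u ∈ S', ∑ v ∈ S', ψ u * θ u v = if u = o then 1 else 0 := by
      intro u _
      rw [← Finset.mul_sum]
      by_cases hu : ψ u = 0
      · rw [hu, zero_mul, if_neg]
        rintro rfl
        simp [hψo] at hu
      · rw [← hd u (hS u hu)]
        split_ifs with h
        · rw [h, ho, hψo, one_mul]
        · rw [hdiv u h, mul_zero]
    rw [Finset.sum_congr rfl this, Finset.sum_ite_eq' S' o, if_pos]
    exact hSS' (hS o (by simp [hψo]))
  have h2 : ∑ u ∈ S', ∑ v ∈ S', θ u v * (ψ u - ψ v) = 2 := by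
    have h3 : ∑ u ∈ S', ∑ v ∈ S', ψ v * θ u v = -1 := by
      rw [Finset.sum_comm, ← h1, ← Finset.sum_neg_distrib]
      refine Finset.sum_congr rfl fun u _ => ?_
      rw [← Finset.sum_neg_distrib]
      refine Finset.sum_congr rfl fun v _ => ?_
      rw [hanti v u]; ring
    calc ∑ u ∈ S', ∑ v ∈ S', θ u v * (ψ u - ψ v)
        = ∑ u ∈ S', ∑ v ∈ S', ψ u * θ u v - ∑ u ∈ S', ∑ v ∈ S', ψ v * θ u v := by
          simp only [← Finset.sum_sub_distrib]
          refine Finset.sum_congr rfl fun u _ => Finset.sum_congr rfl fun v _ => by ring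
      _ = 2 := by rw [h1, h3]; norm_num
  rw [← Finset.sum_product'] at h2
  have h5 : ∑ p ∈ P ∩ S' ×ˢ S', θ p.1 p.2 * (ψ p.1 - ψ p.2) = 2 := by
    rw [← h2]
    refine Finset.sum_subset Finset.inter_subset_right fun p hp hp' => ?_
    by_contra hne
    refine hp' (Finset.mem_inter.2 ⟨hP p.1 p.2 (hsupp _ _ ?_) ?_, hp⟩)
    · intro h; simp [h] at hne
    · intro h; simp [h] at hne
  have h6 := Finset.sum_mul_sq_le_sq_mul_sq (P ∩ S' ×ˢ S') (fun p => θ p.1 p.2)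
    (fun p => ψ p.1 - ψ p.2)
  rw [h5] at h6
  have h7 : ∑ p ∈ P ∩ S' ×ˢ S', θ p.1 p.2 ^ 2 ≤ ∑' p : U × U, θ p.1 p.2 ^ 2 :=
    hen.sum_le_tsum _ fun _ _ => sq_nonneg _
  have h8 : ∑ p ∈ P ∩ S' ×ˢ S', (ψ p.1 - ψ p.2) ^ 2 ≤ ∑ p ∈ P, (ψ p.1 - ψ p.2) ^ 2 :=
    Finset.sum_le_sum_of_subset_of_nonneg Finset.inter_subset_left fun _ _ _ => sq_nonneg _
  have h9 : 0 ≤ ∑ p ∈ P ∩ S' ×ˢ S', (ψ p.1 - ψ p.2) ^ 2 :=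
    Finset.sum_nonneg fun _ _ => sq_nonneg _
  have h10 := mul_le_mul h7 h8 h9 (tsum_nonneg fun _ => sq_nonneg _)
  linarith

namespace Net
variable {V E : Type} (W : Net V E)

/-- The edges of `W` all of whose segments lie in the subgraph `H`. -/
def full (H : W.graph.Subgraph) : Set E :=
  {e | ∀ i, i ≤ W.len e → H.Adj (W.pos e i) (W.pos e (i + 1))}

/-- The graph on the vertices of `W` with the edges in `F`. -/
def on (F : Set E) : SimpleGraph V where
  Adj u v := u ≠ v ∧ ∃ e ∈ F, (W.src e = u ∧ W.tgt e = v) ∨ (W.src e = v ∧ W.tgt e = u)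
  symm := ⟨fun _ _ h => ⟨h.1.symm, h.2.imp fun _ he => ⟨he.1, he.2.symm⟩⟩⟩
  loopless := ⟨fun _ h => h.1 rfl⟩

open Classical in
/-- Extension of a function to the vertices of an edge: linear along the edges contained in `H`,
and jumping at a missing segment along the other edges, at no cost of energy in `H`. -/
theorem exists_profile (H : W.graph.Subgraph) (φ : V → ℝ) (e : E) :
    ∃ h : ℕ → ℝ, h 0 = φ (W.src e) ∧ h (W.len e + 1) = φ (W.tgt e) ∧
      (∀ i, φ (W.src e) = φ (W.tgt e) → h i = φ (W.src e)) ∧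
      (∑ i : Fin (W.len e + 1), if H.Adj (W.pos e i) (W.pos e (i + 1))
        then (h i - h (i + 1)) ^ 2 else 0) ≤
        if e ∈ W.full H then (φ (W.src e) - φ (W.tgt e)) ^ 2 / (W.len e + 1) else 0 := by
  have hpos : (0 : ℝ) < W.len e + 1 := by positivity
  by_cases he : e ∈ W.full H
  · refine ⟨fun i => φ (W.src e) + i / (W.len e + 1) * (φ (W.tgt e) - φ (W.src e)), by simp, ?_, ?_,
      ?_⟩
    · push_cast
      field_simp
      ring
    · intro i hi
      simp [hi]
    · rw [if_pos he]
      have : ∀ i : Fin (W.len e + 1), (if H.Adj (W.pos e i) (W.pos e (i + 1)) then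
          ((φ (W.src e) + ((i : ℕ) : ℝ) / (W.len e + 1) * (φ (W.tgt e) - φ (W.src e))) -
          (φ (W.src e) + ((i + 1 : ℕ) : ℝ) / (W.len e + 1) * (φ (W.tgt e) - φ (W.src e)))) ^ 2
          else 0) = (φ (W.src e) - φ (W.tgt e)) ^ 2 / (W.len e + 1) ^ 2 := by
        intro i
        rw [if_pos (he i (by omega))]
        push_cast
        field_simp
        ring
      rw [Finset.sum_congr rfl fun i _ => this i]
      simp only [Finset.sum_const, Finset.card_univ, Fintype.card_fin, nsmul_eq_mul]
      push_cast
      apply le_of_eq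
      field_simp
  · have hex : ∃ i, i ≤ W.len e ∧ ¬ H.Adj (W.pos e i) (W.pos e (i + 1)) := by
      simpa [full] using he
    obtain ⟨i0, hi0, hadj⟩ := hex
    refine ⟨fun i => if i ≤ i0 then φ (W.src e) else φ (W.tgt e), by simp, ?_, ?_, ?_⟩
    · simp only
      rw [if_neg (by omega)]
    · intro i hi
      simp [hi]
    · rw [if_neg he]
      apply le_of_eq
      refine Finset.sum_eq_zero fun i _ => ?_
      split_ifs with h1
      · have hne : (i : ℕ) ≠ i0 := fun h => hadj (by rwa [h] at h1)
        beta_reduce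
        by_cases h2 : (i : ℕ) ≤ i0
        · rw [if_pos h2, if_pos (by omega), sub_self, sq, zero_mul]
        · rw [if_neg h2, if_neg (by omega), sub_self, sq, zero_mul]
      · rfl

open Classical in
/-- If `H` is a transient subgraph of the subdivision, the network formed by the edges of `W`
contained in `H`, with resistances `len e + 1`, has positive capacity. -/
theorem energy_bound {T : Type} [Finite T] {tag : E → T} (hW : W.Labelled tag)
    (H : W.graph.Subgraph) (hH : Transient H.coe) :
    ∃ (C : ℝ) (v₁ v₂ : V), 0 ≤ C ∧ ∀ φ : V → ℝ, (Function.support φ).Finite → φ v₁ = 1 → φ v₂ = 1 →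
      ∀ S : Finset E, (∀ e, e ∉ S → φ (W.src e) = 0 ∧ φ (W.tgt e) = 0) →
        1 ≤ C * ∑ e ∈ S, if e ∈ W.full H
          then (φ (W.src e) - φ (W.tgt e)) ^ 2 / (W.len e + 1) else 0 := by
  have hfin : ∀ u, (H.coe.neighborSet u).Finite := by
    intro u
    refine Set.Finite.of_finite_image (f := Subtype.val) ?_ Subtype.val_injective.injOn
    refine ((W.finite_segs hW u.1).image fun a => (W.ends a).2).subset ?_
    rintro _ ⟨v, hv, rfl⟩
    have hv' : H.Adj u.1 v.1 := by simpa using hv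
    obtain ⟨a, ha⟩ := hv'.adj_sub
    exact ⟨a, by simp [ha], by simp [ha]⟩
  obtain ⟨C, o, hC, hmain⟩ := hH.energy_bound hfin
  obtain ⟨v₁, v₂, hv⟩ : ∃ v₁ v₂ : V, o.1 = .inl v₁ ∨ ∃ e k, o.1 = .inr ⟨e, k⟩ ∧
      v₁ = W.src e ∧ v₂ = W.tgt e := by
    rcases h : o.1 with v | ⟨e, k⟩
    · exact ⟨v, v, Or.inl rfl⟩
    · exact ⟨_, _, Or.inr ⟨e, k, rfl, rfl, rfl⟩⟩
  refine ⟨C * 2, v₁, v₂, by positivity, ?_⟩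
  intro φ hφ hφ1 hφ2 S hS
  choose h h0 hlast hconst hle using W.exists_profile H φ
  let Φ : W.SV → ℝ := Sum.elim φ fun x => h x.1 (x.2 + 1)
  have hΦ : ∀ e i, i ≤ W.len e + 1 → Φ (W.pos e i) = h e i := by
    intro e i hi
    rcases Nat.eq_zero_or_pos i with rfl | h1
    · rw [pos_zero, h0]; rfl
    · rcases Nat.lt_or_ge i (W.len e + 1) with h2 | h2
      · obtain ⟨k, rfl⟩ : ∃ k, i = k + 1 := ⟨i - 1, by omega⟩
        rw [show W.pos e (k + 1) = _ from W.pos_mid e ⟨k, by omega⟩]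
        rfl
      · obtain rfl : i = W.len e + 1 := by omega
        rw [pos_last, hlast]; rfl
  have hout : ∀ e, e ∉ S → ∀ i, h e i = 0 := by
    intro e he i
    obtain ⟨h1, h2⟩ := hS e he
    rw [hconst e i (h1.trans h2.symm), h1]
  let ψ : H.verts → ℝ := fun u => Φ u.1
  have hψ : (Function.support ψ).Finite := by
    refine Set.Finite.of_finite_image (f := Subtype.val) ?_ Subtype.val_injective.injOn
    refine Set.Finite.subset ((hφ.image Sum.inl).union
      ((S.finite_toSet.biUnion (t := fun e => Set.range fun k : Fin (W.len e) => (⟨e, k⟩ :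
        Σ e : E, Fin (W.len e))) fun e _ => Set.finite_range _).image Sum.inr)) ?_
    rintro _ ⟨⟨u | ⟨e, k⟩, hu⟩, hne, rfl⟩
    · exact Or.inl ⟨u, hne, rfl⟩
    · refine Or.inr ⟨⟨e, k⟩, ?_, rfl⟩
      simp only [Set.mem_iUnion]
      refine ⟨e, ?_, k, rfl⟩
      by_contra hcon
      exact hne (hout e hcon _)
  have hψo : ψ o = 1 := by
    change Φ o.1 = 1
    rcases hv with hv | ⟨e, k, hv, rfl, rfl⟩
    · rw [hv]; exact hφ1
    · rw [hv]
      exact (hconst e _ (hφ1.trans hφ2.symm)).trans hφ1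
  let eqv : (Σ e : E, Fin (W.len e + 1) × Bool) ≃ W.Seg :=
    { toFun := fun x => (⟨x.1, x.2.1⟩, x.2.2)
      invFun := fun a => ⟨a.1.1, (a.1.2, a.2)⟩
      left_inv := fun _ => rfl
      right_inv := fun _ => rfl }
  let emb : (Σ e : E, Fin (W.len e + 1) × Bool) ↪ W.SV × W.SV :=
    ⟨fun x => W.ends (eqv x), W.ends_injective.comp eqv.injective⟩
  let A : Finset (W.SV × W.SV) :=
    ((S.sigma fun _ => Finset.univ).map emb).filter fun p => H.Adj p.1 p.2
  let val2 : H.verts × H.verts → W.SV × W.SV := Prod.map Subtype.val Subtype.val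
  have hval2 : Function.Injective val2 := Subtype.val_injective.prodMap Subtype.val_injective
  have := hmain ψ hψ hψo (A.preimage val2 hval2.injOn) ?_
  · refine this.trans ?_
    rw [mul_assoc]
    refine mul_le_mul_of_nonneg_left ?_ hC
    have e1 : ∑ p ∈ A.preimage val2 hval2.injOn, (ψ p.1 - ψ p.2) ^ 2 ≤
        ∑ p ∈ A, (Φ p.1 - Φ p.2) ^ 2 := by
      refine (Finset.sum_preimage' val2 A hval2.injOn
        (fun q : W.SV × W.SV => (Φ q.1 - Φ q.2) ^ 2)).trans_le ?_
      exact Finset.sum_le_sum_of_subset_of_nonneg (Finset.filter_subset _ _)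
        fun _ _ _ => sq_nonneg _
    refine e1.trans ?_
    rw [Finset.sum_filter, Finset.sum_map, Finset.sum_sigma, Finset.mul_sum]
    refine Finset.sum_le_sum fun e _ => ?_
    refine le_trans (le_of_eq ?_) (mul_le_mul_of_nonneg_left (hle e) (by norm_num))
    rw [Fintype.sum_prod_type, Finset.mul_sum]
    refine Finset.sum_congr rfl fun i _ => ?_
    have q1 : emb ⟨e, i, true⟩ = (W.pos e i, W.pos e (i + 1)) := rfl
    have q2 : emb ⟨e, i, false⟩ = (W.pos e (i + 1), W.pos e i) := rfl
    rw [Fintype.sum_bool, q1, q2]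
    simp only [H.adj_comm (W.pos e (i + 1)) (W.pos e i)]
    rw [hΦ e i (by omega), hΦ e (i + 1) (by omega)]
    split_ifs <;> ring
  · intro u v huv hne
    have huv' : H.Adj u.1 v.1 := by simpa using huv
    obtain ⟨⟨⟨e, i⟩, s⟩, ha⟩ := huv'.adj_sub
    rw [Finset.mem_preimage, Finset.mem_filter, Finset.mem_map]
    refine ⟨⟨⟨e, i, s⟩, ?_, ha⟩, huv'⟩
    rw [Finset.mem_sigma]
    refine ⟨?_, Finset.mem_univ _⟩
    by_contra hcon
    have z : ∀ w, w = W.pos e i ∨ w = W.pos e (i + 1) → Φ w = 0 := by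
      rintro w (rfl | rfl)
      · rw [hΦ e i (by omega)]; exact hout e hcon _
      · rw [hΦ e _ (by omega)]; exact hout e hcon _
    refine hne ?_
    change Φ u.1 = Φ v.1
    have hu := congrArg Prod.fst ha
    have hv := congrArg Prod.snd ha
    cases s
    · rw [z u.1 (Or.inr hu.symm), z v.1 (Or.inl hv.symm)]
    · rw [z u.1 (Or.inl hu.symm), z v.1 (Or.inr hv.symm)]

/-- A minor of the graph formed by the edges of `W` contained in `H` is a minor of `H`. -/
theorem hasCompleteMinor_of_full (H : W.graph.Subgraph) {r : ℕ} (hr : 2 ≤ r)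
    (h : HasCompleteMinor (W.on (W.full H)) r) : HasCompleteMinor H.coe r := by
  let C : V → Set H.verts := fun v => {x | x.1 = .inl v ∨
    ∃ e ∈ W.full H, W.src e = v ∧ ∃ k, x.1 = .inr ⟨e, k⟩}
  have hmem : ∀ e ∈ W.full H, ∀ i, i ≤ W.len e + 1 → W.pos e i ∈ H.verts := by
    intro e he i hi
    rcases Nat.lt_or_ge i (W.len e + 1) with h1 | h1
    · exact (he i (by omega)).fst_mem
    · obtain rfl : i = W.len e + 1 := by omega
      exact (he (W.len e) le_rfl).snd_mem
  have hmemC : ∀ e (he : e ∈ W.full H), ∀ i (hi : i ≤ W.len e),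
      (⟨W.pos e i, hmem e he i (by omega)⟩ : H.verts) ∈ C (W.src e) := by
    intro e he i hi
    rcases Nat.eq_zero_or_pos i with rfl | h1
    · exact Or.inl rfl
    · obtain ⟨k, rfl⟩ : ∃ k, i = k + 1 := ⟨i - 1, by omega⟩
      exact Or.inr ⟨e, he, rfl, ⟨k, by omega⟩, W.pos_mid e ⟨k, by omega⟩⟩
  have hmemT : ∀ e (he : e ∈ W.full H),
      (⟨W.pos e (W.len e + 1), hmem e he _ le_rfl⟩ : H.verts) ∈ C (W.tgt e) :=
    fun e he => Or.inl (W.pos_last e)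
  refine HasCompleteMinor.lift C ?_ ?_ ?_ hr h
  · rintro x ⟨y, hne, e, he, hxy⟩
    have hx : Sum.inl x ∈ H.verts := by
      rcases hxy with ⟨rfl, _⟩ | ⟨_, rfl⟩
      · simpa using hmem e he 0 (by omega)
      · simpa using hmem e he _ le_rfl
    let o : C x := ⟨⟨.inl x, hx⟩, Or.inl rfl⟩
    have hreach : ∀ u : C x, (H.coe.induce (C x)).Reachable o u := by
      rintro ⟨⟨u, hu⟩, hux | ⟨f, hf, rfl, k, hux⟩⟩
      · obtain rfl : u = .inl x := hux
        exact SimpleGraph.Reachable.refl _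
      · have key : ∀ i (hi : i ≤ W.len f), (H.coe.induce (C (W.src f))).Reachable o
            ⟨⟨W.pos f i, hmem f hf i (by omega)⟩, hmemC f hf i hi⟩ := by
          intro i
          induction i with
          | zero => intro _; exact SimpleGraph.Reachable.refl _
          | succ i ih =>
            intro hi
            refine (ih (by omega)).trans (SimpleGraph.Adj.reachable ?_)
            exact hf i (by omega)
        obtain rfl : u = .inr ⟨f, k⟩ := hux
        have := key (k + 1) (by omega)
        simp only [pos_mid] at this
        exact this
    have : Nonempty (C x) := ⟨o⟩
    exact ⟨fun u v => (hreach u).symm.trans (hreach v)⟩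
  · intro x y hxy
    rw [Set.disjoint_left]
    rintro u (hu | ⟨e, _, he, k, hu⟩) (hu' | ⟨e', _, he', k', hu'⟩)
    · rw [hu] at hu'
      exact hxy (Sum.inl.inj hu')
    · rw [hu] at hu'; cases hu'
    · rw [hu] at hu'; cases hu'
    · rw [hu] at hu'
      have h1 := congrArg Sigma.fst (Sum.inr.inj hu')
      exact hxy (by rw [← he, ← he']; exact congrArg W.src h1)
  · rintro x y ⟨hne, e, he, ⟨rfl, rfl⟩ | ⟨rfl, rfl⟩⟩
    · exact ⟨_, hmemC e he _ le_rfl, _, hmemT e he, he _ le_rfl⟩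
    · exact ⟨_, hmemT e he, _, hmemC e he _ le_rfl, (he _ le_rfl).symm⟩

end Net

/-! ### Gadgets and trees of gadgets -/

/-- A finite network with inner vertices `V` and two terminals, the entrance `inr false` and the
exit `inr true`. -/
structure Gad where
  V : Type
  E : Type
  finV : Finite V
  finE : Fintype E
  net : Net (V ⊕ Bool) E
  tag : E → Fin 4
  labelled : net.Labelled tag
  src_ne : ∀ e, net.src e ≠ .inr true
  tgt_ne : ∀ e, net.tgt e ≠ .inr false
  conn : ∀ P : V ⊕ Bool → Prop, P (.inr false) →
    (∀ e, P (net.src e) ↔ P (net.tgt e)) → ∀ x, P x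

namespace Gad

instance (Q : Gad) : Finite Q.V := Q.finV
instance (Q : Gad) : Fintype Q.E := Q.finE

/-- There is a unit flow from the entrance to the exit of energy at most `ε`. The conservation law
is expressed by duality with functions on the vertices. -/
def HasFlow (Q : Gad) (ε : ℝ) : Prop :=
  ∃ θ : Q.E → ℝ, (∀ g : Q.V ⊕ Bool → ℝ, ∑ e, θ e * (g (Q.net.src e) - g (Q.net.tgt e)) =
    g (.inr false) - g (.inr true)) ∧ ∑ e, (Q.net.len e + 1 : ℝ) * θ e ^ 2 ≤ ε

open Classical in
/-- Each set of edges spans a `K^r` minor away from the terminals, or has conductance at most `κ`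
between the terminals. -/
def Sep (Q : Gad) (r : ℕ) (κ : ℝ) : Prop :=
  ∀ F : Set Q.E, HasCompleteMinor ((Q.net.on F).comap Sum.inl) r ∨
    ∃ φ : Q.V ⊕ Bool → ℝ, φ (.inr false) = 1 ∧ φ (.inr true) = 0 ∧
      (∑ e, if e ∈ F then (φ (Q.net.src e) - φ (Q.net.tgt e)) ^ 2 / (Q.net.len e + 1) else 0) ≤ κ

end Gad

section Tree
variable (Q : ℕ → Gad)

/-- The vertices of the tree of gadgets: the nodes of the binary tree, and the inner vertices of
the gadgets; the gadget `(b, x)` replaces the tree edge from the node `x` to its child `b :: x`. -/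
abbrev TreeV := List Bool ⊕ Σ c : Bool × List Bool, (Q c.2.length).V

/-- The edges of the tree of gadgets. -/
abbrev TreeE := Σ c : Bool × List Bool, (Q c.2.length).E

/-- The inclusion of the gadget at `c` in the tree of gadgets. -/
def treeEmb (c : Bool × List Bool) : (Q c.2.length).V ⊕ Bool → TreeV Q :=
  Sum.elim (fun v => .inr ⟨c, v⟩) fun b => .inl (if b then c.1 :: c.2 else c.2)

/-- The binary tree in which each edge at level `k` is replaced by a copy of `Q k`. -/
def treeNet : Net (TreeV Q) (TreeE Q) where
  src e := treeEmb Q e.1 ((Q e.1.2.length).net.src e.2)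
  tgt e := treeEmb Q e.1 ((Q e.1.2.length).net.tgt e.2)
  len e := (Q e.1.2.length).net.len e.2
  two_le e := (Q e.1.2.length).net.two_le e.2

theorem treeNet_labelled :
    (treeNet Q).Labelled fun e => ((Q e.1.2.length).tag e.2, e.1.1) where
  src_inj := by
    rintro ⟨⟨b, x⟩, e⟩ ⟨⟨b', x'⟩, e'⟩ h ht
    have h1 := (Q x.length).src_ne e
    have h2 := (Q x'.length).src_ne e'
    simp only [Prod.mk.injEq] at ht
    obtain ⟨ht, rfl⟩ := ht
    change treeEmb Q (b, x) ((Q x.length).net.src e) =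
      treeEmb Q (b, x') ((Q x'.length).net.src e') at h
    rcases hs : (Q x.length).net.src e with v | (_ | _) <;>
      rcases hs' : (Q x'.length).net.src e' with v' | (_ | _) <;>
      simp only [hs, hs', treeEmb, Sum.elim_inl, Sum.elim_inr, reduceCtorEq, ne_eq,
        not_true_eq_false] at h h1 h2
    · have hx := congrArg (fun s => s.1.2) (Sum.inr.inj h)
      simp only at hx
      subst hx
      have hv := eq_of_heq (Sigma.mk.inj (Sum.inr.inj h)).2
      rw [(Q x.length).labelled.src_inj e e' (by rw [hs, hs', hv]) ht]
    · simp only [if_false, Sum.inl.injEq] at h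
      subst h
      rw [(Q x.length).labelled.src_inj e e' (by rw [hs, hs']) ht]
  tgt_inj := by
    rintro ⟨⟨b, x⟩, e⟩ ⟨⟨b', x'⟩, e'⟩ h ht
    have h1 := (Q x.length).tgt_ne e
    have h2 := (Q x'.length).tgt_ne e'
    simp only [Prod.mk.injEq] at ht
    obtain ⟨ht, rfl⟩ := ht
    change treeEmb Q (b, x) ((Q x.length).net.tgt e) =
      treeEmb Q (b, x') ((Q x'.length).net.tgt e') at h
    rcases hs : (Q x.length).net.tgt e with v | (_ | _) <;>
      rcases hs' : (Q x'.length).net.tgt e' with v' | (_ | _) <;>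
      simp only [hs, hs', treeEmb, Sum.elim_inl, Sum.elim_inr, reduceCtorEq, ne_eq,
        not_true_eq_false] at h h1 h2
    · have hx := congrArg (fun s => s.1.2) (Sum.inr.inj h)
      simp only at hx
      subst hx
      have hv := eq_of_heq (Sigma.mk.inj (Sum.inr.inj h)).2
      rw [(Q x.length).labelled.tgt_inj e e' (by rw [hs, hs', hv]) ht]
    · simp only [if_true, Sum.inl.injEq, List.cons.injEq, true_and] at h
      subst h
      rw [(Q x.length).labelled.tgt_inj e e' (by rw [hs, hs']) ht]

theorem treeNet_conn (P : TreeV Q → Prop) (h0 : P (.inl []))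
    (hP : ∀ e, P ((treeNet Q).src e) ↔ P ((treeNet Q).tgt e)) : ∀ x, P x := by
  have key : ∀ c : Bool × List Bool, P (.inl c.2) → ∀ y, P (treeEmb Q c y) := fun c hc =>
    (Q c.2.length).conn (fun y => P (treeEmb Q c y)) hc fun e => hP ⟨c, e⟩
  have hnode : ∀ x : List Bool, P (.inl x) := by
    intro x
    induction x with
    | nil => exact h0
    | cons b x ih => exact key (b, x) ih (.inr true)
  rintro (x | ⟨c, v⟩)
  · exact hnode x
  · exact key c (hnode _) (.inl v)

/-- The lists of length `k`. -/
def level (k : ℕ) : Finset (List Bool) :=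
  (Finset.univ : Finset (List.Vector Bool k)).image List.Vector.toList

theorem mem_level {k : ℕ} {x : List Bool} : x ∈ level k ↔ x.length = k := by
  simp only [level, Finset.mem_image, Finset.mem_univ, true_and]
  exact ⟨by rintro ⟨v, rfl⟩; exact v.toList_length, fun h => ⟨⟨x, h⟩, rfl⟩⟩

theorem card_level_le (k : ℕ) : (level k).card ≤ 2 ^ k := by
  refine Finset.card_image_le.trans ?_
  rw [Finset.card_univ, card_vector, Fintype.card_bool]

theorem summable_length {f : ℕ → ℝ} (h0 : ∀ k, 0 ≤ f k)
    (hf : Summable fun k => 2 ^ k * f k) : Summable fun x : List Bool => f x.length := by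
  rw [← (Equiv.sigmaFiberEquiv (List.length : List Bool → ℕ)).summable_iff]
  have h1 : ∀ s : (Σ k : ℕ, {x : List Bool // x.length = k}),
      ((fun x : List Bool => f x.length) ∘ (Equiv.sigmaFiberEquiv List.length)) s = f s.1 := by
    rintro ⟨k, x, rfl⟩
    rfl
  rw [summable_congr h1, summable_sigma_of_nonneg fun s => h0 _]
  have hfin : ∀ k, Finite {x : List Bool // x.length = k} := fun k =>
    inferInstanceAs (Finite (List.Vector Bool k))
  refine ⟨fun k => ?_, ?_⟩
  · have := Fintype.ofFinite {x : List Bool // x.length = k}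
    exact (hasSum_fintype _).summable
  · refine hf.congr fun k => ?_
    change _ = ∑' _ : {x : List Bool // x.length = k}, f k
    rw [tsum_const, nsmul_eq_mul]
    have : Nat.card {x : List Bool // x.length = k} = 2 ^ k := by
      rw [show Nat.card {x : List Bool // x.length = k} = Nat.card (List.Vector Bool k) from rfl,
        Nat.card_eq_fintype_card, card_vector, Fintype.card_bool]
    rw [this]; push_cast; rfl

open Classical in
/-- Splitting the unit flow evenly between the two children of each node gives a flow of finite
energy on the tree of gadgets. -/
theorem treeNet_transient (ε : ℕ → ℝ) (hflow : ∀ k, (Q k).HasFlow (ε k))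
    (hε : Summable fun k => ε k / 2 ^ k) : Transient (treeNet Q).graph := by
  choose θ hθ hen using hflow
  have hε0 : ∀ k, 0 ≤ ε k := fun k =>
    (Finset.sum_nonneg fun e _ => mul_nonneg (by positivity) (sq_nonneg _)).trans (hen k)
  refine (treeNet Q).graph_transient (treeNet_labelled Q) (.inl [])
    (fun e => (1 / 2) ^ (e.1.2.length + 1) * θ _ e.2) ?_ ?_
  · intro v
    have hfin : ∀ f : TreeE Q → ℝ,
        (∀ e, (treeNet Q).src e ≠ v → (treeNet Q).tgt e ≠ v → f e = 0) → Summable f := by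
      intro f hf
      refine summable_of_hasFiniteSupport (Set.Finite.subset
        (s := {e | (treeNet Q).src e = v} ∪ {e | (treeNet Q).tgt e = v}) ?_ ?_)
      · refine Set.Finite.union ?_ ?_
        · exact Set.Finite.of_finite_image (Set.toFinite _)
            fun e he e' he' h => (treeNet_labelled Q).src_inj e e' (Eq.trans he (Eq.symm he')) h
        · exact Set.Finite.of_finite_image (Set.toFinite _)
            fun e he e' he' h => (treeNet_labelled Q).tgt_inj e e' (Eq.trans he (Eq.symm he')) h
      · intro e he
        by_contra hcon
        rw [Set.mem_union, not_or] at hcon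
        exact he (hf e hcon.1 hcon.2)
    rw [Summable.tsum_sigma' (fun c => (hasSum_fintype _).summable)
      (hfin _ fun e h1 h2 => by rw [if_neg h1, if_neg h2]; ring)]
    have h1 : ∀ c : Bool × List Bool, (∑' e : (Q c.2.length).E,
        (1 / 2) ^ (c.2.length + 1) * θ _ e * ((if (treeNet Q).src ⟨c, e⟩ = v then 1 else 0) -
          if (treeNet Q).tgt ⟨c, e⟩ = v then 1 else 0)) =
        (1 / 2) ^ (c.2.length + 1) * (if .inl c.2 = v then 1 else 0) -
          (1 / 2) ^ (c.2.length + 1) * (if .inl (c.1 :: c.2) = v then 1 else 0 : ℝ) := by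
      intro c
      rw [tsum_fintype, ← mul_sub]
      have := hθ c.2.length fun y => if treeEmb Q c y = v then 1 else 0
      rw [show ((if Sum.inl c.2 = v then 1 else 0) - (if Sum.inl (c.1 :: c.2) = v then 1 else 0)
        : ℝ) = _ from this.symm, Finset.mul_sum]
      refine Finset.sum_congr rfl fun e _ => ?_
      rw [mul_assoc]
      rfl
    refine Eq.trans (tsum_congr fun c => Eq.trans (tsum_congr fun e => ?_) (h1 c)) ?_
    · congr
    rcases v with x | v
    · have s1 : HasSum (fun c : Bool × List Bool => (1 / 2 : ℝ) ^ (c.2.length + 1) *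
          (if (Sum.inl c.2 : TreeV Q) = .inl x then 1 else 0)) ((1 / 2) ^ x.length) := by
        have : HasSum (fun c : Bool × List Bool => (1 / 2 : ℝ) ^ (c.2.length + 1) *
          (if (Sum.inl c.2 : TreeV Q) = .inl x then 1 else 0)) (∑ c ∈ {(true, x), (false, x)},
            (1 / 2 : ℝ) ^ (c.2.length + 1) *
              (if (Sum.inl c.2 : TreeV Q) = .inl x then 1 else 0)) := by
          refine hasSum_sum_of_ne_finset_zero ?_
          rintro ⟨b, y⟩ hy
          rw [if_neg, mul_zero]
          intro h
          obtain rfl : y = x := Sum.inl.inj h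
          cases b <;> simp at hy
        convert this using 1
        rw [Finset.sum_pair (by simp)]
        simp [pow_succ]
        ring
      rcases x with _ | ⟨b, y⟩
      · simpa using s1.tsum_eq
      · have s2 : HasSum (fun c : Bool × List Bool => (1 / 2 : ℝ) ^ (c.2.length + 1) *
            (if (Sum.inl (c.1 :: c.2) : TreeV Q) = .inl (b :: y) then 1 else 0))
            ((1 / 2) ^ (y.length + 1)) := by
          have := hasSum_single (f := fun c : Bool × List Bool => (1 / 2 : ℝ) ^ (c.2.length + 1) *
            (if (Sum.inl (c.1 :: c.2) : TreeV Q) = .inl (b :: y) then 1 else 0)) (b, y) (by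
              rintro ⟨b', y'⟩ hne
              simp only [Sum.inl.injEq, List.cons.injEq, mul_ite, mul_one, mul_zero, ite_eq_right_iff]
              rintro ⟨rfl, rfl⟩
              exact absurd rfl hne)
          simpa using this
        rw [(s1.sub s2).tsum_eq]
        simp
    · simp
  · rw [summable_sigma_of_nonneg fun _ => by positivity]
    refine ⟨fun c => (hasSum_fintype _).summable, ?_⟩
    have hb : Summable fun c : Bool × List Bool => ((1 / 2 : ℝ) ^ (c.2.length + 1)) ^ 2 *
        ε c.2.length := by
      have : Summable fun x : List Bool => ((1 / 2 : ℝ) ^ (x.length + 1)) ^ 2 * ε x.length := by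
        refine summable_length (f := fun k => ((1 / 2 : ℝ) ^ (k + 1)) ^ 2 * ε k)
          (fun k => mul_nonneg (by positivity) (hε0 k)) ?_
        refine (hε.mul_left (1 / 4)).congr fun k => ?_
        simp only [one_div, inv_pow]
        field_simp
        ring
      rw [summable_prod_of_nonneg fun c => mul_nonneg (by positivity) (hε0 _)]
      exact ⟨fun _ => this, (hasSum_fintype _).summable⟩
    refine Summable.of_nonneg_of_le (fun c => tsum_nonneg fun _ => by positivity) (fun c => ?_) hb
    rw [tsum_fintype]
    refine le_trans (le_of_eq ?_) (mul_le_mul_of_nonneg_left (hen c.2.length) (by positivity))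
    rw [Finset.mul_sum]
    refine Finset.sum_congr rfl fun e _ => ?_
    change ((Q c.2.length).net.len e + 1 : ℝ) * _ = _
    ring

open Classical in
/-- A transient subgraph of the tree of gadgets crosses each level with a conductance bounded
below, so it contains the minors that good conductance of a gadget forces. -/
theorem treeNet_minor {r : ℕ} (hr : 2 ≤ r)
    (hsep : ∀ δ : ℝ, 0 < δ → ∀ k₀ : ℕ, ∃ k κ, k₀ ≤ k ∧ (Q k).Sep r κ ∧ 2 ^ (k + 1) * κ ≤ δ)
    (H : (treeNet Q).graph.Subgraph) (hH : Transient H.coe) : HasCompleteMinor H.coe r := by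
  by_contra hcon
  obtain ⟨C, v₁, v₂, hC, hmain⟩ := (treeNet Q).energy_bound (treeNet_labelled Q) H hH
  let lev : TreeV Q → ℕ := Sum.elim List.length fun s => s.1.2.length + 1
  obtain ⟨k, κ, hk, hS, hκ⟩ := hsep (1 / (2 * (C + 1))) (by positivity) (max (lev v₁) (lev v₂))
  -- the absence of a minor gives a cutting function in each gadget of level `k`
  have hcut : ∀ c : Bool × List Bool, c.2.length = k → ∃ φ : (Q c.2.length).V ⊕ Bool → ℝ,
      φ (.inr false) = 1 ∧ φ (.inr true) = 0 ∧
      (∑ e, if (⟨c, e⟩ : TreeE Q) ∈ (treeNet Q).full H then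
        (φ ((Q c.2.length).net.src e) - φ ((Q c.2.length).net.tgt e)) ^ 2 /
          ((Q c.2.length).net.len e + 1) else 0) ≤ κ := by
    rintro c rfl
    rcases hS {e | (⟨c, e⟩ : TreeE Q) ∈ (treeNet Q).full H} with h | h
    · refine absurd ((treeNet Q).hasCompleteMinor_of_full H hr ?_) hcon
      refine HasCompleteMinor.lift (fun v => {.inr ⟨c, v⟩})
        (fun x _ => connected_induce_singleton _ _) ?_ ?_ hr h
      · intro x y hxy
        simpa using hxy
      · rintro x y ⟨hne, e, he, h1⟩
        refine ⟨_, rfl, _, rfl, ?_, ⟨c, e⟩, he, ?_⟩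
        · simpa using fun h => hne (by rw [h])
        · rcases h1 with ⟨h1, h2⟩ | ⟨h1, h2⟩
          · left; constructor
            · change treeEmb Q c _ = _; rw [h1]; rfl
            · change treeEmb Q c _ = _; rw [h2]; rfl
          · right; constructor
            · change treeEmb Q c _ = _; rw [h1]; rfl
            · change treeEmb Q c _ = _; rw [h2]; rfl
    · exact h
  choose! φ hφa hφb hφ using hcut
  let Φ : TreeV Q → ℝ := Sum.elim (fun x => if x.length ≤ k then 1 else 0) fun s =>
    if s.1.2.length < k then 1 else if s.1.2.length = k then φ s.1 (.inl s.2) else 0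
  have hΦ : ∀ c y, Φ (treeEmb Q c y) = if c.2.length < k then 1 else
      if c.2.length = k then φ c y else 0 := by
    rintro c (v | (_ | _))
    · rfl
    · change (if c.2.length ≤ k then (1 : ℝ) else 0) = _
      by_cases h1 : c.2.length < k
      · rw [if_pos h1, if_pos (by omega)]
      · rw [if_neg h1]
        by_cases h2 : c.2.length = k
        · rw [if_pos h2, if_pos (by omega), hφa c h2]
        · rw [if_neg h2, if_neg (by omega)]
    · change (if (c.1 :: c.2).length ≤ k then (1 : ℝ) else 0) = _
      rw [List.length_cons]
      by_cases h1 : c.2.length < k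
      · rw [if_pos h1, if_pos (by omega)]
      · rw [if_neg h1]
        by_cases h2 : c.2.length = k
        · rw [if_pos h2, if_neg (by omega), hφb c h2]
        · rw [if_neg h2, if_neg (by omega)]
  have hΦ1 : ∀ v, lev v ≤ k → Φ v = 1 := by
    rintro (x | s) h
    · exact if_pos h
    · exact if_pos h
  let L : Finset (Bool × List Bool) := Finset.univ ×ˢ (List.finite_length_le Bool k).toFinset
  have hL : ∀ c, c ∈ L ↔ c.2.length ≤ k := fun c => by simp [L]
  have hbound := hmain Φ ?_ (hΦ1 _ (by omega)) (hΦ1 _ (by omega))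
    (L.sigma fun _ => Finset.univ) ?_
  · have h1 : (∑ e ∈ L.sigma fun _ => Finset.univ, if e ∈ (treeNet Q).full H then
        (Φ ((treeNet Q).src e) - Φ ((treeNet Q).tgt e)) ^ 2 / ((treeNet Q).len e + 1) else 0) ≤
        2 ^ (k + 1) * κ := by
      rw [Finset.sum_sigma]
      have hκ0 : 0 ≤ κ := by
        refine le_trans ?_ (hφ (true, List.replicate k true) (by simp))
        exact Finset.sum_nonneg fun e _ => by split_ifs <;> positivity
      have h2 : ∀ c ∈ L, (∑ e : (Q c.2.length).E, if (⟨c, e⟩ : TreeE Q) ∈ (treeNet Q).full H then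
          (Φ ((treeNet Q).src ⟨c, e⟩) - Φ ((treeNet Q).tgt ⟨c, e⟩)) ^ 2 /
            ((treeNet Q).len ⟨c, e⟩ + 1) else 0) ≤ if c.2.length = k then κ else 0 := by
        intro c hc
        rw [hL] at hc
        have hs : ∀ e, (treeNet Q).src ⟨c, e⟩ = treeEmb Q c ((Q c.2.length).net.src e) :=
          fun _ => rfl
        have ht : ∀ e, (treeNet Q).tgt ⟨c, e⟩ = treeEmb Q c ((Q c.2.length).net.tgt e) :=
          fun _ => rfl
        simp only [hs, ht, hΦ]
        split_ifs with h3 h4 h4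
        · omega
        · simp
        · exact hφ c h4
        · omega
      refine (Finset.sum_le_sum h2).trans ?_
      rw [← Finset.sum_filter, Finset.sum_const, nsmul_eq_mul]
      refine mul_le_mul_of_nonneg_right ?_ hκ0
      have h3 : (L.filter fun c => c.2.length = k) ⊆ Finset.univ ×ˢ level k := by
        intro c hc
        simp only [Finset.mem_product, Finset.mem_univ, true_and, mem_level]
        exact (Finset.mem_filter.1 hc).2
      have h4 := Finset.card_le_card h3
      rw [Finset.card_product, Finset.card_univ, Fintype.card_bool] at h4
      have h5 := card_level_le k
      have h6 : (L.filter fun c => c.2.length = k).card ≤ 2 ^ (k + 1) := by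
        rw [pow_succ]; omega
      exact_mod_cast h6
    have h2 := mul_le_mul_of_nonneg_left (h1.trans hκ) hC
    have h3 : C * (1 / (2 * (C + 1))) < 1 := by
      rw [mul_one_div, div_lt_one (by positivity)]; linarith
    linarith
  · refine Set.Finite.subset (((List.finite_length_le Bool k).image Sum.inl).union
      ((L.finite_toSet.biUnion (t := fun c => Set.range fun v : (Q c.2.length).V => (⟨c, v⟩ :
        Σ c : Bool × List Bool, (Q c.2.length).V)) fun c _ => Set.finite_range _).image Sum.inr)) ?_
    rintro (x | ⟨c, v⟩) hne
    · refine Or.inl ⟨x, ?_, rfl⟩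
      by_contra h
      exact hne (if_neg h)
    · refine Or.inr ⟨⟨c, v⟩, ?_, rfl⟩
      simp only [Set.mem_iUnion]
      refine ⟨c, ?_, v, rfl⟩
      by_contra h
      rw [Finset.mem_coe, hL] at h
      refine hne ?_
      change Φ (treeEmb Q c (.inl v)) = 0
      rw [hΦ, if_neg (by omega), if_neg (by omega)]
  · rintro ⟨c, e⟩ hce
    have h : ¬ c.2.length ≤ k := fun h => hce (Finset.mem_sigma.2 ⟨(hL c).2 h, Finset.mem_univ _⟩)
    have : ∀ y, Φ (treeEmb Q c y) = 0 := fun y => by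
      rw [hΦ, if_neg (by omega), if_neg (by omega)]
    exact ⟨this _, this _⟩

end Tree

/-! ### Involutions with few short relations -/

/-- The action of a word on a point, the last letter acting first. -/
def act {I X : Type} (σ : I → X → X) (w : List I) (x : X) : X := w.foldr σ x

/-- Words of length at most `T` without repeated consecutive letters act differently at every
point. -/
def FreeUpTo {I X : Type} (σ : I → X → X) (T : ℕ) : Prop :=
  ∀ w w' : List I, w.IsChain (· ≠ ·) → w'.IsChain (· ≠ ·) → w.length ≤ T → w'.length ≤ T →
    ∀ x, act σ w x = act σ w' x → w = w'

/-- Reduced words of length at most `T`. -/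
abbrev RWord (I : Type) (T : ℕ) := {l : List I // l.IsChain (· ≠ ·) ∧ l.length ≤ T}

open Classical in
/-- The letter `i` acts on reduced words of length at most `T` by left multiplication in the free
product of copies of `ℤ/2`, and trivially where this would leave the ball of radius `T`. -/
noncomputable def stepWord {I : Type} {T : ℕ} (i : I) (l : RWord I T) : RWord I T :=
  if h : l.1.head? = some i then ⟨l.1.tail, l.2.1.tail, by have := l.2.2; grind⟩
  else if h' : l.1.length < T then
    ⟨i :: l.1, by
      refine List.isChain_cons.2 ⟨fun y hy => ?_, l.2.1⟩
      rintro rfl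
      exact h hy, h'⟩
  else l

theorem stepWord_stepWord {I : Type} {T : ℕ} (i : I) (l : RWord I T) :
    stepWord i (stepWord i l) = l := by
  obtain ⟨l, hl, hT⟩ := l
  by_cases h : l.head? = some i
  · obtain ⟨u, rfl⟩ : ∃ u, l = i :: u := by
      cases l with
      | nil => simp at h
      | cons a u => exact ⟨u, by simp at h; rw [h]⟩
    have h1 : stepWord i (⟨i :: u, hl, hT⟩ : RWord I T) = ⟨u, hl.tail, by grind⟩ := by
      simp [stepWord]
    have h2 : ¬ u.head? = some i := fun h2 => (List.isChain_cons.1 hl).1 i h2 rfl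
    have h3 : u.length < T := by grind
    rw [h1]
    simp [stepWord, h2, h3]
  · by_cases h' : l.length < T
    · have h1 : stepWord i (⟨l, hl, hT⟩ : RWord I T) = ⟨i :: l, by
          refine List.isChain_cons.2 ⟨fun y hy => ?_, hl⟩
          rintro rfl
          exact h hy, h'⟩ := by
        simp [stepWord, h, h']
      rw [h1]
      simp [stepWord]
    · have h1 : stepWord i (⟨l, hl, hT⟩ : RWord I T) = ⟨l, hl, hT⟩ := by
        simp [stepWord, h, h']
      rw [h1, h1]

theorem act_stepWord {I : Type} {T : ℕ} (w : List I) (hw : w.IsChain (· ≠ ·))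
    (hT : w.length ≤ T) :
    act stepWord w (⟨[], by simp, by simp⟩ : RWord I T) = ⟨w, hw, hT⟩ := by
  induction w with
  | nil => rfl
  | cons i u ih =>
    have h1 : act stepWord (i :: u) (⟨[], by simp, by simp⟩ : RWord I T) =
        stepWord i ⟨u, hw.tail, by grind⟩ := by
      rw [← ih hw.tail (by grind)]; rfl
    have h2 : ¬ u.head? = some i := fun h2 => (List.isChain_cons.1 hw).1 i h2 rfl
    have h3 : u.length < T := by grind
    rw [h1]
    simp [stepWord, h2, h3]

/-- The left regular representation of the permutation group generated by the `stepWord i` has no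
coincidences between reduced words of length at most `T`. -/
theorem exists_involutions (D T : ℕ) : ∃ (n : ℕ) (σ : Fin D → Fin (n + 1) → Fin (n + 1)),
    (∀ i y, σ i (σ i y) = y) ∧ FreeUpTo σ T := by
  classical
  have hfin : Finite (RWord (Fin D) T) := by
    have h := (List.finite_length_le (Fin D) T).subset
      (t := {l : List (Fin D) | l.IsChain (· ≠ ·) ∧ l.length ≤ T}) fun l hl => hl.2
    exact h.to_subtype
  have := Fintype.ofFinite (RWord (Fin D) T)
  let G := Equiv.Perm (RWord (Fin D) T)
  let s : Fin D → G := fun i => ⟨stepWord i, stepWord i, stepWord_stepWord i, stepWord_stepWord i⟩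
  obtain ⟨n, hn⟩ : ∃ n, Fintype.card G = n + 1 :=
    ⟨Fintype.card G - 1, by have := Fintype.card_pos (α := G); omega⟩
  let f : G ≃ Fin (n + 1) := Fintype.equivFinOfCardEq hn
  let σ : Fin D → Fin (n + 1) → Fin (n + 1) := fun i y => f (s i * f.symm y)
  have hact : ∀ w y l, f.symm (act σ w y) l = act stepWord w (f.symm y l) := by
    intro w y l
    induction w with
    | nil => rfl
    | cons i w ih =>
      change f.symm (f (s i * f.symm (act σ w y))) l = stepWord i (act stepWord w (f.symm y l))
      rw [f.symm_apply_apply, ← ih]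
      rfl
  refine ⟨n, σ, fun i y => ?_, ?_⟩
  · have hs : s i * s i = 1 := Equiv.ext (stepWord_stepWord i)
    simp only [σ, f.symm_apply_apply, ← mul_assoc, hs, one_mul, f.apply_symm_apply]
  · intro w w' hw hw' hT hT' y h
    obtain ⟨l, hl⟩ := (f.symm y).surjective ⟨[], by simp, by simp⟩
    have h1 := hact w y l
    have h2 := hact w' y l
    rw [hl, act_stepWord w hw hT] at h1
    rw [hl, act_stepWord w' hw' hT', ← h, h1] at h2
    exact congrArg Subtype.val h2

/-! ### Cells around the roots -/

section Cells
variable {n D : ℕ}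

/-- The inner vertices of a gadget: a side, a hub on that side, and a port of that hub. -/
abbrev GV (n D : ℕ) := Bool × Fin (n + 1) × Fin (D + 1)

/-- The roots, one for each hub: the root `(s, y)` stands for the port `0` of that hub. -/
abbrev Root (n : ℕ) := Bool × Fin (n + 1)

/-- The other end of the leg at a port. -/
def flip (σ : Fin (D + 1) → Fin (n + 1) → Fin (n + 1)) (u : GV n D) : GV n D :=
  (!u.1, σ u.2.2 u.2.1, u.2.2)

/-- `Reach σ A ℓ r w u`: there is a path from the root `r` to `u` made of steps `A` inside hubs and
of legs at ports satisfying `ℓ`, whose legs, read backwards, form the word `w`. -/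
inductive Reach (σ : Fin (D + 1) → Fin (n + 1) → Fin (n + 1)) (A : GV n D → GV n D → Prop)
    (ℓ : GV n D → Prop) (r : Root n) : List (Fin (D + 1)) → GV n D → Prop
  | root : Reach σ A ℓ r [] (r.1, r.2, 0)
  | hub {w u v} : Reach σ A ℓ r w u → A u v → Reach σ A ℓ r w v
  | leg {w u} : Reach σ A ℓ r w u → ℓ u → Reach σ A ℓ r (u.2.2 :: w) (flip σ u)

/-- A cost that orders pairs of a root and a word first by length, then by the root. -/
noncomputable def cost (r : Root n) (w : List (Fin (D + 1))) : ℕ :=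
  w.length * Fintype.card (Root n) + Fintype.equivFin (Root n) r

theorem cost_cons (r : Root n) (i : Fin (D + 1)) (w : List (Fin (D + 1))) :
    cost r (i :: w) = cost r w + Fintype.card (Root n) := by
  simp only [cost, List.length_cons]; ring

theorem length_le_of_cost_le {r r' : Root n} {w w' : List (Fin (D + 1))}
    (h : cost r w ≤ cost r' w') : w.length ≤ w'.length := by
  by_contra hlt
  have h1 := (Fintype.equivFin (Root n) r').2
  have h2 : (w'.length + 1) * Fintype.card (Root n) ≤ w.length * Fintype.card (Root n) :=
    Nat.mul_le_mul_right _ (by omega)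
  unfold cost at h
  rw [Nat.add_mul, one_mul] at h2
  omega

/-- `r` is the root of the cell of `u`, and `w` is the word of a shortest path from it. -/
def Best (σ : Fin (D + 1) → Fin (n + 1) → Fin (n + 1)) (A : GV n D → GV n D → Prop)
    (ℓ : GV n D → Prop) (r : Root n) (w : List (Fin (D + 1))) (u : GV n D) : Prop :=
  Reach σ A ℓ r w u ∧ ∀ r' w', Reach σ A ℓ r' w' u → cost r w ≤ cost r' w'

variable {σ : Fin (D + 1) → Fin (n + 1) → Fin (n + 1)} {A : GV n D → GV n D → Prop}
  {ℓ : GV n D → Prop}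

theorem Reach.exists_best {r : Root n} {w : List (Fin (D + 1))} {u : GV n D}
    (h : Reach σ A ℓ r w u) : ∃ r' w', Best σ A ℓ r' w' u ∧ w'.length ≤ w.length := by
  classical
  have hex : ∃ k, ∃ r w, Reach σ A ℓ r w u ∧ cost r w = k := ⟨_, r, w, h, rfl⟩
  obtain ⟨r', w', h', hk⟩ := Nat.find_spec hex
  have hmin : ∀ r'' w'', Reach σ A ℓ r'' w'' u → cost r' w' ≤ cost r'' w'' :=
    fun r'' w'' h'' => hk.trans_le (Nat.find_min' hex ⟨r'', w'', h'', rfl⟩)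
  exact ⟨r', w', ⟨h', hmin⟩, length_le_of_cost_le (hmin r w h)⟩

theorem Best.root_eq {r r' : Root n} {w w' : List (Fin (D + 1))} {u : GV n D}
    (h : Best σ A ℓ r w u) (h' : Best σ A ℓ r' w' u) : r = r' := by
  have h1 := le_antisymm (h.2 _ _ h'.1) (h'.2 _ _ h.1)
  have h2 := le_antisymm (length_le_of_cost_le h1.le) (length_le_of_cost_le h1.ge)
  unfold cost at h1
  rw [h2] at h1
  exact (Fintype.equivFin (Root n)).injective (Fin.ext (by omega))

theorem Best.length_eq {r r' : Root n} {w w' : List (Fin (D + 1))} {u : GV n D}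
    (h : Best σ A ℓ r w u) (h' : Best σ A ℓ r' w' u) : w.length = w'.length :=
  le_antisymm (length_le_of_cost_le (h.2 _ _ h'.1)) (length_le_of_cost_le (h'.2 _ _ h.1))

theorem flip_flip (hσ : ∀ i y, σ i (σ i y) = y) (u : GV n D) : flip σ (flip σ u) = u := by
  simp [flip, hσ]

theorem Reach.loc (hA : ∀ u v, A u v → u.1 = v.1 ∧ u.2.1 = v.2.1) {r : Root n}
    {w : List (Fin (D + 1))} {u : GV n D} (h : Reach σ A ℓ r w u) :
    u.1 = (not^[w.length] r.1) ∧ u.2.1 = act σ w r.2 := by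
  induction h with
  | root => exact ⟨rfl, rfl⟩
  | hub _ huv ih => exact ⟨(hA _ _ huv).1.symm.trans ih.1, (hA _ _ huv).2.symm.trans ih.2⟩
  | @leg w u _ _ ih =>
    refine ⟨?_, ?_⟩
    · rw [List.length_cons, Function.iterate_succ_apply', ← ih.1]; rfl
    · change σ u.2.2 u.2.1 = σ u.2.2 (act σ w r.2)
      rw [ih.2]

theorem best_root (hA : ∀ u v, A u v → u.1 = v.1 ∧ u.2.1 = v.2.1) (r : Root n) :
    Best σ A ℓ r [] (r.1, r.2, 0) := by
  refine ⟨.root, fun r' w' h => ?_⟩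
  cases w' with
  | nil =>
    obtain ⟨h1, h2⟩ := h.loc hA
    have : r = r' := Prod.ext h1 h2
    rw [this]
  | cons i w' =>
    rw [cost_cons]
    have := (Fintype.equivFin (Root n) r).2
    simp only [cost, List.length_nil]
    omega

theorem Best.hub (hs : ∀ u v, A u v → A v u) {r : Root n} {w : List (Fin (D + 1))} {u v : GV n D}
    (h : Best σ A ℓ r w u) (huv : A u v) : Best σ A ℓ r w v :=
  ⟨h.1.hub huv, fun _ _ h' => h.2 _ _ (h'.hub (hs _ _ huv))⟩

theorem Best.of_leg {r : Root n} {w : List (Fin (D + 1))} {p : GV n D} (hp : Reach σ A ℓ r w p)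
    (hl : ℓ p) (h : Best σ A ℓ r (p.2.2 :: w) (flip σ p)) : Best σ A ℓ r w p := by
  refine ⟨hp, fun r' w' h' => ?_⟩
  have := h.2 _ _ (h'.leg hl)
  rw [cost_cons, cost_cons] at this
  omega

theorem Reach.last_leg {r : Root n} {w : List (Fin (D + 1))} {u : GV n D}
    (h : Reach σ A ℓ r w u) : ∀ i w₀, w = i :: w₀ →
      ∃ p, Reach σ A ℓ r w₀ p ∧ ℓ p ∧ p.2.2 = i ∧ Relation.ReflTransGen A (flip σ p) u := by
  induction h with
  | root => intro i w₀ h; simp at h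
  | hub _ huv ih =>
    intro i w₀ hw
    obtain ⟨p, h1, h2, h3, h4⟩ := ih i w₀ hw
    exact ⟨p, h1, h2, h3, h4.tail huv⟩
  | leg hu hl _ =>
    intro i w₀ hw
    obtain ⟨h1, rfl⟩ := List.cons.inj hw
    exact ⟨_, hu, hl, h1, .refl⟩

theorem Best.hubs (hs : ∀ u v, A u v → A v u) {r : Root n} {w : List (Fin (D + 1))} {u v : GV n D}
    (h : Best σ A ℓ r w v) (huv : Relation.ReflTransGen A u v) : Best σ A ℓ r w u := by
  induction huv with
  | refl => exact h
  | tail _ h2 ih => exact ih (h.hub hs (hs _ _ h2))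

theorem Reach.hubs {r : Root n} {w : List (Fin (D + 1))} {u v : GV n D}
    (h : Reach σ A ℓ r w u) (huv : Relation.ReflTransGen A u v) : Reach σ A ℓ r w v := by
  induction huv with
  | refl => exact h
  | tail _ h2 ih => exact ih.hub h2

theorem Best.last_leg (hs : ∀ u v, A u v → A v u) {r : Root n} {i : Fin (D + 1)}
    {w : List (Fin (D + 1))} {u : GV n D} (h : Best σ A ℓ r (i :: w) u) :
    ∃ p, Best σ A ℓ r w p ∧ ℓ p ∧ p.2.2 = i ∧ Best σ A ℓ r (i :: w) (flip σ p) ∧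
      Relation.ReflTransGen A (flip σ p) u := by
  obtain ⟨p, h1, h2, rfl, h4⟩ := h.1.last_leg i w rfl
  have h5 := h.hubs hs h4
  exact ⟨p, Best.of_leg h1 h2 h5, h2, rfl, h5, h4⟩

theorem Best.suffix (hs : ∀ u v, A u v → A v u) {r : Root n} {i : Fin (D + 1)}
    {w₀ : List (Fin (D + 1))} (w : List (Fin (D + 1))) :
    ∀ {u : GV n D}, Best σ A ℓ r w u → (i :: w₀) <:+ w →
      ∃ p, Best σ A ℓ r w₀ p ∧ p.2.2 = i ∧ Best σ A ℓ r (i :: w₀) (flip σ p) := by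
  induction w with
  | nil => intro u _ h; simp at h
  | cons j w ih =>
    intro u h hsuf
    rcases List.suffix_cons_iff.1 hsuf with heq | hsuf
    · rw [← heq] at h
      obtain ⟨p, h1, _, h3, h4, _⟩ := h.last_leg hs
      exact ⟨p, h1, h3, h4⟩
    · obtain ⟨p, h1, _⟩ := h.last_leg hs
      exact ih h1 hsuf

/-- A word leads from a given root into a single hub, so vertices reached by the same word coincide
if they are the same port of their hub. -/
theorem eq_of_loc (hA : ∀ u v, A u v → u.1 = v.1 ∧ u.2.1 = v.2.1) {r : Root n}
    {w : List (Fin (D + 1))} {u v : GV n D} (hu : Reach σ A ℓ r w u) (hv : Reach σ A ℓ r w v)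
    (h : u.2.2 = v.2.2) : u = v := by
  obtain ⟨h1, h2⟩ := hu.loc hA
  obtain ⟨h3, h4⟩ := hv.loc hA
  exact Prod.ext (h1.trans h3.symm) (Prod.ext (h2.trans h4.symm) h)

/-- If the word of `u` starts with the port of `u`, the leg at `u` leads back into the cell. -/
theorem Best.flip_of_head (hs : ∀ u v, A u v → A v u)
    (hA : ∀ u v, A u v → u.1 = v.1 ∧ u.2.1 = v.2.1) (hσ : ∀ i y, σ i (σ i y) = y) {r : Root n}
    {w : List (Fin (D + 1))} {u : GV n D} (h : Best σ A ℓ r (u.2.2 :: w) u) :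
    Best σ A ℓ r w (flip σ u) := by
  obtain ⟨p, h1, _, h3, h4, _⟩ := h.last_leg hs
  have h5 : flip σ p = u := eq_of_loc hA h4.1 h.1 h3
  rw [← h5, flip_flip hσ]
  exact h1

theorem Best.reduced (hs : ∀ u v, A u v → A v u)
    (hA : ∀ u v, A u v → u.1 = v.1 ∧ u.2.1 = v.2.1) (hσ : ∀ i y, σ i (σ i y) = y) {r : Root n}
    (w : List (Fin (D + 1))) : ∀ {u : GV n D}, Best σ A ℓ r w u → w.IsChain (· ≠ ·) := by
  induction w with
  | nil => intro u _; simp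
  | cons i w ih =>
    intro u h
    obtain ⟨p, h1, hl, rfl, _, h5⟩ := h.last_leg hs
    refine List.isChain_cons.2 ⟨?_, ih h1⟩
    rintro _ hj rfl
    obtain ⟨w', rfl⟩ : ∃ w', w = p.2.2 :: w' := by
      cases w with
      | nil => simp at hj
      | cons a w' => exact ⟨w', by simp at hj; rw [hj]⟩
    have h6 := (h1.flip_of_head hs hA hσ).1.hubs h5
    have h7 := length_le_of_cost_le (h.2 _ _ h6)
    simp at h7

theorem act_append {I X : Type} (σ : I → X → X) (w w' : List I) (x : X) :
    act σ (w ++ w') x = act σ w (act σ w' x) := by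
  simp [act]

theorem act_reverse {I X : Type} {σ : I → X → X} (hσ : ∀ i y, σ i (σ i y) = y) (w : List I)
    (x : X) : act σ w.reverse (act σ w x) = x := by
  induction w with
  | nil => rfl
  | cons i w ih =>
    rw [List.reverse_cons, act_append]
    change act σ w.reverse (σ i (σ i (act σ w x))) = x
    rw [hσ, ih]

/-- The word of a path from the root of the cell of `flip u` to the root of the cell of `u` through
the leg at `u` is reduced, if the two cells differ. -/
theorem crossing_word (hs : ∀ u v, A u v → A v u)
    (hA : ∀ u v, A u v → u.1 = v.1 ∧ u.2.1 = v.2.1) (hσ : ∀ i y, σ i (σ i y) = y)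
    {r r' : Root n} (hr : r ≠ r') {w w' : List (Fin (D + 1))} {u : GV n D}
    (h : Best σ A ℓ r w u) (h' : Best σ A ℓ r' w' (flip σ u)) :
    (w.reverse ++ u.2.2 :: w').IsChain (· ≠ ·) ∧
      act σ (w.reverse ++ u.2.2 :: w') r'.2 = r.2 := by
  constructor
  · refine List.isChain_append.2 ⟨?_, List.isChain_cons.2 ⟨?_, h'.reduced hs hA hσ⟩, ?_⟩
    · rw [List.isChain_reverse]
      exact (h.reduced hs hA hσ).imp fun _ _ h => h.symm
    · rintro _ hj rfl
      obtain ⟨w₀, rfl⟩ : ∃ w₀, w' = u.2.2 :: w₀ := by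
        cases w' with
        | nil => simp at hj
        | cons a w₀ => exact ⟨w₀, by simp at hj; rw [hj]⟩
      have := Best.flip_of_head hs hA hσ (u := flip σ u) h'
      rw [flip_flip hσ] at this
      exact hr (h.root_eq this)
    · rintro _ hj _ hk rfl
      simp only [List.head?_cons, Option.mem_def, Option.some.injEq] at hk
      subst hk
      rw [List.getLast?_reverse] at hj
      obtain ⟨w₀, rfl⟩ : ∃ w₀, w = u.2.2 :: w₀ := by
        cases w with
        | nil => simp at hj
        | cons a w₀ => exact ⟨w₀, by simp at hj; rw [hj]⟩
      exact hr ((h.flip_of_head hs hA hσ).root_eq h')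
  · rw [act_append]
    have h1 := (h'.1.loc hA).2
    have h2 := (h.1.loc hA).2
    change act σ w.reverse (σ u.2.2 (act σ w' r'.2)) = r.2
    rw [← h1]
    change act σ w.reverse (σ u.2.2 (σ u.2.2 u.2.1)) = r.2
    rw [hσ, h2, act_reverse hσ]

/-- At most one leg joins two given cells, since two of them would produce a short relation. -/
theorem crossing_unique (hs : ∀ u v, A u v → A v u)
    (hA : ∀ u v, A u v → u.1 = v.1 ∧ u.2.1 = v.2.1) (hσ : ∀ i y, σ i (σ i y) = y) {t : ℕ}
    (hfree : FreeUpTo σ (2 * t + 1)) {r r' : Root n} (hr : r ≠ r')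
    {w₁ w₁' w₂ w₂' : List (Fin (D + 1))} {u₁ u₂ : GV n D}
    (h₁ : Best σ A ℓ r w₁ u₁) (h₁' : Best σ A ℓ r' w₁' (flip σ u₁))
    (h₂ : Best σ A ℓ r w₂ u₂) (h₂' : Best σ A ℓ r' w₂' (flip σ u₂))
    (l₁ : w₁.length ≤ t) (l₁' : w₁'.length ≤ t) (l₂ : w₂.length ≤ t) (l₂' : w₂'.length ≤ t) :
    u₁ = u₂ := by
  obtain ⟨c₁, a₁⟩ := crossing_word hs hA hσ hr h₁ h₁'
  obtain ⟨c₂, a₂⟩ := crossing_word hs hA hσ hr h₂ h₂'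
  have heq := hfree _ _ c₁ c₂ (by simp; omega) (by simp; omega) _ (a₁.trans a₂.symm)
  have aux : ∀ {w₁ w₁' w₂ w₂' : List (Fin (D + 1))} {u₁ u₂ : GV n D},
      Best σ A ℓ r w₁ u₁ → Best σ A ℓ r' w₁' (flip σ u₁) → Best σ A ℓ r' w₂' (flip σ u₂) →
      w₁.reverse ++ u₁.2.2 :: w₁' = w₂.reverse ++ u₂.2.2 :: w₂' →
      ¬ w₁'.length < w₂'.length := by
    intro w₁ w₁' w₂ w₂' u₁ u₂ h₁ h₁' h₂' heq hlt
    have hsuf : (u₁.2.2 :: w₁') <:+ w₂' := by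
      have s1 : (u₁.2.2 :: w₁') <:+ w₁.reverse ++ u₁.2.2 :: w₁' := List.suffix_append _ _
      have s2 : w₂' <:+ w₁.reverse ++ u₁.2.2 :: w₁' := by
        rw [heq]
        exact (List.suffix_cons _ _).trans (List.suffix_append _ _)
      exact List.suffix_of_suffix_length_le s1 s2 (by simpa using hlt)
    obtain ⟨p, hp1, hp2, hp3⟩ := h₂'.suffix hs w₂' hsuf
    have hp : p = flip σ u₁ := eq_of_loc hA hp1.1 h₁'.1 hp2
    rw [hp, flip_flip hσ] at hp3
    exact hr (h₁.root_eq hp3)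
  have n1 := aux h₁ h₁' h₂' heq
  have n2 := aux h₂ h₂' h₁' heq.symm
  obtain ⟨e1, e2⟩ := List.append_inj' heq (by simp; omega)
  obtain ⟨e3, e4⟩ := List.cons.inj e2
  obtain rfl := List.reverse_injective e1
  exact eq_of_loc hA h₁.1 h₂.1 e3

end Cells

section Cells
variable {n D : ℕ} {σ : Fin (D + 1) → Fin (n + 1) → Fin (n + 1)} {A : GV n D → GV n D → Prop}
  {ℓ : GV n D → Prop}

/-- The cell of radius `t` around the root `r`. -/
def cell (σ : Fin (D + 1) → Fin (n + 1) → Fin (n + 1)) (A : GV n D → GV n D → Prop)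
    (ℓ : GV n D → Prop) (t : ℕ) (r : Root n) : Set (GV n D) :=
  {u | ∃ w, w.length ≤ t ∧ Best σ A ℓ r w u}

theorem cell_disjoint (t : ℕ) {r r' : Root n} (h : r ≠ r') :
    Disjoint (cell σ A ℓ t r) (cell σ A ℓ t r') := by
  rw [Set.disjoint_left]
  rintro u ⟨w, _, hw⟩ ⟨w', _, hw'⟩
  exact h (hw.root_eq hw')

theorem cell_connected (hs : ∀ u v, A u v → A v u)
    (hA : ∀ u v, A u v → u.1 = v.1 ∧ u.2.1 = v.2.1) {B : SimpleGraph (GV n D)}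
    (hAB : ∀ u v, A u v → B.Adj u v) (hlB : ∀ u, ℓ u → B.Adj u (flip σ u)) (t : ℕ) (r : Root n) :
    (B.induce (cell σ A ℓ t r)).Connected := by
  have hroot : ((r.1, r.2, 0) : GV n D) ∈ cell σ A ℓ t r := ⟨[], by simp, best_root hA r⟩
  have key : ∀ w u, Reach σ A ℓ r w u → ∀ hw : w.length ≤ t, ∀ hb : Best σ A ℓ r w u,
      (B.induce (cell σ A ℓ t r)).Reachable ⟨_, hroot⟩ ⟨u, w, hw, hb⟩ := by
    intro w u h
    induction h with
    | root => intro _ _; exact SimpleGraph.Reachable.refl _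
    | hub _ huv ih =>
      intro hw hb
      refine (ih hw (hb.hub hs (hs _ _ huv))).trans (SimpleGraph.Adj.reachable ?_)
      exact hAB _ _ huv
    | leg hu hl ih =>
      intro hw hb
      refine (ih (by simp at hw; omega) (Best.of_leg hu hl hb)).trans
        (SimpleGraph.Adj.reachable ?_)
      exact hlB _ hl
  have key' : ∀ u : cell σ A ℓ t r, (B.induce (cell σ A ℓ t r)).Reachable ⟨_, hroot⟩ u := by
    rintro ⟨u, w, hw, hb⟩
    exact key w u hb.1 hw hb
  have : Nonempty (cell σ A ℓ t r) := ⟨⟨_, hroot⟩⟩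
  exact ⟨fun u v => (key' u).symm.trans (key' v)⟩

/-- The graph of cells: two cells are adjacent if a leg joins them. -/
def cellGraph (σ : Fin (D + 1) → Fin (n + 1) → Fin (n + 1)) (A : GV n D → GV n D → Prop)
    (ℓ : GV n D → Prop) (t : ℕ) : SimpleGraph (Root n) where
  Adj r r' := r ≠ r' ∧ ∃ u, ℓ u ∧ ((u ∈ cell σ A ℓ t r ∧ flip σ u ∈ cell σ A ℓ t r') ∨
    (u ∈ cell σ A ℓ t r' ∧ flip σ u ∈ cell σ A ℓ t r))
  symm := ⟨fun _ _ h => ⟨h.1.symm, h.2.imp fun _ hu => ⟨hu.1, hu.2.symm⟩⟩⟩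
  loopless := ⟨fun _ h => h.1 rfl⟩

open Classical in
/-- The potential decreases linearly with the distance to the root in the cells around the roots of
the entrance side, and vanishes elsewhere. -/
noncomputable def pot (σ : Fin (D + 1) → Fin (n + 1) → Fin (n + 1)) (A : GV n D → GV n D → Prop)
    (ℓ : GV n D → Prop) (t : ℕ) (u : GV n D) : ℝ :=
  if h : ∃ x : Root n × List (Fin (D + 1)), Best σ A ℓ x.1 x.2 u ∧ x.1.1 = false ∧ x.2.length ≤ t
    then 1 - (h.choose.2.length : ℝ) / t else 0

theorem pot_eq {t : ℕ} {r : Root n} {w : List (Fin (D + 1))} {u : GV n D}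
    (h : Best σ A ℓ r w u) (hr : r.1 = false) (hw : w.length ≤ t) :
    pot σ A ℓ t u = 1 - (w.length : ℝ) / t := by
  have hex : ∃ x : Root n × List (Fin (D + 1)),
      Best σ A ℓ x.1 x.2 u ∧ x.1.1 = false ∧ x.2.length ≤ t := ⟨(r, w), h, hr, hw⟩
  rw [pot, dif_pos hex, hex.choose_spec.1.length_eq h]

theorem pot_eq_zero {t : ℕ} {r : Root n} {w : List (Fin (D + 1))} {u : GV n D}
    (h : Best σ A ℓ r w u) (hr : r.1 = true ∨ t ≤ w.length) (ht : 1 ≤ t) : pot σ A ℓ t u = 0 := by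
  unfold pot
  split_ifs with hex
  · obtain ⟨h1, h2, h3⟩ := hex.choose_spec
    rcases hr with hr | hr
    · rw [h1.root_eq h, hr] at h2
      cases h2
    · rw [h1.length_eq h] at h3 ⊢
      rw [le_antisymm h3 hr, div_self (by positivity), sub_self]
  · rfl

theorem pot_eq_zero' {t : ℕ} {u : GV n D} (h : ¬ ∃ r w, Best σ A ℓ r w u) :
    pot σ A ℓ t u = 0 := by
  unfold pot
  rw [dif_neg]
  rintro ⟨x, hx, _⟩
  exact h ⟨_, _, hx⟩

theorem pot_mem {t : ℕ} (u : GV n D) : 0 ≤ pot σ A ℓ t u ∧ pot σ A ℓ t u ≤ 1 := by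
  unfold pot
  split_ifs with hex
  · obtain ⟨_, _, h3⟩ := hex.choose_spec
    have h4 : (hex.choose.2.length : ℝ) / t ≤ 1 :=
      div_le_one_of_le₀ (by exact_mod_cast h3) (by positivity)
    have h5 : 0 ≤ (hex.choose.2.length : ℝ) / t := by positivity
    constructor <;> linarith
  · simp

/-- Except on legs between different cells, the potential changes by at most `1 / t`. -/
theorem pot_flip (hσ : ∀ i y, σ i (σ i y) = y) (hl : ∀ u, ℓ u → ℓ (flip σ u)) {t : ℕ} (ht : 1 ≤ t)
    {u : GV n D} (hu : ℓ u)
    (hcross : ¬ ∃ r r', r ≠ r' ∧ u ∈ cell σ A ℓ t r ∧ flip σ u ∈ cell σ A ℓ t r') :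
    (pot σ A ℓ t u - pot σ A ℓ t (flip σ u)) ^ 2 ≤ 1 / (t : ℝ) ^ 2 := by
  have htpos : (0 : ℝ) < t := by exact_mod_cast ht
  by_cases hex : ∃ r w, Best σ A ℓ r w u
  · obtain ⟨r, w, hw⟩ := hex
    obtain ⟨r', w', hw', hlen⟩ := (hw.1.leg hu).exists_best
    have hback := hw'.1.leg (hl u hu)
    rw [flip_flip hσ] at hback
    have hlen' := length_le_of_cost_le (hw.2 _ _ hback)
    simp only [List.length_cons] at hlen hlen'
    by_cases h1 : w.length ≤ t
    · by_cases h2 : w'.length ≤ t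
      · obtain rfl : r = r' := by
          by_contra hne
          exact hcross ⟨r, r', hne, ⟨w, h1, hw⟩, ⟨w', h2, hw'⟩⟩
        rcases hr : r.1 with _ | _
        · rw [pot_eq hw hr h1, pot_eq hw' hr h2]
          have h3 : (w.length : ℝ) ≤ w'.length + 1 := by exact_mod_cast hlen'
          have h4 : (w'.length : ℝ) ≤ w.length + 1 := by exact_mod_cast hlen
          have h5 : (1 - (w.length : ℝ) / t - (1 - (w'.length : ℝ) / t)) ^ 2 =
              ((w'.length : ℝ) - w.length) ^ 2 / (t : ℝ) ^ 2 := by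
            field_simp
            ring
          rw [h5]
          refine div_le_div_of_nonneg_right ?_ (by positivity)
          nlinarith
        · rw [pot_eq_zero hw (Or.inl hr) ht, pot_eq_zero hw' (Or.inl hr) ht]
          simp
      · rw [pot_eq_zero hw (Or.inr (by omega)) ht, pot_eq_zero hw' (Or.inr (by omega)) ht]
        simp
    · rw [pot_eq_zero hw (Or.inr (by omega)) ht, pot_eq_zero hw' (Or.inr (by omega)) ht]
      simp
  · rw [pot_eq_zero' hex, pot_eq_zero']
    · simp
    · rintro ⟨r, w, h⟩
      have hback := h.1.leg (hl u hu)
      rw [flip_flip hσ] at hback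
      obtain ⟨r', w', h', _⟩ := hback.exists_best
      exact hex ⟨r', w', h'⟩

open Classical in
/-- Either the cells have so many connections that they form a `K^r` minor, or few legs join
different cells and the potential has small energy. -/
theorem minor_or_potential (hs : ∀ u v, A u v → A v u)
    (hA : ∀ u v, A u v → u.1 = v.1 ∧ u.2.1 = v.2.1) (hσ : ∀ i y, σ i (σ i y) = y)
    (hl : ∀ u, ℓ u → ℓ (flip σ u)) {t : ℕ} (ht : 1 ≤ t) (hfree : FreeUpTo σ (2 * t + 1))
    {B : SimpleGraph (GV n D)} (hAB : ∀ u v, A u v → B.Adj u v)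
    (hlB : ∀ u, ℓ u → B.Adj u (flip σ u)) {r : ℕ} (hr : 2 ≤ r) :
    HasCompleteMinor B r ∨ ∃ (f : GV n D → ℝ) (X : Finset (Fin (n + 1) × Fin (D + 1))),
      (∀ y, f (false, y, 0) = 1) ∧ (∀ y, f (true, y, 0) = 0) ∧ (∀ u v, A u v → f u = f v) ∧
      X.card ≤ 2 ^ r * (2 * (n + 1)) ∧
      ∀ x, ℓ (false, x) → (f (false, x) - f (flip σ (false, x))) ^ 2 ≤
        (if x ∈ X then 1 else 0) + 1 / (t : ℝ) ^ 2 := by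
  by_cases hm : HasCompleteMinor (cellGraph σ A ℓ t) r
  · left
    refine HasCompleteMinor.lift (cell σ A ℓ t) (fun x _ => cell_connected hs hA hAB hlB t x)
      (fun x y h => cell_disjoint t h) ?_ hr hm
    rintro x y ⟨_, u, hu, ⟨h1, h2⟩ | ⟨h1, h2⟩⟩
    · exact ⟨_, h1, _, h2, hlB u hu⟩
    · exact ⟨_, h2, _, h1, (hlB u hu).symm⟩
  right
  let X : Finset (Fin (n + 1) × Fin (D + 1)) := Finset.univ.filter fun x => ℓ (false, x) ∧
    ∃ r r', r ≠ r' ∧ (false, x) ∈ cell σ A ℓ t r ∧ flip σ (false, x) ∈ cell σ A ℓ t r'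
  refine ⟨pot σ A ℓ t, X, ?_, ?_, ?_, ?_, ?_⟩
  · intro y
    rw [pot_eq (best_root hA (false, y)) rfl (by simp)]
    simp
  · intro y
    exact pot_eq_zero (best_root hA (true, y)) (Or.inl rfl) ht
  · intro u v huv
    by_cases hex : ∃ r w, Best σ A ℓ r w u
    · obtain ⟨r, w, h⟩ := hex
      have h' := h.hub hs huv
      rcases hr : r.1 with _ | _
      · by_cases hw : w.length ≤ t
        · rw [pot_eq h hr hw, pot_eq h' hr hw]
        · rw [pot_eq_zero h (Or.inr (by omega)) ht, pot_eq_zero h' (Or.inr (by omega)) ht]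
      · rw [pot_eq_zero h (Or.inl hr) ht, pot_eq_zero h' (Or.inl hr) ht]
    · rw [pot_eq_zero' hex, pot_eq_zero']
      rintro ⟨r, w, h⟩
      exact hex ⟨r, w, h.hub hs (hs _ _ huv)⟩
  · have hd : dartCount (cellGraph σ A ℓ t) < 2 ^ r * Fintype.card (Root n) := by
      by_contra hcon
      exact hm (mader r _ (not_lt.1 hcon))
    have hcard : Fintype.card (Root n) = 2 * (n + 1) := by simp
    rw [hcard] at hd
    refine le_trans ?_ hd.le
    have hX : ∀ x ∈ X, ∃ p : Root n × Root n, p.1 ≠ p.2 ∧ ℓ (false, x) ∧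
        (false, x) ∈ cell σ A ℓ t p.1 ∧ flip σ (false, x) ∈ cell σ A ℓ t p.2 := by
      intro x hx
      obtain ⟨h1, r, r', h2, h3, h4⟩ := (Finset.mem_filter.1 hx).2
      exact ⟨(r, r'), h2, h1, h3, h4⟩
    choose! g hg1 hg2 hg3 hg4 using hX
    refine Finset.card_le_card_of_injOn g ?_ ?_
    · intro x hx
      simp only [Finset.coe_filter, Finset.mem_univ, true_and]
      exact ⟨hg1 x hx, _, hg2 x hx, Or.inl ⟨hg3 x hx, hg4 x hx⟩⟩
    · intro x hx x' hx' hxx'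
      obtain ⟨w₁, l₁, b₁⟩ := hg3 x hx
      obtain ⟨w₁', l₁', b₁'⟩ := hg4 x hx
      obtain ⟨w₂, l₂, b₂⟩ := hg3 x' hx'
      obtain ⟨w₂', l₂', b₂'⟩ := hg4 x' hx'
      rw [← hxx'] at b₂ b₂'
      exact congrArg Prod.snd
        (crossing_unique hs hA hσ hfree (hg1 x hx) b₁ b₁' b₂ b₂' l₁ l₁' l₂ l₂')
  · intro x hx
    by_cases hxX : x ∈ X
    · rw [if_pos hxX]
      have h1 := pot_mem (σ := σ) (A := A) (ℓ := ℓ) (t := t) (false, x)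
      have h2 := pot_mem (σ := σ) (A := A) (ℓ := ℓ) (t := t) (flip σ (false, x))
      have h3 : (0 : ℝ) ≤ 1 / (t : ℝ) ^ 2 := by positivity
      nlinarith
    · rw [if_neg hxX, zero_add]
      refine pot_flip hσ hl ht hx fun h => hxX ?_
      exact Finset.mem_filter.2 ⟨Finset.mem_univ _, hx, h⟩

end Cells

/-! ### The gadgets -/

section Gadget
variable {n D : ℕ}

/-- The edges of a gadget other than legs: the edges of the hubs, which are paths through the ports
of a hub; the edges of the two buses, which are paths through the ports `0` of the hubs of one
side; and the two edges at the terminals. -/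
abbrev FixedEdge (n D : ℕ) := (Bool × Fin (n + 1) × Fin D) ⊕ (Bool × Fin n) ⊕ Bool

/-- The legs of a gadget, named after their ports on the side `false`. -/
abbrev Leg (n D : ℕ) := Fin (n + 1) × Fin (D + 1)

/-- The source of an edge that is not a leg. -/
def fixedSrc : FixedEdge n D → GV n D ⊕ Bool
  | .inl (s, y, i) => .inl (s, y, i.castSucc)
  | .inr (.inl (s, y)) => .inl (s, y.castSucc, 0)
  | .inr (.inr false) => .inr false
  | .inr (.inr true) => .inl (true, 0, 0)

/-- The target of an edge that is not a leg. -/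
def fixedTgt : FixedEdge n D → GV n D ⊕ Bool
  | .inl (s, y, i) => .inl (s, y, i.succ)
  | .inr (.inl (s, y)) => .inl (s, y.succ, 0)
  | .inr (.inr false) => .inl (false, 0, 0)
  | .inr (.inr true) => .inr true

/-- The edges that are not legs join each port to the terminal of its side. -/
theorem spine {R : GV n D ⊕ Bool → GV n D ⊕ Bool → Prop} (hR : Equivalence R)
    (h : ∀ e : FixedEdge n D, R (fixedSrc e) (fixedTgt e)) (y : Fin (n + 1)) (i : Fin (D + 1)) :
    R (.inr false) (.inl (false, y, i)) ∧ R (.inl (true, y, i)) (.inr true) := by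
  have h1 : ∀ s y, R (.inl (s, 0, 0)) (.inl (s, y, 0)) := by
    intro s y
    induction y using Fin.induction with
    | zero => exact hR.refl _
    | succ y ih => exact hR.trans ih (h (.inr (.inl (s, y))))
  have h2 : ∀ s y i, R (.inl (s, 0, 0)) (.inl (s, y, i)) := by
    intro s y i
    induction i using Fin.induction with
    | zero => exact h1 s y
    | succ i ih => exact hR.trans ih (h (.inl (s, y, i)))
  exact ⟨hR.trans (h (.inr (.inr false))) (h2 _ _ _),
    hR.trans (hR.symm (h2 _ _ _)) (h (.inr (.inr true)))⟩

variable (σ : Fin (D + 1) → Fin (n + 1) → Fin (n + 1))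

/-- The net of a gadget: the leg `(y, i)` joins the port `i` of the hub `y` on the side `false` to
the port `i` of the hub `σ i y` on the side `true`. Legs have `q` interior vertices. -/
def gadNet (q : ℕ) (hq : 2 ≤ q) : Net (GV n D ⊕ Bool) (FixedEdge n D ⊕ Leg n D) where
  src := Sum.elim fixedSrc fun x => .inl (false, x)
  tgt := Sum.elim fixedTgt fun x => .inl (true, σ x.2 x.1, x.2)
  len := Sum.elim (fun _ => 2) fun _ => q
  two_le := by rintro (e | x) <;> simp [hq]

/-- The labels of the edges of a gadget, by type. -/
def gadTag : FixedEdge n D ⊕ Leg n D → Fin 4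
  | .inl (.inl _) => 0
  | .inl (.inr (.inl _)) => 1
  | .inl (.inr (.inr _)) => 2
  | .inr _ => 3

variable {σ}

/-- The gadget with hubs `Fin (n + 1)` on each side, attached by the involutions `σ`. -/
def gadget (hσ : ∀ i y, σ i (σ i y) = y) (q : ℕ) (hq : 2 ≤ q) : Gad where
  V := GV n D
  E := FixedEdge n D ⊕ Leg n D
  finV := inferInstance
  finE := inferInstance
  net := gadNet σ q hq
  tag := gadTag
  labelled := by
    constructor
    · rintro ((⟨s, y, i⟩ | ⟨s, y⟩ | (_ | _)) | ⟨y, i⟩)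
        ((⟨s', y', i'⟩ | ⟨s', y'⟩ | (_ | _)) | ⟨y', i'⟩) h h' <;> simp_all [gadNet, gadTag, fixedSrc]
    · rintro ((⟨s, y, i⟩ | ⟨s, y⟩ | (_ | _)) | ⟨y, i⟩)
        ((⟨s', y', i'⟩ | ⟨s', y'⟩ | (_ | _)) | ⟨y', i'⟩) h h' <;> simp_all [gadNet, gadTag, fixedTgt]
      obtain ⟨h1, rfl⟩ := h
      rw [← hσ i y, ← hσ i y', h1]
  src_ne := by
    rintro ((⟨s, y, i⟩ | ⟨s, y⟩ | (_ | _)) | ⟨y, i⟩) <;> simp [gadNet, fixedSrc]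
  tgt_ne := by
    rintro ((⟨s, y, i⟩ | ⟨s, y⟩ | (_ | _)) | ⟨y, i⟩) <;> simp [gadNet, fixedTgt]
  conn := by
    intro P h0 hP
    have hsp := spine (n := n) (D := D) (R := fun u v => (P u ↔ P v))
      ⟨fun _ => Iff.rfl, Iff.symm, Iff.trans⟩ fun e => hP (.inl e)
    have hL : ∀ y i, P (.inl (false, y, i)) := fun y i => (hsp y i).1.1 h0
    have hT : ∀ y i, P (.inl (true, y, i)) := by
      intro y i
      have h := (hP (.inr (σ i y, i))).1 (hL _ _)
      simpa [gadNet, hσ] using h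
    rintro (⟨_ | _, y, i⟩ | _ | _)
    · exact hL y i
    · exact hT y i
    · exact h0
    · exact (hsp 0 0).2.1 (hT 0 0)

/-- The unit flow that uses all legs equally. The energy outside the legs does not depend on the
length of the legs. -/
theorem gadget_hasFlow (hσ : ∀ i y, σ i (σ i y) = y) : ∃ K : ℝ, ∀ (q : ℕ) (hq : 2 ≤ q),
    (gadget hσ q hq).HasFlow (K + (q + 1) / ((n + 1) * (D + 1) : ℕ)) := by
  have hsp := spine (n := n) (D := D)
    (R := fun u v => ∃ ξ : FixedEdge n D → ℝ, ∀ g : GV n D ⊕ Bool → ℝ,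
      ∑ e, ξ e * (g (fixedSrc e) - g (fixedTgt e)) = g u - g v) ⟨?_, ?_, ?_⟩ ?_
  rotate_left
  · exact fun u => ⟨0, by simp⟩
  · rintro u v ⟨ξ, h⟩
    exact ⟨-ξ, fun g => by simp [h g]⟩
  · rintro u v w ⟨ξ, h⟩ ⟨ξ', h'⟩
    exact ⟨ξ + ξ', fun g => by simp [add_mul, Finset.sum_add_distrib, h g, h' g]⟩
  · classical
    exact fun e => ⟨Pi.single e 1, fun g => by simp [Pi.single_apply]⟩
  choose ξ hξ using fun y i => (hsp y i).1
  choose ξ' hξ' using fun y i => (hsp y i).2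
  set N : ℕ := (n + 1) * (D + 1) with hN
  have hN0 : (N : ℝ) ≠ 0 := by rw [hN]; positivity
  have hcard : (Finset.univ : Finset (Leg n D)).card = N := by simp [hN]
  let η : FixedEdge n D → ℝ := fun e =>
    ∑ x : Leg n D, (N : ℝ)⁻¹ * (ξ x.1 x.2 e + ξ' (σ x.2 x.1) x.2 e)
  refine ⟨∑ e, 3 * η e ^ 2, fun q hq => ⟨Sum.elim η fun _ => (N : ℝ)⁻¹, fun g => ?_, ?_⟩⟩
  · change GV n D ⊕ Bool → ℝ at g
    change ∑ e : FixedEdge n D ⊕ Leg n D, Sum.elim η (fun _ => (N : ℝ)⁻¹) e *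
      (g ((gadNet σ q hq).src e) - g ((gadNet σ q hq).tgt e)) = g (.inr false) - g (.inr true)
    rw [Fintype.sum_sum_type]
    simp only [gadNet, Sum.elim_inl, Sum.elim_inr, η]
    simp only [Finset.sum_mul]
    rw [Finset.sum_comm, ← Finset.sum_add_distrib]
    have h : ∀ x : Leg n D, (∑ e, (N : ℝ)⁻¹ * (ξ x.1 x.2 e + ξ' (σ x.2 x.1) x.2 e) *
        (g (fixedSrc e) - g (fixedTgt e))) + (N : ℝ)⁻¹ *
          (g (.inl (false, x)) - g (.inl (true, σ x.2 x.1, x.2))) =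
        (N : ℝ)⁻¹ * (g (.inr false) - g (.inr true)) := by
      intro x
      have h1 := hξ x.1 x.2 g
      have h2 := hξ' (σ x.2 x.1) x.2 g
      have h3 : (∑ e, (N : ℝ)⁻¹ * (ξ x.1 x.2 e + ξ' (σ x.2 x.1) x.2 e) *
          (g (fixedSrc e) - g (fixedTgt e))) = (N : ℝ)⁻¹ *
          (∑ e, ξ x.1 x.2 e * (g (fixedSrc e) - g (fixedTgt e)) +
            ∑ e, ξ' (σ x.2 x.1) x.2 e * (g (fixedSrc e) - g (fixedTgt e))) := by
        rw [← Finset.sum_add_distrib, Finset.mul_sum]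
        exact Finset.sum_congr rfl fun e _ => by ring
      rw [h3, h1, h2]
      simp only [Prod.mk.eta]
      ring
    rw [Finset.sum_congr rfl fun x _ => h x, Finset.sum_const, hcard, nsmul_eq_mul]
    field_simp
  · change ∑ e : FixedEdge n D ⊕ Leg n D, _ ≤ _
    rw [Fintype.sum_sum_type]
    simp only [gadget, gadNet, Sum.elim_inl, Sum.elim_inr]
    rw [Finset.sum_const, hcard, nsmul_eq_mul]
    refine le_of_eq ?_
    congr 1
    · exact Finset.sum_congr rfl fun e _ => by norm_num
    · field_simp

/-- A set of edges without `K^r` minor is separated by the potential of `minor_or_potential`, which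
varies only along legs. -/
theorem gadget_sep (hσ : ∀ i y, σ i (σ i y) = y) {t : ℕ} (ht : 1 ≤ t)
    (hfree : FreeUpTo σ (2 * t + 1)) {r : ℕ} (hr : 2 ≤ r) (q : ℕ) (hq : 2 ≤ q) :
    (gadget hσ q hq).Sep r
      ((2 ^ r * (2 * (n + 1)) + (n + 1) * (D + 1) / (t : ℝ) ^ 2) / (q + 1)) := by
  classical
  intro F
  change Set (FixedEdge n D ⊕ Leg n D) at F
  let A : GV n D → GV n D → Prop := fun u v => ∃ e : Bool × Fin (n + 1) × Fin D,
    .inl (.inl e) ∈ F ∧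
      ((u = (e.1, e.2.1, e.2.2.castSucc) ∧ v = (e.1, e.2.1, e.2.2.succ)) ∨
        (v = (e.1, e.2.1, e.2.2.castSucc) ∧ u = (e.1, e.2.1, e.2.2.succ)))
  let ℓ : GV n D → Prop := fun u => .inr (if u.1 then (σ u.2.2 u.2.1, u.2.2) else u.2) ∈ F
  let B : SimpleGraph (GV n D) := ((gadNet σ q hq).on F).comap Sum.inl
  have hs : ∀ u v, A u v → A v u := fun u v ⟨e, he, h⟩ => ⟨e, he, h.symm⟩
  have hA : ∀ u v, A u v → u.1 = v.1 ∧ u.2.1 = v.2.1 := by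
    rintro u v ⟨e, he, ⟨rfl, rfl⟩ | ⟨rfl, rfl⟩⟩ <;> simp
  have hl : ∀ u, ℓ u → ℓ (flip σ u) := by
    rintro ⟨_ | _, y, i⟩ h <;> simpa [ℓ, flip, hσ] using h
  have hAB : ∀ u v, A u v → B.Adj u v := by
    rintro u v ⟨e, he, ⟨rfl, rfl⟩ | ⟨rfl, rfl⟩⟩
    · exact ⟨by simp [(Fin.castSucc_lt_succ).ne], _, he, .inl ⟨rfl, rfl⟩⟩
    · exact ⟨by simp [(Fin.castSucc_lt_succ).ne'], _, he, .inr ⟨rfl, rfl⟩⟩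
  have hlB : ∀ u, ℓ u → B.Adj u (flip σ u) := by
    rintro ⟨_ | _, y, i⟩ h
    · exact ⟨by simp [flip], _, h, .inl ⟨rfl, rfl⟩⟩
    · exact ⟨by simp [flip], _, h, .inr ⟨rfl, by simp [gadNet, hσ]⟩⟩
  obtain h | ⟨f, X, hf0, hf1, hfA, hX, hfl⟩ := minor_or_potential hs hA hσ hl ht hfree hAB hlB hr
  · exact .inl h
  right
  refine ⟨Sum.elim f fun b => if b then 0 else 1, rfl, rfl, ?_⟩
  change ∑ e : FixedEdge n D ⊕ Leg n D, _ ≤ _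
  rw [Fintype.sum_sum_type]
  simp only [gadget, gadNet, Sum.elim_inl, Sum.elim_inr]
  have h0 : ∀ e : FixedEdge n D, .inl e ∈ F →
      Sum.elim f (fun b => if b then (0 : ℝ) else 1) (fixedSrc e) =
        Sum.elim f (fun b => if b then (0 : ℝ) else 1) (fixedTgt e) := by
    rintro (e | ⟨_ | _, y⟩ | (_ | _)) he
    · exact hfA _ _ ⟨e, he, .inl ⟨rfl, rfl⟩⟩
    · simp [fixedSrc, fixedTgt, hf0]
    · simp [fixedSrc, fixedTgt, hf1]
    · simp [fixedSrc, fixedTgt, hf0]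
    · simp [fixedSrc, fixedTgt, hf1]
  rw [Finset.sum_eq_zero, zero_add]
  swap
  · intro e _
    split_ifs with he
    · rw [h0 e he]; simp
    · rfl
  have hq0 : (0 : ℝ) < q + 1 := by positivity
  calc _ ≤ ∑ x : Leg n D, ((if x ∈ X then 1 else 0) + 1 / (t : ℝ) ^ 2) / ((q : ℝ) + 1) := by
        refine Finset.sum_le_sum fun x _ => ?_
        split_ifs with hx hxX hxX
        · have := hfl x hx
          rw [if_pos hxX] at this
          exact div_le_div_of_nonneg_right this hq0.le
        · have := hfl x hx
          rw [if_neg hxX] at this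
          exact div_le_div_of_nonneg_right this hq0.le
        · positivity
        · positivity
    _ = (X.card + (n + 1) * (D + 1) / (t : ℝ) ^ 2) / (q + 1) := by
        rw [← Finset.sum_div, Finset.sum_add_distrib]
        congr 2
        · simp
        · simp; ring
    _ ≤ _ := by
        have : (X.card : ℝ) ≤ 2 ^ r * (2 * (n + 1)) := by exact_mod_cast hX
        gcongr

end Gadget

/-- Gadgets with `N` legs of length `q` and a proportion `16⁻ʲ` of hubs. -/
theorem exists_gadget (j : ℕ) : ∃ (N : ℕ) (K : ℝ), 1 ≤ N ∧ ∀ q : ℕ, 2 ≤ q → ∃ Q : Gad,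
    Q.HasFlow (K + (q + 1) / N) ∧
      ∀ r, 2 ≤ r → Q.Sep r ((2 ^ (r + 1) + 1) * (N / 16 ^ j) / (q + 1)) := by
  obtain ⟨D, hD⟩ : ∃ D, D + 1 = 16 ^ j := ⟨16 ^ j - 1, Nat.sub_add_cancel
    (Nat.one_le_pow _ _ (by norm_num))⟩
  obtain ⟨n, σ, hσ, hfree⟩ := exists_involutions (D + 1) (2 * 4 ^ j + 1)
  obtain ⟨K, hK⟩ := gadget_hasFlow hσ
  refine ⟨(n + 1) * (D + 1), K, Nat.mul_pos n.succ_pos D.succ_pos, fun q hq =>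
    ⟨gadget hσ q hq, hK q hq, fun r hr => ?_⟩⟩
  have h := gadget_sep hσ (t := 4 ^ j) (Nat.one_le_pow _ _ (by norm_num)) hfree hr q hq
  have hD' : (D : ℝ) + 1 = 16 ^ j := by exact_mod_cast hD
  have h16 : (((4 ^ j : ℕ) : ℝ)) ^ 2 = 16 ^ j := by
    push_cast; rw [← pow_mul, mul_comm, pow_mul]; norm_num
  convert h using 2
  rw [h16]
  push_cast
  rw [hD']
  field_simp
  ring

/-! ### The sequence of gadgets -/

theorem Gad.HasFlow.mono {Q : Gad} {ε ε' : ℝ} (h : Q.HasFlow ε) (hε : ε ≤ ε') : Q.HasFlow ε' :=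
  let ⟨θ, h1, h2⟩ := h
  ⟨θ, h1, h2.trans hε⟩

/-- Gadgets of increasing quality are placed at sparse levels `k j`, so deep in the tree that the
resistance `K j` of their fixed edges is negligible; the length of the legs is chosen so that the
resistance of the legs is `2 ^ (k j - j)`. All other levels carry the same gadget. -/
theorem exists_gadget_sequence : ∃ (Q : ℕ → Gad) (ε : ℕ → ℝ), (∀ k, (Q k).HasFlow (ε k)) ∧
    (Summable fun k => ε k / 2 ^ k) ∧ ∀ r, 2 ≤ r → ∀ δ : ℝ, 0 < δ → ∀ k₀ : ℕ,
      ∃ k κ, k₀ ≤ k ∧ (Q k).Sep r κ ∧ 2 ^ (k + 1) * κ ≤ δ := by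
  choose N K hN hQ using exists_gadget
  obtain ⟨Q₀, hQ₀, -⟩ := hQ 0 2 le_rfl
  set ε₀ : ℝ := K 0 + ((2 : ℕ) + 1) / N 0
  have hev : ∀ j, ∀ᶠ k in Filter.atTop, j + 1 ≤ k ∧ K j ≤ 2 ^ (k - j) := by
    intro j
    refine (Filter.eventually_ge_atTop (j + 1)).and ?_
    have h := (tendsto_pow_atTop_atTop_of_one_lt (one_lt_two (α := ℝ))).comp
      (Filter.tendsto_sub_atTop_nat j)
    exact h.eventually_ge_atTop (K j)
  obtain ⟨k, hk, hkj⟩ := Filter.extraction_forall_of_eventually hev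
  have hq : ∀ j, 2 ≤ N j * 2 ^ (k j - j) := by
    intro j
    have h1 : 2 ^ 1 ≤ 2 ^ (k j - j) := Nat.pow_le_pow_right two_pos (by have := (hkj j).1; omega)
    nlinarith [hN j]
  choose Q' hflow hsep using fun j => hQ j _ (hq j)
  have hP : ∀ j, (1 : ℝ) ≤ 2 ^ (k j - j) := fun j => one_le_pow₀ one_le_two
  have hNr : ∀ j, (1 : ℝ) ≤ N j := fun j => by exact_mod_cast hN j
  have hflow' : ∀ j, (Q' j).HasFlow (3 * 2 ^ (k j - j)) := by
    intro j
    refine (hflow j).mono ?_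
    have h1 : (((N j * 2 ^ (k j - j) : ℕ) : ℝ) + 1) / N j ≤ 2 * 2 ^ (k j - j) := by
      rw [div_le_iff₀ (by linarith [hNr j])]
      push_cast
      nlinarith [hP j, hNr j, mul_le_mul (hP j) (hNr j) zero_le_one (by positivity)]
    linarith [(hkj j).2]
  have hinj := hk.injective
  refine ⟨Function.extend k Q' fun _ => Q₀,
    Function.extend k (fun j => 3 * 2 ^ (k j - j)) fun _ => ε₀, ?_, ?_, ?_⟩
  · intro m
    by_cases hm : ∃ j, k j = m
    · obtain ⟨j, rfl⟩ := hm
      rw [hinj.extend_apply, hinj.extend_apply]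
      exact hflow' j
    · rw [Function.extend_apply' _ _ _ hm, Function.extend_apply' _ _ _ hm]
      exact hQ₀
  · have h1 : Summable (Function.extend k (fun j : ℕ => 3 * (1 / 2 : ℝ) ^ j) 0) :=
      (summable_extend_zero hinj).2 (summable_geometric_two.mul_left 3)
    have h2 : Summable fun m : ℕ => |ε₀| * (1 / 2 : ℝ) ^ m := summable_geometric_two.mul_left _
    refine Summable.of_norm_bounded (h1.add h2) fun m => ?_
    by_cases hm : ∃ j, k j = m
    · obtain ⟨j, rfl⟩ := hm
      rw [hinj.extend_apply, hinj.extend_apply, Real.norm_of_nonneg (by positivity)]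
      have h3 : (3 * 2 ^ (k j - j) / 2 ^ k j : ℝ) = 3 * (1 / 2) ^ j := by
        have h4 : (2 : ℝ) ^ k j = 2 ^ (k j - j) * 2 ^ j := by
          rw [← pow_add, Nat.sub_add_cancel (by have := (hkj j).1; omega)]
        rw [h4, one_div, inv_pow]
        field_simp
      rw [h3]
      have : 0 ≤ |ε₀| * (1 / 2 : ℝ) ^ k j := by positivity
      linarith
    · rw [Function.extend_apply' _ _ _ hm, Function.extend_apply' _ _ _ hm, norm_div, norm_pow,
        Real.norm_eq_abs, Real.norm_two, one_div, inv_pow, div_eq_mul_inv]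
      simp
  · intro r hr δ hδ k₀
    have hlim : Filter.Tendsto (fun j : ℕ => (2 ^ (r + 1) + 1) * 2 * (1 / 8 : ℝ) ^ j) Filter.atTop
        (nhds 0) := by
      simpa using (tendsto_pow_atTop_nhds_zero_of_lt_one (r := (1 / 8 : ℝ)) (by norm_num)
        (by norm_num)).const_mul ((2 ^ (r + 1) + 1) * 2)
    obtain ⟨j, hj, hj0⟩ := ((hlim.eventually_le_const hδ).and
      (Filter.eventually_ge_atTop k₀)).exists
    refine ⟨k j, _, hj0.trans (by have := (hkj j).1; omega),
      by rw [hinj.extend_apply]; exact hsep j r hr, le_trans ?_ hj⟩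
    have h4 : (2 : ℝ) ^ (k j + 1) = 2 ^ (k j - j) * 2 ^ j * 2 := by
      rw [← pow_add, Nat.sub_add_cancel (by have := (hkj j).1; omega), pow_succ]
    have h16 : (16 : ℝ) ^ j = 2 ^ j * 8 ^ j := by rw [← mul_pow]; norm_num
    have hN0 : (0 : ℝ) < N j := by linarith [hNr j]
    rw [h4, h16, one_div, inv_pow]
    push_cast
    rw [mul_div_assoc', div_le_iff₀ (by positivity)]
    have h5 : (2 : ℝ) ^ (k j - j) * 2 ^ j * 2 * ((2 ^ (r + 1) + 1) * (N j / (2 ^ j * 8 ^ j))) =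
        (2 ^ (r + 1) + 1) * 2 * (8 ^ j)⁻¹ * (N j * 2 ^ (k j - j)) := by
      field_simp
    rw [h5]
    refine mul_le_mul_of_nonneg_left (by linarith) (by positivity)

theorem exists_transient_graph_all_transient_subgraphs_have_complete_minors :
    ∃ (V : Type) (G : SimpleGraph V),
      G.Connected ∧ BoundedDegree G ∧ Transient G ∧
      ∀ (r : ℕ) (H : G.Subgraph), Transient H.coe → HasCompleteMinor H.coe r := by
  obtain ⟨Q, ε, hflow, hε, hsep⟩ := exists_gadget_sequence
  refine ⟨(treeNet Q).SV, (treeNet Q).graph, (treeNet Q).graph_connected (.inl []) (treeNet_conn Q),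
    (treeNet Q).graph_boundedDegree (treeNet_labelled Q), treeNet_transient Q ε hflow hε,
    fun r H hH => ?_⟩
  exact (treeNet_minor Q (Nat.le_add_left 2 r) (hsep (r + 2) (Nat.le_add_left 2 r)) H hH).mono
    (Nat.le_add_right r 2)

end Paper
end

section
/- For every constant C ∈ ℕ and every m ∈ ℝ there is some s = s(m,C) ∈ ℕ such that: for every finite connected graph K with maximum degree at most C and with at most C vertices of degree greater than 2, and any two vertices x, y of K at graph distance at least s, the effective resistance between x and y in K (with unit edge resistances) is at least m. -/
/-!
STATEMENT 4: For every constant C ∈ ℕ and every m ∈ ℝ there is some s = s(m,C) ∈ ℕ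
such that: for every finite connected graph K with maximum degree at most C and with
at most C vertices of degree greater than 2, and any two vertices x, y of K at graph
distance at least s, the effective resistance between x and y in K (unit resistances)
is at least m.
-/

/-!
Let `d` be the distance from `x` and `D = d y`. An edge climbs if it joins level `k` to level
`k + 1`. A vertex of level `k + 1` has at least one edge down, so if its degree is at most 2 it has
at most as many edges up as down; the other vertices number at most `C` and have at most `C` edges
up. Hence the number of climbing edges per level is at most `C` at level 0, and all its later
increases together amount to at most `C * C`: every level has at most `C + C * C` of them (`climb_level_le`).

Pairing a unit flow `θ` with the potential `min d D` shows that the values of `θ` on the climbing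
edges below level `D` sum to `D` (`sum_theta_climb`). There are at most `D * (C + C * C)` such edges,
so Cauchy–Schwarz bounds the sum of `θ ^ 2` from below by `D / (C + C * C)`, which tends to infinity
with `D`. As `effRes` is a real `sInf`, existence of a unit flow is needed too; it is obtained by
sending a unit along a walk (`exists_flow`).
-/

namespace Paper

variable {V : Type*}

/-- The effective resistance between `x` and `y` in the network `(G, r)`:
the infimum of the energies `(1/2)·Σ_{u,v} r(u,v)·θ(u,v)²` over all unit flows
`θ` from `x` to `y`. -/
noncomputable def effRes (G : SimpleGraph V) (r : V → V → ℝ) (x y : V) : ℝ :=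
  sInf {E : ℝ | ∃ θ : V → V → ℝ, IsFlow G θ ∧ divg θ x = 1 ∧ divg θ y = -1 ∧
    (∀ v, v ≠ x → v ≠ y → divg θ v = 0) ∧
    Summable (fun p : V × V => r p.1 p.2 * θ p.1 p.2 ^ 2) ∧
    E = (1 / 2) * ∑' p : V × V, r p.1 p.2 * θ p.1 p.2 ^ 2}

/-! ### Existence of a unit flow -/

open Classical in
/-- A walk carries a unit flow. The divergence is given as a difference of indicators, so that the
statement also makes sense for a closed walk. -/
lemma exists_flow [Fintype V] {G : SimpleGraph V} {x y : V} (p : G.Walk x y) :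
    ∃ θ : V → V → ℝ, IsFlow G θ ∧
      ∀ v, divg θ v = (if v = x then 1 else 0) - (if v = y then 1 else 0) := by
  induction p with
  | nil => exact ⟨fun _ _ => 0, ⟨by simp, by simp⟩, by simp [divg]⟩
  | @cons a b c h p ih =>
    obtain ⟨θ, ⟨h1, h2⟩, h3⟩ := ih
    refine ⟨fun u v => θ u v + ((if u = a then 1 else 0) * (if v = b then 1 else 0)
      - (if u = b then 1 else 0) * (if v = a then 1 else 0)), ⟨?_, ?_⟩, ?_⟩
    · intro u v
      beta_reduce
      rw [h1 u v]
      ring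
    · intro u v huv
      by_cases hθ : θ u v = 0
      · by_cases hab : u = a ∧ v = b
        · rw [hab.1, hab.2]; exact h
        · by_cases hba : u = b ∧ v = a
          · rw [hba.1, hba.2]; exact h.symm
          · exfalso
            apply huv
            simp only [hθ]
            grind
      · exact h2 u v hθ
    · intro v
      have := h3 v
      simp only [divg, tsum_fintype] at this ⊢
      rw [Finset.sum_add_distrib, this, Finset.sum_sub_distrib, ← Finset.mul_sum, ← Finset.mul_sum]
      simp

/-! ### Climbing edges -/

open Classical in
/-- Indicator of the pairs `(u, v)` joined by an edge that climbs one level of `d`. -/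
noncomputable def climb (G : SimpleGraph V) (d : V → ℕ) (u v : V) : ℕ :=
  if G.Adj u v ∧ d v = d u + 1 then 1 else 0

/-- The degree bounds the number of edges up and down at a vertex. -/
lemma climb_add_le [Fintype V] (G : SimpleGraph V) (d : V → ℕ) (v : V) :
    ∑ w, climb G d v w + ∑ w, climb G d w v ≤ (G.neighborSet v).ncard := by
  classical
  rw [← Finset.sum_add_distrib, Set.ncard_eq_toFinset_card', Finset.card_eq_sum_ones,
    ← Finset.sum_filter_add_sum_filter_not Finset.univ (fun w => w ∈ (G.neighborSet v).toFinset)]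
  have h2 : ∑ w with ¬ w ∈ (G.neighborSet v).toFinset, (climb G d v w + climb G d w v) = 0 := by
    apply Finset.sum_eq_zero
    intro w hw
    simp at hw
    simp [climb, hw, G.adj_comm w v]
  rw [h2, add_zero]
  have h3 : Finset.univ.filter (fun w => w ∈ (G.neighborSet v).toFinset)
      = (G.neighborSet v).toFinset := by ext; simp
  rw [h3]
  apply Finset.sum_le_sum
  intro w _
  unfold climb
  split_ifs <;> omega

open Classical in
/-- Each level has at most `C + C * C` climbing edges; the induction keeps track of the number of
vertices of degree greater than 2 met so far. -/
lemma climb_level_le [Fintype V] (G : SimpleGraph V) (d : V → ℕ) (x : V) (C : ℕ)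
    (hx : ∀ v, d v = 0 → v = x)
    (hdown : ∀ v k, d v = k + 1 → ∃ w, G.Adj w v ∧ d w = k)
    (hC : ∀ v, (G.neighborSet v).ncard ≤ C)
    (hbig : {v : V | 2 < (G.neighborSet v).ncard}.ncard ≤ C) (k : ℕ) :
    ∑ u with d u = k, ∑ v, climb G d u v ≤ C + C * C := by
  have key : ∀ k, ∑ u with d u = k, ∑ v, climb G d u v
      ≤ C + C * ∑ u with d u ≤ k, if 2 < (G.neighborSet u).ncard then 1 else 0 := by
    intro k
    induction k with
    | zero =>
      have h1 : ∑ u with d u = 0, ∑ v, climb G d u v ≤ ∑ u ∈ {x}, ∑ v, climb G d u v := by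
        apply Finset.sum_le_sum_of_subset
        intro u hu
        simp at hu
        simp [hx u hu]
      have h2 := climb_add_le G d x
      have h3 := hC x
      rw [Finset.sum_singleton] at h1
      omega
    | succ k ih =>
      have hpt : ∀ v ∈ Finset.univ.filter (fun v => d v = k + 1), ∑ w, climb G d v w
          ≤ ∑ w, climb G d w v + C * (if 2 < (G.neighborSet v).ncard then 1 else 0) := by
        intro v hv
        simp at hv
        have h2 := climb_add_le G d v
        have h3 := hC v
        split_ifs with hh
        · omega
        · obtain ⟨w, hw, hdw⟩ := hdown v k hv
          have h4 : climb G d w v ≤ ∑ w, climb G d w v :=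
            Finset.single_le_sum (f := fun w => climb G d w v) (fun _ _ => Nat.zero_le _)
              (Finset.mem_univ w)
          have h5 : climb G d w v = 1 := by simp [climb, hw, hv, hdw]
          omega
      have hswap : ∑ v with d v = k + 1, ∑ w, climb G d w v
          ≤ ∑ u with d u = k, ∑ v, climb G d u v := by
        rw [Finset.sum_filter, Finset.sum_filter]
        have e1 : ∀ v, (if d v = k + 1 then ∑ w, climb G d w v else 0)
            = ∑ w, if d v = k + 1 then climb G d w v else 0 := by
          intro v; split_ifs <;> simp
        have e2 : ∀ u, (if d u = k then ∑ v, climb G d u v else 0)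
            = ∑ v, if d u = k then climb G d u v else 0 := by
          intro v; split_ifs <;> simp
        simp only [e1, e2]
        rw [Finset.sum_comm]
        apply Finset.sum_le_sum; intro u _
        apply Finset.sum_le_sum; intro v _
        unfold climb
        split_ifs <;> omega
      have hsplit : (∑ u with d u ≤ k + 1, if 2 < (G.neighborSet u).ncard then 1 else 0)
          = (∑ u with d u ≤ k, if 2 < (G.neighborSet u).ncard then 1 else 0)
            + ∑ u with d u = k + 1, if 2 < (G.neighborSet u).ncard then 1 else 0 := by
        rw [← Finset.sum_union]
        · congr 1
          ext u
          simp
          omega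
        · rw [Finset.disjoint_filter]
          intros; omega
      have h1 := Finset.sum_le_sum hpt
      rw [Finset.sum_add_distrib, ← Finset.mul_sum] at h1
      rw [hsplit, mul_add]
      omega
  refine (key k).trans ?_
  gcongr
  refine le_trans ?_ hbig
  rw [Set.ncard_eq_toFinset_card', Finset.card_eq_sum_ones, ← Finset.sum_filter]
  apply Finset.sum_le_sum_of_subset
  intro u
  simp

open Classical in
/-- The number of climbing edges that start below level `D`. -/
lemma climb_total_le [Fintype V] (G : SimpleGraph V) (d : V → ℕ) (B D : ℕ)
    (h : ∀ k, ∑ u with d u = k, ∑ v, climb G d u v ≤ B) :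
    ∑ u with d u < D, ∑ v, climb G d u v ≤ D * B := by
  induction D with
  | zero => simp
  | succ D ih =>
    have hsplit : ∑ u with d u < D + 1, ∑ v, climb G d u v
        = ∑ u with d u < D, ∑ v, climb G d u v + ∑ u with d u = D, ∑ v, climb G d u v := by
      rw [← Finset.sum_union]
      · congr 1
        ext u
        simp
        omega
      · rw [Finset.disjoint_filter]
        intros; omega
    have := h D
    rw [hsplit, add_mul]
    omega

/-! ### Flow across the levels -/

open Classical in
/-- Each of the `d y` cuts between consecutive levels from `x` up to `y` carries one unit, so the
flow over the climbing edges below `y` adds up to `d y`. The proof pairs `θ` with the gradient of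
`min d (d y)`. -/
lemma sum_theta_climb [Fintype V] {G : SimpleGraph V} {d : V → ℕ} {θ : V → V → ℝ} {x y : V}
    (hd : ∀ u v, G.Adj u v → d v ≤ d u + 1) (hdx : d x = 0) (hxy : x ≠ y)
    (hθ : IsFlow G θ) (h1 : divg θ x = 1) (h2 : divg θ y = -1)
    (h3 : ∀ v, v ≠ x → v ≠ y → divg θ v = 0) :
    ∑ u, ∑ v, θ u v * (if d u < d y then (climb G d u v : ℝ) else 0) = d y := by
  set D := d y with hD
  set a : V → V → ℝ := fun u v => if d u < D then (climb G d u v : ℝ) else 0 with ha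
  set f : V → ℝ := fun v => ((min (d v) D : ℕ) : ℝ) with hf
  have hgrad : ∀ u v, θ u v * (f v - f u) = θ u v * a u v - θ u v * a v u := by
    intro u v
    by_cases h0 : θ u v = 0
    · simp [h0]
    have hadj := hθ.2 u v h0
    have i1 := hd u v hadj
    have i2 := hd v u hadj.symm
    rw [← mul_sub]
    congr 1
    simp only [ha, hf, climb, hadj, hadj.symm, true_and]
    rcases lt_trichotomy (d u) (d v) with h | h | h
    · have e : d v = d u + 1 := by omega
      have e' : d u ≠ d u + 1 + 1 := by omega
      by_cases hl : d u < D
      · rw [min_eq_left (by omega : d v ≤ D), min_eq_left hl.le]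
        simp [e, hl, e']
      · rw [min_eq_right (by omega : D ≤ d v), min_eq_right (by omega)]
        simp [e, hl, e']
    · simp [h]
    · have e : d u = d v + 1 := by omega
      have e' : d v ≠ d v + 1 + 1 := by omega
      by_cases hl : d v < D
      · rw [min_eq_left (by omega : d u ≤ D), min_eq_left hl.le]
        simp [e, hl, e']
      · rw [min_eq_right (by omega : D ≤ d u), min_eq_right (by omega)]
        simp [e, hl, e']
  have hanti : ∀ g : V → V → ℝ, ∑ u, ∑ v, θ u v * g v u = -∑ u, ∑ v, θ u v * g u v := by
    intro g
    rw [Finset.sum_comm, ← Finset.sum_neg_distrib]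
    refine Finset.sum_congr rfl fun u _ => ?_
    rw [← Finset.sum_neg_distrib]
    refine Finset.sum_congr rfl fun v _ => ?_
    rw [hθ.1 v u]
    ring
  have hpair : ∑ u, ∑ v, θ u v * f u = -(D : ℝ) := by
    have e : ∀ u, ∑ v, θ u v * f u = divg θ u * f u := by
      intro u
      rw [divg, tsum_fintype, Finset.sum_mul]
    simp only [e]
    rw [Finset.sum_eq_add x y hxy]
    · simp [h1, h2, hf, hdx, ← hD]
    · intro v _ hv
      rw [h3 v hv.1 hv.2, zero_mul]
    · simp
    · simp
  have hsum : ∑ u, ∑ v, θ u v * (f v - f u)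
      = ∑ u, ∑ v, θ u v * a u v - ∑ u, ∑ v, θ u v * a v u := by
    simp only [hgrad, Finset.sum_sub_distrib]
  have hsum' : ∑ u, ∑ v, θ u v * (f v - f u)
      = ∑ u, ∑ v, θ u v * f v - ∑ u, ∑ v, θ u v * f u := by
    simp only [mul_sub, Finset.sum_sub_distrib]
  have t1 := hanti a
  have t2 := hanti (fun u _ => f u)
  linarith

/-- Cauchy–Schwarz on the climbing edges. -/
lemma energy_bound [Fintype V] {G : SimpleGraph V} {d : V → ℕ} {θ : V → V → ℝ} {x y : V} {B : ℕ}
    (hd : ∀ u v, G.Adj u v → d v ≤ d u + 1) (hdx : d x = 0) (hdy : 0 < d y)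
    (hB : ∑ u with d u < d y, ∑ v, climb G d u v ≤ d y * B)
    (hθ : IsFlow G θ) (h1 : divg θ x = 1) (h2 : divg θ y = -1)
    (h3 : ∀ v, v ≠ x → v ≠ y → divg θ v = 0) :
    (d y : ℝ) ≤ (∑ p : V × V, θ p.1 p.2 ^ 2) * B := by
  have hxy : x ≠ y := by rintro rfl; omega
  have hs := sum_theta_climb hd hdx hxy hθ h1 h2 h3
  have hs' : ∑ p : V × V, θ p.1 p.2 * (if d p.1 < d y then (climb G d p.1 p.2 : ℝ) else 0)
      = d y := by
    rw [Fintype.sum_prod_type]; exact hs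
  have hcs := Finset.sum_mul_sq_le_sq_mul_sq Finset.univ (fun p : V × V => θ p.1 p.2)
    (fun p : V × V => if d p.1 < d y then (climb G d p.1 p.2 : ℝ) else 0)
  rw [hs'] at hcs
  have hcount : ∑ p : V × V, (if d p.1 < d y then (climb G d p.1 p.2 : ℝ) else 0) ^ 2
      ≤ d y * B := by
    calc ∑ p : V × V, (if d p.1 < d y then (climb G d p.1 p.2 : ℝ) else 0) ^ 2
        = ((∑ u with d u < d y, ∑ v, climb G d u v : ℕ) : ℝ) := by
          rw [Fintype.sum_prod_type, Finset.sum_filter]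
          push_cast
          refine Finset.sum_congr rfl fun u _ => ?_
          split_ifs
          · refine Finset.sum_congr rfl fun v _ => ?_
            unfold climb
            split_ifs <;> simp
          · simp
      _ ≤ d y * B := by exact_mod_cast hB
  have hE : 0 ≤ ∑ p : V × V, θ p.1 p.2 ^ 2 := Finset.sum_nonneg fun _ _ => sq_nonneg _
  have hD : (0 : ℝ) < d y := by exact_mod_cast hdy
  have := hcs.trans (mul_le_mul_of_nonneg_left hcount hE)
  refine le_of_mul_le_mul_left ?_ hD
  nlinarith

theorem resistance_lower_bound (C : ℕ) (m : ℝ) :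
    ∃ s : ℕ, ∀ (V : Type) [Fintype V] (K : SimpleGraph V),
      K.Connected →
      -- maximum degree at most C
      (∀ v : V, (K.neighborSet v).ncard ≤ C) →
      -- at most C vertices of degree greater than 2
      ({v : V | 2 < (K.neighborSet v).ncard}.ncard ≤ C) →
      ∀ x y : V, s ≤ K.dist x y →
        m ≤ effRes K (fun _ _ => 1) x y := by
  -- The energy halves the sum over ordered pairs, whence the factor 2; the summand 1 makes the
  -- bound on the levels positive and `s` nonzero.
  refine ⟨⌈2 * m * ((C + C * C + 1 : ℕ) : ℝ)⌉₊ + 1, ?_⟩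
  intro V _ K hK hC hbig x y hs
  classical
  set B := C + C * C + 1 with hB
  set d : V → ℕ := fun v => K.dist v x with hd
  have hdy : d y = K.dist x y := SimpleGraph.dist_comm
  have hx : ∀ v, d v = 0 → v = x := fun v hv => hK.dist_eq_zero_iff.1 hv
  have hdx : d x = 0 := by simp [hd]
  have hstep : ∀ u v, K.Adj u v → d v ≤ d u + 1 := by
    intro u v h
    have h1 := hK.dist_triangle (u := v) (v := u) (w := x)
    have h2 : K.dist v u = 1 := SimpleGraph.dist_eq_one_iff_adj.2 h.symm
    simp only [hd]
    omega
  have hdown : ∀ v k, d v = k + 1 → ∃ w, K.Adj w v ∧ d w = k := by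
    intro v k hv
    obtain ⟨p, hp⟩ := hK.exists_walk_length_eq_dist v x
    have hp' : p.length = k + 1 := hp.trans hv
    cases p with
    | nil => simp at hp'
    | @cons _ w _ h q =>
      refine ⟨w, h.symm, ?_⟩
      have h1 : K.dist w x ≤ q.length := SimpleGraph.dist_le q
      have h2 := hstep w v h.symm
      simp only [SimpleGraph.Walk.length_cons] at hp'
      simp only [hd] at h2 hv ⊢
      omega
  have hlev : ∀ k, ∑ u with d u = k, ∑ v, climb K d u v ≤ B := fun k =>
    (climb_level_le K d x C hx hdown hC hbig k).trans (Nat.le_succ _)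
  have htot := climb_total_le K d B (d y) hlev
  have hdpos : 0 < d y := by omega
  have hxy : x ≠ y := by rintro rfl; omega
  apply le_csInf
  · obtain ⟨p⟩ := hK.preconnected x y
    obtain ⟨θ, hθ, hdiv⟩ := exists_flow p
    refine ⟨_, θ, hθ, ?_, ?_, ?_, Summable.of_finite, rfl⟩
    · simp [hdiv, hxy]
    · simp [hdiv, hxy.symm]
    · intro v h1 h2
      simp [hdiv, h1, h2]
  · rintro E ⟨θ, hθ, h1, h2, h3, -, rfl⟩
    have hb := energy_bound hstep hdx hdpos htot hθ h1 h2 h3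
    simp only [one_mul, tsum_fintype]
    have hBpos : (0 : ℝ) < B := by exact_mod_cast Nat.succ_pos _
    have hm : 2 * m * (B : ℝ) ≤ d y := by
      refine (Nat.le_ceil _).trans ?_
      exact_mod_cast (by omega : ⌈2 * m * (B : ℝ)⌉₊ ≤ d y)
    have := le_of_mul_le_mul_right (hm.trans hb) hBpos
    linarith

end Paper
end

section
/- Let G' be the network obtained from the infinite rooted binary tree B with root o by replacing, for each r ≥ 0, every edge of B joining a vertex u at distance r from o to a vertex v at distance r+1 from o by a disjoint copy of the gadget D_{2^r}, identifying the unique level-(2^r) vertex of that copy with u and its unique level-(−2^r) vertex with v. Then for every r ∈ ℕ, every subgraph H of G' admitting a nonzero flow of finite energy from a vertex to infinity has a K^r minor; equivalently, every subgraph of G' with no K^r minor for some r is recurrent. -/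
/-!
The proof combines a bound on the density of minor-free graphs with the Nash-Williams criterion.

A finite graph of average degree at least `2 ^ r` has a `K^r` minor (`exists_branchSets`). So if `H`
has no `K^r` minor, the number of edges of `H` between two consecutive spheres around the root of
`G'` is at most `2 ^ r` times the number of vertices in these spheres. The sphere of radius `t`
consists of one level of each of the gadgets `D_n` above the words of a fixed length, where `n` is a
power of two and there are at most `2 n ≤ t + 2` such gadgets; the resistance of the edges between
two levels is the size of the larger level (`layer_spec`). Hence the edges of `H` between depths `t`
and `t + 1` have total conductance `O(t + 2)`. These cuts are disjoint and, for `t` at least the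
depth of the source, each carries the whole flow (`sum_layer_eq`). As the harmonic series diverges,
the energy would be infinite (`nashWilliams`).
-/

/-!
STATEMENT 5: For the network G' (the infinite binary tree with each depth-r edge
replaced by a copy of the gadget D_{2^r}): for every r ∈ ℕ, every subgraph H of
G' admitting a nonzero flow of finite energy from a vertex to infinity has a K^r
minor.  (Equivalently, every subgraph of G' with no K^r minor is recurrent.)
Subgraphs inherit the edge resistances of G'.

Encoding of G' as in the paper: binary-tree vertices are words `w : List Bool`
(head = last letter, parent = tail); the gadget above a nonempty word `w` is
`D n` with `n = 2 ^ (|w| − 1)`, its vertex `(w, −n, 0)` being `w` itself and its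
level-`n` vertex being the parent's representative; the root is `([], 0, 0)`.
-/

namespace Paper

variable {V : Type*}

/-- The parameter `n = 2 ^ r` of the gadget `D_{2^r}` replacing the tree edge
above the (nonempty) word `w`, where `r = |w| − 1` is the depth of its parent. -/
def gadgetN (w : List Bool) : ℕ := 2 ^ (w.length - 1)

/-- The vertices of the network `G'`. -/
def GPrimeVert : Type :=
  {x : List Bool × ℤ × ℕ //
    (x.1 = [] ∧ x.2.1 = 0 ∧ x.2.2 = 0) ∨
    (x.1 ≠ [] ∧ -(gadgetN x.1 : ℤ) ≤ x.2.1 ∧ x.2.1 < (gadgetN x.1 : ℤ) ∧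
      x.2.2 < 2 ^ (gadgetN x.1 - x.2.1.natAbs))}

/-- Adjacency in `G'`: inside the gadget above `w`, consecutive levels form
complete bipartite graphs; the top level `n − 1` is completely joined to the
representative of the parent `w.tail` (which is the level-`n` vertex). -/
def gPrimeRel (x y : GPrimeVert) : Prop :=
  (x.1.1 ≠ [] ∧ y.1.1 = x.1.1 ∧ y.1.2.1 = x.1.2.1 + 1) ∨
  (x.1.1 ≠ [] ∧ x.1.2.1 = (gadgetN x.1.1 : ℤ) - 1 ∧ y.1.1 = x.1.1.tail ∧
    y.1.2.2 = 0 ∧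
    ((x.1.1.tail = [] ∧ y.1.2.1 = 0) ∨
     (x.1.1.tail ≠ [] ∧ y.1.2.1 = -(gadgetN x.1.1.tail : ℤ))))

/-- The network `G'` as a graph. -/
def gPrimeGraph : SimpleGraph GPrimeVert := SimpleGraph.fromRel gPrimeRel

/-- Edge resistances of `G'`: an edge of the gadget `D n` between levels `i` and
`i + 1` has resistance `2 ^ (n − min (|i|, |i+1|))`; in particular an edge from
level `n − 1` to the level-`n` vertex (the parent, stored with a different first
coordinate) has resistance `2`. -/
noncomputable def gPrimeRes (x y : GPrimeVert) : ℝ :=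
  if y.1.1 = x.1.1 then
    2 ^ (gadgetN x.1.1 - min x.1.2.1.natAbs y.1.2.1.natAbs)
  else 2

/-! ### Dense graphs have complete minors -/

open Classical in
/-- The number of ordered pairs of adjacent vertices of `W`, i.e. twice the number of edges of the
subgraph of `G` induced by `W`. -/
noncomputable def arcs {V : Type*} (G : SimpleGraph V) (W : Finset V) : ℕ :=
  ∑ u ∈ W, (W.filter (fun v => G.Adj u v)).card

open Classical in
theorem arcs_insert {V : Type*} (G : SimpleGraph V) (Y : Finset V) (v : V) (hv : v ∉ Y) :
    arcs G (insert v Y) = arcs G Y + 2 * (Y.filter (fun u => G.Adj v u)).card := by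
  unfold arcs
  rw [Finset.sum_insert hv, Finset.filter_insert, if_neg (G.loopless.irrefl v)]
  have h : ∀ u ∈ Y, ((insert v Y).filter (fun w => G.Adj u w)).card
      = (Y.filter (fun w => G.Adj u w)).card + if G.Adj v u then 1 else 0 := by
    intro u hu
    rw [Finset.filter_insert]
    by_cases h : G.Adj u v
    · rw [if_pos h, if_pos h.symm, Finset.card_insert_of_notMem]
      simp [hv]
    · rw [if_neg h, if_neg (fun h' => h h'.symm)]; simp
  rw [Finset.sum_congr rfl h, Finset.sum_add_distrib, ← Finset.card_filter]
  ring

open Classical in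
/-- Mader's theorem: average degree at least `2 ^ k` forces a `K^k` minor. For the step from `k` to
`k + 1`, take a maximal connected `U ⊆ W` whose contraction leaves at least `2 ^ k` edges per vertex.
By maximality, contracting a further `v ∈ N(U)` loses more than `2 ^ k` edges, so `v` has at least
`2 ^ k` neighbours in `N(U)`. Then `N(U)` contains the branch sets of a `K^k` minor by induction,
and `U` is adjacent to all of them. -/
theorem exists_branchSets {V : Type*} (G : SimpleGraph V) (k : ℕ) : ∀ W : Finset V, W.Nonempty →
    2 ^ k * W.card ≤ arcs G W →
    ∃ B : Fin k → Set V, (∀ i, B i ⊆ W) ∧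
      (∀ i, (B i).Nonempty) ∧
      (∀ i j, i ≠ j → Disjoint (B i) (B j)) ∧
      (∀ i, (G.induce (B i)).Connected) ∧
      (∀ i j, i ≠ j → ∃ u ∈ B i, ∃ v ∈ B j, G.Adj u v) := by
  induction k with
  | zero =>
    intro W _ _
    exact ⟨fun i => i.elim0, fun i => i.elim0, fun i => i.elim0, fun i => i.elim0,
      fun i => i.elim0, fun i => i.elim0⟩
  | succ k ihk =>
    intro W
    induction W using Finset.strongInduction with
    | H W ihW =>
    intro hne hdense
    let N : Finset V → Finset V := fun U => (W \ U).filter (fun v => ∃ u ∈ U, G.Adj u v)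
    -- Contracting `U` leaves `#(W \ U) + 1` vertices and `arcs G (W \ U) / 2 + #(N U)` edges.
    let F : Finset (Finset V) := W.powerset.filter (fun U => U.Nonempty ∧
      (G.induce (U : Set V)).Connected ∧
      2 ^ (k + 1) * ((W \ U).card + 1) ≤ arcs G (W \ U) + 2 * (N U).card)
    have hF : F.Nonempty := by
      obtain ⟨x, hx⟩ := hne
      refine ⟨{x}, ?_⟩
      simp only [F, Finset.mem_filter, Finset.mem_powerset, Finset.singleton_subset_iff]
      refine ⟨hx, Finset.singleton_nonempty x, ?_, ?_⟩
      · rw [Finset.coe_singleton]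
        exact { preconnected := SimpleGraph.Preconnected.of_subsingleton, nonempty := ⟨⟨x, rfl⟩⟩ }
      · have hN : N {x} = (W.erase x).filter (fun v => G.Adj x v) := by
          simp [N, Finset.sdiff_singleton_eq_erase]
        rw [hN, Finset.sdiff_singleton_eq_erase, ← arcs_insert G _ x (Finset.notMem_erase x W),
          Finset.insert_erase hx, Finset.card_erase_add_one hx]
        exact hdense
    obtain ⟨U, hUF, hmax⟩ := Finset.exists_max_image F Finset.card hF
    simp only [F, Finset.mem_filter, Finset.mem_powerset] at hUF
    obtain ⟨hUW, hUne, hUconn, hU⟩ := hUF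
    by_cases hNU : (N U).Nonempty
    · have hdeg : ∀ v ∈ N U, 2 ^ k ≤ ((N U).filter (fun u => G.Adj v u)).card := by
        intro v hv
        have hv' := hv
        simp only [N, Finset.mem_filter, Finset.mem_sdiff] at hv'
        obtain ⟨⟨hvW, hvU⟩, u, huU, huv⟩ := hv'
        have hnot : insert v U ∉ F := by
          intro h
          have := hmax _ h
          rw [Finset.card_insert_of_notMem hvU] at this
          omega
        have hconn : (G.induce ((insert v U : Finset V) : Set V)).Connected := by
          rw [Finset.coe_insert, Set.insert_eq]
          refine SimpleGraph.connected_induce_union SimpleGraph.Preconnected.of_subsingleton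
            hUconn.preconnected (Set.mem_singleton v) (Finset.mem_coe.2 huU) huv.symm
        have hlt : arcs G (W \ insert v U) + 2 * (N (insert v U)).card
            < 2 ^ (k + 1) * ((W \ insert v U).card + 1) := by
          by_contra hcon
          apply hnot
          simp only [F, Finset.mem_filter, Finset.mem_powerset]
          exact ⟨Finset.insert_subset hvW hUW, Finset.insert_nonempty v U, hconn, not_lt.mp hcon⟩
        set Y := W \ insert v U with hY
        have hvY : v ∉ Y := by simp [hY]
        have hX : W \ U = insert v Y := by
          ext z
          simp only [hY, Finset.mem_sdiff, Finset.mem_insert, not_or]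
          by_cases hz : z = v
          · subst hz; simp [hvW, hvU]
          · simp [hz]
        have hN' : N (insert v U) = (N U).erase v ∪ Y.filter (fun u => G.Adj v u) := by
          ext z
          simp only [N, hY, Finset.mem_sdiff, Finset.mem_insert, not_or, Finset.mem_filter,
            Finset.mem_union, Finset.mem_erase]
          constructor
          · rintro ⟨⟨h1, h2, h3⟩, w, rfl | hw, h4⟩
            · exact Or.inr ⟨⟨h1, h2, h3⟩, h4⟩
            · exact Or.inl ⟨h2, ⟨h1, h3⟩, w, hw, h4⟩
          · rintro (⟨h2, ⟨h1, h3⟩, w, hw, h4⟩ | ⟨h, h4⟩)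
            · exact ⟨⟨h1, h2, h3⟩, w, Or.inr hw, h4⟩
            · exact ⟨h, v, Or.inl rfl, h4⟩
        have hcard := Finset.card_union_add_card_inter ((N U).erase v)
          (Y.filter (fun u => G.Adj v u))
        rw [← hN'] at hcard
        have herase := Finset.card_erase_add_one hv
        have hsub : ((N U).erase v ∩ Y.filter (fun u => G.Adj v u)).card
            ≤ ((N U).filter (fun u => G.Adj v u)).card := by
          apply Finset.card_le_card
          intro z hz
          simp only [Finset.mem_inter, Finset.mem_erase, Finset.mem_filter] at hz ⊢
          exact ⟨hz.1.2, hz.2.2⟩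
        rw [hX, arcs_insert G Y v hvY, Finset.card_insert_of_notMem hvY] at hU
        rw [pow_succ] at hU hlt
        generalize 2 ^ k = q at *
        have e1 : q * 2 * (Y.card + 1 + 1) = q * 2 * (Y.card + 1) + q * 2 := by ring
        rw [e1] at hU
        generalize q * 2 * (Y.card + 1) = p at *
        omega
      have hN : 2 ^ k * (N U).card ≤ arcs G (N U) := by
        unfold arcs
        have := Finset.card_nsmul_le_sum (N U) _ _ hdeg
        rwa [smul_eq_mul, mul_comm] at this
      obtain ⟨B, hBs, hBne, hBd, hBc, hBa⟩ := ihk (N U) hNU hN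
      have hadj : ∀ i, ∃ u ∈ (U : Set V), ∃ v ∈ B i, G.Adj u v := by
        intro i
        obtain ⟨z, hz⟩ := hBne i
        have := hBs i hz
        simp only [N, Finset.coe_filter, Set.mem_ofPred_eq] at this
        obtain ⟨_, u, hu, huz⟩ := this
        exact ⟨u, hu, z, hz, huz⟩
      have hdisj : ∀ i, Disjoint (U : Set V) (B i) := by
        intro i
        rw [Set.disjoint_left]
        intro z hz hz'
        have := hBs i hz'
        simp only [N, Finset.coe_filter, Set.mem_ofPred_eq, Finset.mem_sdiff] at this
        exact this.1.2 hz
      refine ⟨Fin.cons (U : Set V) B, ?_, ?_, ?_, ?_, ?_⟩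
      · refine Fin.cases ?_ fun i => ?_
        · exact_mod_cast hUW
        · intro z hz
          have := hBs i hz
          simp only [N, Finset.coe_filter, Set.mem_ofPred_eq, Finset.mem_sdiff] at this
          exact this.1.1
      · exact Fin.cases hUne hBne
      · refine Fin.cases (Fin.cases (fun h => absurd rfl h) fun j _ => hdisj j) fun i =>
          Fin.cases (fun _ => (hdisj i).symm) fun j hij => hBd i j fun h => hij (by rw [h])
      · exact Fin.cases hUconn hBc
      · refine Fin.cases (Fin.cases (fun h => absurd rfl h) fun j _ => hadj j) fun i =>
          Fin.cases (fun _ => ?_) fun j hij => hBa i j fun h => hij (by rw [h])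
        obtain ⟨u, hu, v, hv, h⟩ := hadj i
        exact ⟨v, hv, u, hu, h.symm⟩
    · -- No edge leaves `U` inside `W`, so `W \ U` is still dense enough.
      rw [Finset.not_nonempty_iff_eq_empty] at hNU
      rw [hNU, Finset.card_empty] at hU
      have hne' : (W \ U).Nonempty := by
        rw [Finset.nonempty_iff_ne_empty]
        intro h
        rw [h] at hU
        simp [arcs] at hU
      have hss : W \ U ⊂ W := Finset.sdiff_ssubset hUW hUne
      obtain ⟨B, hBs, hB⟩ := ihW _ hss hne' (by nlinarith)
      refine ⟨B, fun i => (hBs i).trans ?_, hB⟩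
      exact_mod_cast hss.subset

/-! ### The Nash-Williams criterion -/

/-- Flow conservation: the flow from the sphere of radius `t` to the next one is the outflow at the
source, for any `t` at least the depth of the source. -/
theorem sum_layer_eq (G : SimpleGraph V) (d : V → ℕ) (A : ℕ → Finset V)
    (hA : ∀ t x, x ∈ A t ↔ d x = t)
    (hd : ∀ x y, G.Adj x y → d y = d x + 1 ∨ d x = d y + 1)
    (θ : V → V → ℝ) (hθ : IsFlow G θ) (o : V) (hdiv : ∀ v, v ≠ o → divg θ v = 0)
    (t : ℕ) (ht : d o ≤ t) :
    ∑ p ∈ A t ×ˢ A (t + 1), θ p.1 p.2 = divg θ o := by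
  classical
  let S : Finset V := (Finset.range (t + 1)).biUnion A
  have hS : ∀ x, x ∈ S ↔ d x ≤ t := by
    intro x
    simp only [S, Finset.mem_biUnion, Finset.mem_range, hA]
    exact ⟨fun ⟨a, h1, h2⟩ => by omega, fun h => ⟨d x, by omega, rfl⟩⟩
  have hdisj : Disjoint S (A (t + 1)) := by
    rw [Finset.disjoint_left]
    intro x hx hx'
    rw [hS] at hx; rw [hA] at hx'; omega
  have hsplit : ∀ v ∈ S, divg θ v = ∑ w ∈ S, θ v w + ∑ w ∈ A (t + 1), θ v w := by
    intro v hv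
    rw [← Finset.sum_union hdisj]
    refine tsum_eq_sum fun w hw => ?_
    by_contra hne
    have h1 : d w = d v + 1 ∨ d v = d w + 1 := hd _ _ (hθ.2 _ _ hne)
    rw [hS] at hv
    rw [Finset.mem_union, hS, hA] at hw
    omega
  have hanti : ∑ v ∈ S, ∑ w ∈ S, θ v w = 0 := by
    have h : ∑ v ∈ S, ∑ w ∈ S, θ v w = -∑ v ∈ S, ∑ w ∈ S, θ v w := by
      conv_lhs => rw [Finset.sum_comm]
      rw [← Finset.sum_neg_distrib]
      refine Finset.sum_congr rfl fun v _ => ?_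
      rw [← Finset.sum_neg_distrib]
      exact Finset.sum_congr rfl fun w _ => hθ.1 w v
    linarith
  have htot : ∑ v ∈ S, divg θ v = divg θ o :=
    Finset.sum_eq_single_of_mem o ((hS o).2 ht) fun v _ hv => hdiv v hv
  rw [Finset.sum_congr rfl hsplit, Finset.sum_add_distrib, hanti, zero_add] at htot
  rw [← htot, Finset.sum_product]
  refine Finset.sum_subset (fun x hx => ?_) fun x hx hx' => ?_
  · rw [hS]; rw [hA] at hx; omega
  · refine Finset.sum_eq_zero fun w hw => ?_
    by_contra hne
    have h1 : d w = d x + 1 ∨ d x = d w + 1 := hd _ _ (hθ.2 _ _ hne)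
    rw [hS] at hx; rw [hA] at hx' hw
    omega

open Classical in
/-- A form of the Nash-Williams criterion. The cut between the spheres `A t` and `A (t + 1)` has
constant resistance `R t` and total conductance at most `K * (t + 2)`. By Cauchy-Schwarz a flow of
strength `c` spends energy at least `c ^ 2 / (K * (t + 2))` on it, which is not summable. -/
theorem nashWilliams (G : SimpleGraph V) (d : V → ℕ) (A : ℕ → Finset V)
    (hA : ∀ t x, x ∈ A t ↔ d x = t)
    (hd : ∀ x y, G.Adj x y → d y = d x + 1 ∨ d x = d y + 1)
    (res : V → V → ℝ) (hres : ∀ x y, 0 ≤ res x y)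
    (R : ℕ → ℝ)
    (hresR : ∀ x y, G.Adj x y → d y = d x + 1 → res x y = R (d x))
    (K : ℝ) (hK : 0 < K)
    (hE : ∀ t : ℕ, (((A t ×ˢ A (t + 1)).filter (fun p => G.Adj p.1 p.2)).card : ℝ)
      ≤ K * (t + 2) * R t)
    (θ : V → V → ℝ) (hθ : IsFlow G θ) (o : V) (hdiv : ∀ v, v ≠ o → divg θ v = 0)
    (hsum : Summable (fun p : V × V => res p.1 p.2 * θ p.1 p.2 ^ 2)) :
    divg θ o = 0 := by
  by_contra hc
  set c := divg θ o with hcdef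
  set f : V × V → ℝ := fun p => res p.1 p.2 * θ p.1 p.2 ^ 2 with hf
  have hf0 : ∀ p, 0 ≤ f p := fun p => mul_nonneg (hres _ _) (sq_nonneg _)
  set ε : ℕ → ℝ := fun t => ∑ p ∈ A t ×ˢ A (t + 1), f p with hε
  have hεsum : Summable ε := by
    refine summable_of_sum_range_le (c := ∑' p, f p)
      (fun t => Finset.sum_nonneg fun p _ => hf0 p) fun n => ?_
    simp only [hε]
    rw [← Finset.sum_biUnion]
    · exact hsum.sum_le_tsum _ fun p _ => hf0 p
    · intro s _ t _ hst
      simp only [Function.onFun]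
      rw [Finset.disjoint_left]
      intro p hp hp'
      rw [Finset.mem_product, hA] at hp hp'
      exact hst (hp.1.symm.trans hp'.1)
  have hlow : ∀ t, d o ≤ t → c ^ 2 / K * (1 / ((t : ℝ) + 2)) ≤ ε t := by
    intro t ht
    set E := (A t ×ˢ A (t + 1)).filter (fun p => G.Adj p.1 p.2) with hEdef
    have h1 : ∑ p ∈ E, θ p.1 p.2 = c := by
      rw [hcdef, ← sum_layer_eq G d A hA hd θ hθ o hdiv t ht]
      refine Finset.sum_filter_of_ne fun p _ hp => hθ.2 _ _ hp
    have h2 : c ^ 2 ≤ E.card * ∑ p ∈ E, θ p.1 p.2 ^ 2 := by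
      rw [← h1]; exact sq_sum_le_card_mul_sum_sq
    have h3 : R t * ∑ p ∈ E, θ p.1 p.2 ^ 2 ≤ ε t := by
      rw [Finset.mul_sum]
      calc ∑ p ∈ E, R t * θ p.1 p.2 ^ 2 = ∑ p ∈ E, f p := by
            refine Finset.sum_congr rfl fun p hp => ?_
            rw [hEdef, Finset.mem_filter, Finset.mem_product, hA, hA] at hp
            obtain ⟨⟨hp1, hp2⟩, hp3⟩ := hp
            simp only [hf]
            rw [hresR _ _ hp3 (by omega), hp1]
        _ ≤ ε t := Finset.sum_le_sum_of_subset_of_nonneg (Finset.filter_subset _ _)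
            fun p _ _ => hf0 p
    have h4 : c ^ 2 ≤ K * (t + 2) * ε t := by
      calc c ^ 2 ≤ E.card * ∑ p ∈ E, θ p.1 p.2 ^ 2 := h2
        _ ≤ (K * (t + 2) * R t) * ∑ p ∈ E, θ p.1 p.2 ^ 2 :=
          mul_le_mul_of_nonneg_right (hE t) (Finset.sum_nonneg fun p _ => sq_nonneg _)
        _ = K * (t + 2) * (R t * ∑ p ∈ E, θ p.1 p.2 ^ 2) := by ring
        _ ≤ K * (t + 2) * ε t := mul_le_mul_of_nonneg_left h3 (by positivity)
    rw [div_mul_div_comm, mul_one, div_le_iff₀ (by positivity)]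
    linarith
  have h5 : Summable fun n : ℕ => c ^ 2 / K * (1 / (((n + d o : ℕ) : ℝ) + 2)) :=
    Summable.of_nonneg_of_le (fun n => by positivity) (fun n => hlow (n + d o) (by omega))
      ((summable_nat_add_iff (d o)).2 hεsum)
  rw [summable_mul_left_iff (by positivity)] at h5
  have h6 : Summable fun n : ℕ => 1 / ((n + (d o + 2) : ℕ) : ℝ) := by
    refine h5.congr fun n => ?_
    push_cast; ring
  exact Real.not_summable_one_div_natCast
    ((summable_nat_add_iff (f := fun n : ℕ => 1 / (n : ℝ)) (d o + 2)).1 h6)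

/-! ### Spheres around the root of the network -/

/-- The distance of a vertex of `G'` from the root: level `i` of the gadget `D_n` above a word lies
`n - i` below its top vertex, whose distance from the root is `2 + 4 + ⋯ + n = 2 * n - 2`. -/
noncomputable def depth (x : GPrimeVert) : ℕ :=
  if x.1.1 = [] then 0 else (3 * (gadgetN x.1.1 : ℤ) - 2 - x.1.2.1).toNat

theorem gadgetN_pos (w : List Bool) : 0 < gadgetN w := by unfold gadgetN; positivity

theorem depth_nil {x : GPrimeVert} (h : x.1.1 = []) : depth x = 0 := by simp [depth, h]

theorem depth_cons {x : GPrimeVert} (h : x.1.1 ≠ []) :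
    (depth x : ℤ) = 3 * (gadgetN x.1.1 : ℤ) - 2 - x.1.2.1 := by
  have h1 := gadgetN_pos x.1.1
  rcases x.2 with h2 | h2
  · exact absurd h2.1 h
  · rw [depth, if_neg h, Int.toNat_of_nonneg]
    omega

theorem gadgetN_tail {w : List Bool} (h : w.tail ≠ []) : gadgetN w = 2 * gadgetN w.tail := by
  unfold gadgetN
  rcases w with _ | ⟨a, _ | ⟨b, w⟩⟩
  · simp at h
  · simp at h
  · simp [pow_succ, mul_comm]

/-- `gPrimeRel` is oriented towards the root. -/
theorem depth_of_rel {x y : GPrimeVert} (h : gPrimeRel y x) : depth y = depth x + 1 := by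
  rcases h with ⟨h1, h2, h3⟩ | ⟨h1, h2, h3, -, ⟨h4, h5⟩ | ⟨h4, h5⟩⟩
  · have hy := depth_cons h1
    have hx := depth_cons (x := x) (h2 ▸ h1)
    rw [h2] at hx
    omega
  · have hy := depth_cons h1
    rw [depth_nil (h3.trans h4)]
    have : gadgetN y.1.1 = 1 := by
      rcases hw : y.1.1 with _ | ⟨a, w⟩
      · exact absurd hw h1
      · rw [hw] at h4
        simp only [List.tail_cons] at h4
        simp [gadgetN, h4]
    omega
  · have hy := depth_cons h1
    have hx := depth_cons (x := x) (h3 ▸ h4)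
    rw [h3] at hx
    have := gadgetN_tail h4
    omega

theorem depth_adj {x y : GPrimeVert} (h : gPrimeGraph.Adj x y) :
    depth y = depth x + 1 ∨ depth x = depth y + 1 := by
  rw [gPrimeGraph, SimpleGraph.fromRel_adj] at h
  rcases h.2 with h | h
  · exact Or.inr (depth_of_rel h)
  · exact Or.inl (depth_of_rel h)

theorem layer_card (S : Set GPrimeVert) (l M : ℕ) (j : ℤ)
    (hS : ∀ x ∈ S, x.1.1.length = l ∧ x.1.2.1 = j ∧ x.1.2.2 < M) :
    S.Finite ∧ S.ncard ≤ 2 ^ l * M := by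
  let φ : List.Vector Bool l × Fin M → List Bool × ℤ × ℕ := fun p => (p.1.1, j, p.2.1)
  have hsub : Subtype.val '' S ⊆ Set.range φ := by
    rintro _ ⟨x, hx, rfl⟩
    obtain ⟨h1, h2, h3⟩ := hS x hx
    exact ⟨(⟨x.1.1, h1⟩, ⟨x.1.2.2, h3⟩), by simp [φ, ← h2]⟩
  have hinj : Set.InjOn Subtype.val S := Subtype.val_injective.injOn
  have hfin := (Set.finite_range φ).subset hsub
  refine ⟨Set.Finite.of_finite_image hfin hinj, ?_⟩
  calc S.ncard = (Subtype.val '' S).ncard := hinj.ncard_image.symm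
    _ ≤ (Set.range φ).ncard := Set.ncard_le_ncard hsub (Set.finite_range φ)
    _ ≤ Nat.card (List.Vector Bool l × Fin M) := by
        rw [← Set.image_univ, ← Set.ncard_univ]
        exact Set.ncard_image_le Set.finite_univ
    _ = 2 ^ l * M := by simp

/-- The vertices at distance `s` from the root, where `2 n - 1 ≤ s ≤ 4 n - 2` and `n = 2 ^ k`, lie
at level `3 n - 2 - s` of the gadgets above the words of length `k + 1`. -/
theorem layer_position (k s : ℕ) (h1 : 2 * 2 ^ k ≤ s + 1) (h2 : s + 2 ≤ 4 * 2 ^ k)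
    (x : GPrimeVert) (hx : depth x = s) :
    x.1.1 ≠ [] ∧ x.1.1.length = k + 1 ∧ gadgetN x.1.1 = 2 ^ k ∧
      x.1.2.1 = 3 * 2 ^ k - 2 - (s : ℤ) ∧
      x.1.2.2 < 2 ^ (2 ^ k - (3 * 2 ^ k - 2 - (s : ℤ)).natAbs) := by
  have hk : 0 < 2 ^ k := by positivity
  have hne : x.1.1 ≠ [] := by
    intro h
    rw [depth_nil h] at hx
    omega
  have hd := depth_cons hne
  rcases x.2 with h3 | ⟨-, h3, h4, h5⟩
  · exact absurd h3.1 hne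
  have hlen : x.1.1.length = k + 1 := by
    have hpos := List.length_pos_iff.2 hne
    obtain ⟨m, hm⟩ : ∃ m, x.1.1.length = m + 1 := ⟨_, (Nat.succ_pred_eq_of_pos hpos).symm⟩
    have hg : gadgetN x.1.1 = 2 ^ m := by simp [gadgetN, hm]
    rw [hg] at hd h3 h4
    have ha : 2 ^ m < 2 ^ (k + 1) := by rw [pow_succ]; omega
    have hb : 2 ^ k < 2 ^ (m + 1) := by rw [pow_succ]; omega
    rw [Nat.pow_lt_pow_iff_right (by norm_num)] at ha hb
    omega
  have hg : gadgetN x.1.1 = 2 ^ k := by simp [gadgetN, hlen]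
  rw [hg] at hd h5
  have hlev : x.1.2.1 = 3 * 2 ^ k - 2 - (s : ℤ) := by
    push_cast at hd; omega
  rw [hlev] at h5
  exact ⟨hne, hlen, hg, hlev, h5⟩

/-- All edges between depths `t` and `t + 1` have the same resistance `R`, and both spheres have at
most `(t + 2) * R` vertices. -/
theorem layer_spec (t : ℕ) : ∃ R : ℕ,
    (∀ x y, gPrimeGraph.Adj x y → depth x = t → depth y = t + 1 → gPrimeRes x y = R) ∧
    {x | depth x = t}.Finite ∧ {x | depth x = t}.ncard ≤ (t + 2) * R ∧
    {x | depth x = t + 1}.ncard ≤ (t + 2) * R := by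
  obtain ⟨k, hk1, hk2⟩ : ∃ k, 2 ^ (k + 1) ≤ t + 2 ∧ t + 2 < 2 ^ (k + 2) := by
    have hlog : 1 ≤ Nat.log 2 (t + 2) := Nat.log_pos (by norm_num) (by omega)
    refine ⟨Nat.log 2 (t + 2) - 1, ?_, ?_⟩
    · rw [Nat.sub_add_cancel hlog]; exact Nat.pow_log_le_self 2 (by omega)
    · rw [show Nat.log 2 (t + 2) - 1 + 2 = Nat.log 2 (t + 2) + 1 by omega]
      exact Nat.lt_pow_succ_log_self (by norm_num) _
  have hk1' : 2 * 2 ^ k ≤ t + 1 + 1 := by rw [pow_succ] at hk1; omega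
  have hk2' : t + 1 + 2 ≤ 4 * 2 ^ k := by rw [pow_add] at hk2; omega
  have hkpos : 0 < 2 ^ k := by positivity
  have hpos := layer_position k (t + 1) hk1' hk2'
  set i : ℤ := 3 * 2 ^ k - 2 - ((t + 1 : ℕ) : ℤ) with hi
  have hicast : i = 3 * ((2 ^ k : ℕ) : ℤ) - 3 - t := by rw [hi]; push_cast; ring
  have hmono : ∀ a b : ℕ, a ≤ b → (2 : ℕ) ^ (2 ^ k - b) ≤ 2 ^ (2 ^ k - a) :=
    fun a b h => Nat.pow_le_pow_right (by norm_num) (by omega)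
  -- The edges in question join levels `i` and `i + 1` of the gadgets `D_n` with `n = 2 ^ k`.
  refine ⟨2 ^ (2 ^ k - min i.natAbs (i + 1).natAbs), ?_, ?_⟩
  · intro x y hadj hx hy
    obtain ⟨-, -, hg, hlev, -⟩ := hpos y hy
    rw [gPrimeGraph, SimpleGraph.fromRel_adj] at hadj
    rcases hadj.2 with h | h
    · have := depth_of_rel h
      omega
    · rcases h with ⟨h1, h2, h3⟩ | ⟨h1, h2, h3, -⟩
      · rw [gPrimeRes, if_pos h2.symm, h2, hg, h3, hlev, min_comm]
        push_cast; rfl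
      · have hne : y.1.1 ≠ x.1.1 := by
          rw [h3]
          intro h
          have := congrArg List.length h
          have hp := List.length_pos_iff.2 h1
          rw [List.length_tail] at this
          omega
        rw [gPrimeRes, if_neg hne]
        rw [hg] at h2
        have : 2 ^ k - min i.natAbs (i + 1).natAbs = 1 := by omega
        rw [this]; norm_num
  · have hnext := layer_card {x | depth x = t + 1} (k + 1) _ i
      fun x hx => ⟨(hpos x hx).2.1, (hpos x hx).2.2.2.1, (hpos x hx).2.2.2.2⟩
    have hnext' : {x | depth x = t + 1}.ncard ≤
        (t + 2) * 2 ^ (2 ^ k - min i.natAbs (i + 1).natAbs) :=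
      hnext.2.trans (Nat.mul_le_mul hk1 (hmono _ _ (min_le_left _ _)))
    suffices h : {x | depth x = t}.Finite ∧ {x | depth x = t}.ncard ≤
        (t + 2) * 2 ^ (2 ^ k - min i.natAbs (i + 1).natAbs) from ⟨h.1, h.2, hnext'⟩
    by_cases ht : 2 * 2 ^ k = t + 2
    · -- Depth `t` consists of the tree vertices given by the words of length `k`
      -- (the root alone if `k = 0`).
      have hcur := layer_card {x | depth x = t} k 1 (if k = 0 then 0 else - 2 ^ (k - 1)) ?_
      · refine ⟨hcur.1, hcur.2.trans ?_⟩
        refine Nat.mul_le_mul (by omega) Nat.one_le_two_pow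
      · intro x hx
        rcases k with _ | k
        · have : x.1.1 = [] := by
            by_contra hne
            have h1 := depth_cons hne
            have h2 : depth x = t := hx
            rcases x.2 with h3 | h3
            · exact hne h3.1
            · have := gadgetN_pos x.1.1
              omega
          rcases x.2 with h3 | h3
          · simp [h3.1, h3.2.1, h3.2.2]
          · exact absurd this h3.1
        · obtain ⟨-, h2, -, h4, h5⟩ := layer_position k t (by omega) (by omega) x hx
          have hl : 3 * 2 ^ k - 2 - (t : ℤ) = - 2 ^ k := by
            have : (4 * 2 ^ k : ℤ) = t + 2 := by
              rw [pow_succ] at ht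
              exact_mod_cast (by omega : 4 * 2 ^ k = t + 2)
            linarith
          rw [hl] at h4 h5
          refine ⟨h2, by simpa using h4, ?_⟩
          simpa [Int.natAbs_pow] using h5
    · have hcur := layer_card {x | depth x = t} (k + 1) (2 ^ (2 ^ k - (i + 1).natAbs)) (i + 1) ?_
      · exact ⟨hcur.1, hcur.2.trans (Nat.mul_le_mul hk1 (hmono _ _ (min_le_right _ _)))⟩
      · intro x hx
        obtain ⟨-, h2, -, h4, h5⟩ := layer_position k t (by omega) (by omega) x hx
        have hl : 3 * 2 ^ k - 2 - (t : ℤ) = i + 1 := by rw [hi]; push_cast; ring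
        rw [hl] at h4 h5
        exact ⟨h2, h4, h5⟩

/-! ### Conclusion -/

theorem gPrime_subgraph_transient_implies_complete_minor
    (r : ℕ) (H : gPrimeGraph.Subgraph)
    (htrans : ∃ (o : H.verts) (c : ℝ) (θ : H.verts → H.verts → ℝ),
      c ≠ 0 ∧ IsFlow H.coe θ ∧ divg θ o = c ∧
      (∀ v, v ≠ o → divg θ v = 0) ∧
      Summable (fun p : H.verts × H.verts =>
        gPrimeRes p.1.1 p.2.1 * θ p.1 p.2 ^ 2)) :
    HasCompleteMinor H.coe r := by
  classical
  by_contra hno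
  obtain ⟨o, c, θ, hc, hθ, ho, hdiv, hsum⟩ := htrans
  choose R hRres hfin hcard hcard' using layer_spec
  let d : H.verts → ℕ := fun x => depth x.1
  have hfin' : ∀ t, {x : H.verts | d x = t}.Finite := fun t =>
    (hfin t).preimage Subtype.val_injective.injOn
  let A : ℕ → Finset H.verts := fun t => (hfin' t).toFinset
  have hA : ∀ t x, x ∈ A t ↔ d x = t := fun t x => (hfin' t).mem_toFinset
  have hAcard : ∀ t, (A t).card ≤ {x | depth x = t}.ncard := by
    intro t
    rw [← Set.ncard_coe_finset, ← Set.ncard_image_of_injective _ Subtype.val_injective]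
    refine Set.ncard_le_ncard ?_ (hfin t)
    rintro _ ⟨x, hx, rfl⟩
    exact (hA t x).1 hx
  have hadj : ∀ x y : H.verts, H.coe.Adj x y → gPrimeGraph.Adj x.1 y.1 := fun x y h => H.adj_sub h
  refine hc (ho ▸ nashWilliams H.coe d A hA (fun x y h => depth_adj (hadj x y h))
    (fun x y => gPrimeRes x.1 y.1) (fun x y => ?_) (fun t => (R t : ℝ))
    (fun x y h hxy => hRres _ _ _ (hadj x y h) rfl hxy) (2 ^ (r + 1)) (by positivity) (fun t => ?_)
    θ hθ o hdiv hsum)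
  · unfold gPrimeRes
    split_ifs <;> positivity
  · set W := A t ∪ A (t + 1) with hW
    have hWcard : W.card ≤ 2 * ((t + 2) * R t) := by
      have h1 := (hAcard t).trans (hcard t)
      have h2 := (hAcard (t + 1)).trans (hcard' t)
      have h3 : W.card ≤ _ := Finset.card_union_le (A t) (A (t + 1))
      omega
    have harcs : arcs H.coe W ≤ 2 ^ r * W.card := by
      by_contra hlt
      rcases W.eq_empty_or_nonempty with hW0 | hWne
      · simp [hW0, arcs] at hlt
      · obtain ⟨B, -, hB⟩ := exists_branchSets H.coe r W hWne (not_le.1 hlt).le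
        exact hno ⟨B, hB⟩
    have hE : ((A t ×ˢ A (t + 1)).filter (fun p => H.coe.Adj p.1 p.2)).card ≤ arcs H.coe W := by
      calc _ ≤ ((W ×ˢ W).filter (fun p => H.coe.Adj p.1 p.2)).card :=
            Finset.card_le_card (Finset.filter_subset_filter _ (Finset.product_subset_product
              Finset.subset_union_left Finset.subset_union_right))
        _ = arcs H.coe W := by
            simp only [arcs, Finset.card_filter, Finset.sum_product]
            congr!
    have hnat : ((A t ×ˢ A (t + 1)).filter (fun p => H.coe.Adj p.1 p.2)).card
        ≤ 2 ^ (r + 1) * (t + 2) * R t := by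
      calc _ ≤ 2 ^ r * (2 * ((t + 2) * R t)) :=
            hE.trans (harcs.trans (Nat.mul_le_mul_left _ hWcard))
        _ = 2 ^ (r + 1) * (t + 2) * R t := by ring
    exact_mod_cast hnat

end Paper
end
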